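/- arXiv:1407.6838 — 3 statements merged into one kernel-verified Lean document; each statement's English description precedes it below -/
import Mathlib

section
/- Let V = ℂⁿ with d ≥ 3 and let f ∈ ℂ[x₁,…,x_n] be homogeneous of degree d with nonvanishing discriminant (equivalently, with an isolated critical point at 0). Then for any g ∈ GLₙ(ℂ), the associated form satisfies A(g·f) = (det g)² · (g·A(f)), where (g·f)(x) = f(x·g^{-t}) and (g·F)(y) = F(y·g). -/
open MvPolynomial Matrix

noncomputable def hess {n : ℕ} (f : MvPolynomial (Fin n) ℂ) : MvPolynomial (Fin n) ℂ :=
  (Matrix.of fun i j : Fin n => pderiv i (pderiv j f)).det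

noncomputable def jacDet {n : ℕ} (f : Fin n → MvPolynomial (Fin n) ℂ) : MvPolynomial (Fin n) ℂ :=
  (Matrix.of fun i j : Fin n => pderiv j (f i)).det

/-- The Jacobian ideal of `f`, generated by its first-order partial derivatives. -/
noncomputable def jacIdeal {n : ℕ} (f : MvPolynomial (Fin n) ℂ) : Ideal (MvPolynomial (Fin n) ℂ) :=
  Ideal.span (Set.range fun i => pderiv i f)

/-- `Af` is the associated form of a nondegenerate form `f` of degree `d` in `n` variables:
it is homogeneous of degree `n*(d-2)` and satisfies the defining identity
`(y₁x̄₁ + ⋯ + yₙx̄ₙ)^(n(d-2)) = Af(y) ⬝ hess(f)‾` in the Milnor algebra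
`M(f) = ℂ[x]/(f_{x₁},…,f_{xₙ})`, for every `y ∈ ℂⁿ`. -/
def IsAssociatedForm (n d : ℕ) (f Af : MvPolynomial (Fin n) ℂ) : Prop :=
  Af.IsHomogeneous (n * (d - 2)) ∧ ∀ y : Fin n → ℂ,
    Ideal.Quotient.mk (jacIdeal f) ((∑ i, C (y i) * X i) ^ (n * (d - 2)))
      = Ideal.Quotient.mk (jacIdeal f) (C (eval y Af) * hess f)

/-- `Af` is the associated form of the `n`-tuple `f` of forms of degree `d-1`:
it is homogeneous of degree `n*(d-2)` and satisfies
`(y₁x̄₁ + ⋯ + yₙx̄ₙ)^(n(d-2)) = Af(y) ⬝ jac(f)‾` in `M(f) = ℂ[x]/(f₁,…,fₙ)`. -/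
def IsAssociatedFormT (n d : ℕ) (f : Fin n → MvPolynomial (Fin n) ℂ)
    (Af : MvPolynomial (Fin n) ℂ) : Prop :=
  Af.IsHomogeneous (n * (d - 2)) ∧ ∀ y : Fin n → ℂ,
    Ideal.Quotient.mk (Ideal.span (Set.range f)) ((∑ i, C (y i) * X i) ^ (n * (d - 2)))
      = Ideal.Quotient.mk (Ideal.span (Set.range f)) (C (eval y Af) * jacDet f)

/-- Substitution of a linear change of variables: `(substM M f)(x) = f(M ⬝ x)`. -/
noncomputable def substM {n : ℕ} (M : Matrix (Fin n) (Fin n) ℂ) (f : MvPolynomial (Fin n) ℂ) :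
    MvPolynomial (Fin n) ℂ :=
  aeval (fun i => ∑ j, C (M i j) * X j) f

/-- In an affine family of vectors, spanning at one parameter implies spanning at all but finitely
many parameters. -/
theorem finite_setOf_span_add_smul_ne_top {K V ι : Type*} [Field K] [AddCommGroup V] [Module K V]
    [FiniteDimensional K V] (a b : ι → V) (t₀ : K)
    (h : Submodule.span K (Set.range fun i => a i + t₀ • b i) = ⊤) :
    {t : K | Submodule.span K (Set.range fun i => a i + t • b i) ≠ ⊤}.Finite := by
  classical
  obtain ⟨κ, s, -, hs, hli⟩ := exists_linearIndependent' K (fun i => a i + t₀ • b i)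
  let B : Module.Basis κ K V := .mk hli (by rw [hs, h])
  have : Fintype κ := FiniteDimensional.fintypeBasisIndex B
  let P : Polynomial K := (Matrix.of fun r c => Polynomial.C (B.repr (a (s c)) r) +
    Polynomial.X * Polynomial.C (B.repr (b (s c)) r)).det
  have hP (t : K) : P.eval t = B.det fun c => a (s c) + t • b (s c) := by
    rw [Module.Basis.det_apply, ← Polynomial.coe_evalRingHom, RingHom.map_det]
    congr 1
    ext r c
    simp [Module.Basis.toMatrix_apply, mul_comm t]
  have hP₀ : P ≠ 0 := by
    intro h₀
    have h₁ : (fun c => a (s c) + t₀ • b (s c)) = B := by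
      ext c
      simp [B]
    have := hP t₀
    rw [h₁, B.det_self, h₀] at this
    simp at this
  refine (P.roots.toFinset.finite_toSet).subset fun t ht => ?_
  simp only [Multiset.mem_toFinset, Finset.mem_coe, Polynomial.mem_roots hP₀, Polynomial.IsRoot]
  by_contra hne
  refine ht (top_unique ?_)
  rw [hP t] at hne
  rw [← (B.is_basis_iff_det.2 (isUnit_iff_ne_zero.2 hne)).2]
  exact Submodule.span_mono (by rintro _ ⟨c, rfl⟩; exact ⟨s c, rfl⟩)

/-- Relative version: affine families of vectors in a finite-dimensional subspace. -/
theorem finite_setOf_not_le_span_add_smul {K V ι : Type*} [Field K] [AddCommGroup V] [Module K V]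
    (W : Submodule K V) [FiniteDimensional K W] (a b : ι → V) (ha : ∀ i, a i ∈ W)
    (hb : ∀ i, b i ∈ W) (t₀ : K)
    (h : W ≤ Submodule.span K (Set.range fun i => a i + t₀ • b i)) :
    {t : K | ¬ W ≤ Submodule.span K (Set.range fun i => a i + t • b i)}.Finite := by
  have key (t : K) : W ≤ Submodule.span K (Set.range fun i => a i + t • b i) ↔
      Submodule.span K (Set.range fun i => (⟨a i, ha i⟩ : W) + t • (⟨b i, hb i⟩ : W)) = ⊤ := by
    have hinj : Function.Injective (Submodule.map W.subtype) :=
      Submodule.map_injective_of_injective W.subtype_injective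
    rw [← hinj.eq_iff, Submodule.map_span, ← Set.range_comp, Submodule.map_subtype_top]
    refine ⟨fun h => le_antisymm (Submodule.span_le.2 ?_) h, fun h => h.ge⟩
    rintro _ ⟨i, rfl⟩
    exact W.add_mem (ha i) (W.smul_mem _ (hb i))
  simp_rw [key] at h ⊢
  exact finite_setOf_span_add_smul_ne_top _ _ t₀ h

theorem Set.ncard_setOf_degree_le_le (n D : ℕ) :
    {b : Fin n →₀ ℕ | b.degree ≤ D}.ncard ≤ (D + 1) ^ n := by
  have h := Set.ncard_le_ncard_of_injOn (s := {b : Fin n →₀ ℕ | b.degree ≤ D})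
    (t := ((Fintype.piFinset fun _ : Fin n => Finset.range (D + 1) : Finset (Fin n → ℕ)) :
      Set (Fin n → ℕ))) (fun b => ⇑b)
    (fun b hb => by
      simp only [Finset.mem_coe, Fintype.mem_piFinset, Finset.mem_range]
      exact fun i => Nat.lt_succ_of_le ((Finsupp.le_degree i b).trans hb))
    DFunLike.coe_injective.injOn (Finset.finite_toSet _)
  rwa [Set.ncard_coe_finset, Fintype.card_piFinset_const, Finset.card_range] at h

/-- Division with remainder: the exponents of degree at most `D`, together with a remainder modulo
`e` in each coordinate, embed into the exponents of degree at most `e * D + n * (e - 1)`. -/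
theorem pow_mul_ncard_setOf_degree_le_le (n D : ℕ) {e : ℕ} (he : 0 < e) :
    e ^ n * {b : Fin n →₀ ℕ | b.degree ≤ D}.ncard ≤
      {b : Fin n →₀ ℕ | b.degree ≤ e * D + n * (e - 1)}.ncard := by
  have h := Set.ncard_le_ncard_of_injOn
    (s := (Set.univ : Set (Fin n → Fin e)) ×ˢ {b : Fin n →₀ ℕ | b.degree ≤ D})
    (t := {b : Fin n →₀ ℕ | b.degree ≤ e * D + n * (e - 1)})
    (fun p => Finsupp.equivFunOnFinite.symm fun i => e * p.2 i + p.1 i)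
    (fun p hp => by
      have h₁ : ∑ i, p.2 i ≤ D := by simpa [Finsupp.degree_eq_sum] using hp.2
      have h₂ : ∑ i, (p.1 i : ℕ) ≤ n * (e - 1) := by
        simpa using Finset.sum_le_card_nsmul Finset.univ (fun i => (p.1 i : ℕ)) (e - 1)
          fun i _ => Nat.le_sub_one_of_lt (p.1 i).2
      simpa [Finsupp.degree_eq_sum, Finset.sum_add_distrib, ← Finset.mul_sum] using
        Nat.add_le_add (Nat.mul_le_mul_left e h₁) h₂)
    (fun p _ q _ hpq => by
      have h₀ (i : Fin n) : e * p.2 i + p.1 i = e * q.2 i + q.1 i :=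
        congrFun (Finsupp.equivFunOnFinite.symm.injective hpq) i
      have h₁ (i : Fin n) : (p.1 i : ℕ) = q.1 i := by
        simpa [Nat.mul_add_mod, Nat.mod_eq_of_lt] using congrArg (· % e) (h₀ i)
      refine Prod.ext (funext fun i => Fin.ext (h₁ i)) (Finsupp.ext fun i => ?_)
      have := h₀ i
      rw [h₁ i] at this
      exact Nat.eq_of_mul_eq_mul_left he (by omega))
    (Finsupp.finite_of_degree_le _)
  rwa [Set.ncard_prod, Set.ncard_univ, Nat.card_fun, Nat.card_eq_fintype_card,
    Nat.card_eq_fintype_card, Fintype.card_fin, Fintype.card_fin] at h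

/-- The number of exponents of degree at most `D` does not grow exponentially in `D`. -/
theorem exists_mul_ncard_setOf_degree_le_lt (n N : ℕ) {q : ℕ} (hq : 0 < q) :
    ∃ D, (q - 1) * {b : Fin n →₀ ℕ | b.degree ≤ D + N}.ncard <
      q * {b : Fin n →₀ ℕ | b.degree ≤ D}.ncard := by
  by_contra! h
  set s : ℕ → ℕ := fun D => {b : Fin n →₀ ℕ | b.degree ≤ D}.ncard with hs
  have hs₀ : 1 ≤ s 0 := by
    refine Nat.one_le_iff_ne_zero.2 (Set.ncard_ne_zero_of_mem (a := 0) (by simp) ?_)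
    exact Finsupp.finite_of_degree_le 0
  have hgrow (j : ℕ) : q ^ j ≤ (q - 1) ^ j * s (j * N) := by
    induction j with
    | zero => simpa using hs₀
    | succ j ih =>
      calc q ^ (j + 1) = q * q ^ j := by ring
        _ ≤ q * ((q - 1) ^ j * s (j * N)) := Nat.mul_le_mul_left _ ih
        _ = (q - 1) ^ j * (q * s (j * N)) := by ring
        _ ≤ (q - 1) ^ j * ((q - 1) * s (j * N + N)) := Nat.mul_le_mul_left _ (h _)
        _ = (q - 1) ^ (j + 1) * s ((j + 1) * N) := by ring_nf
  have hq₁ : 1 < q := by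
    by_contra hq₁
    have := hgrow 1
    simp [show q = 1 by omega] at this
  have hbound (j : ℕ) : (q : ℝ) ^ j ≤ ((q : ℝ) - 1) ^ j * (j * N + 1) ^ n := by
    have := (hgrow j).trans (Nat.mul_le_mul_left _ (Set.ncard_setOf_degree_le_le n (j * N)))
    have h' : ((q ^ j : ℕ) : ℝ) ≤ (((q - 1) ^ j * (j * N + 1) ^ n : ℕ) : ℝ) := by
      exact_mod_cast this
    simpa [Nat.cast_sub hq₁.le] using h'
  have hq₂ : (0 : ℝ) < (q : ℝ) - 1 := by
    have : (1 : ℝ) < q := by exact_mod_cast hq₁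
    linarith
  have hr : 1 < (q : ℝ) / (q - 1) := by
    rw [one_lt_div hq₂]; linarith
  have hlim := (tendsto_pow_const_div_const_pow_of_one_lt n hr).const_mul (((N : ℝ) + 1) ^ n)
  rw [mul_zero] at hlim
  obtain ⟨j, hj, hj₁⟩ := ((hlim.eventually (gt_mem_nhds one_pos)).and
    (Filter.eventually_ge_atTop 1)).exists
  rw [← mul_div_assoc, div_lt_one (by positivity), div_pow, lt_div_iff₀ (by positivity),
    ← mul_pow, mul_comm] at hj
  have hle : ((j : ℝ) * N + 1) ^ n ≤ (((N : ℝ) + 1) * j) ^ n := by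
    have : (1 : ℝ) ≤ j := by exact_mod_cast hj₁
    gcongr
    linarith
  have := mul_le_mul_of_nonneg_left hle (pow_nonneg hq₂.le j)
  linarith [hbound j]

/-- The exponents whose entries are all smaller than `e`, except `(e - 1, …, e - 1)`. -/
def nonTopExponents (n e : ℕ) : Set (Fin n →₀ ℕ) :=
  {a | (∀ i, a i < e) ∧ a.degree ≠ n * (e - 1)}

theorem finite_nonTopExponents (n e : ℕ) : (nonTopExponents n e).Finite :=
  (Finsupp.finite_of_degree_le (n * e)).subset fun a ha => by
    simpa [Finsupp.degree_eq_sum] using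
      Finset.sum_le_card_nsmul Finset.univ a e fun i _ => (ha.1 i).le

theorem ncard_nonTopExponents_le (n : ℕ) {e : ℕ} (he : 0 < e) :
    (nonTopExponents n e).ncard ≤ e ^ n - 1 := by
  classical
  have h := Set.ncard_le_ncard_of_injOn (s := nonTopExponents n e)
    (t := (((Fintype.piFinset fun _ : Fin n => Finset.range e).erase fun _ => e - 1 :
      Finset (Fin n → ℕ)) : Set (Fin n → ℕ))) (fun b => ⇑b)
    (fun a ha => by
      simp only [Finset.mem_coe, Finset.mem_erase, Fintype.mem_piFinset, Finset.mem_range]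
      refine ⟨fun h => ha.2 ?_, ha.1⟩
      simp [Finsupp.degree_eq_sum, h])
    DFunLike.coe_injective.injOn (Finset.finite_toSet _)
  rwa [Set.ncard_coe_finset, Finset.card_erase_of_mem
    (by simpa [Fintype.mem_piFinset] using fun _ => he),
    Fintype.card_piFinset_const, Finset.card_range] at h

/-- The span of the monomials with exponent in `nonTopExponents n e` and of the monomial multiples
of the forms `F i` of degree `e`, in degree `k`. -/
noncomputable def nonTopSpan {n : ℕ} {K : Type*} [Field K] (e k : ℕ)
    (F : Fin n → MvPolynomial (Fin n) K) : Submodule K (MvPolynomial (Fin n) K) :=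
  Submodule.span K (Set.range (Sum.elim
    (fun a : {a : Fin n →₀ ℕ // a ∈ nonTopExponents n e ∧ a.degree = k} => monomial a.1 (1 : K))
    (fun p : {p : (Fin n →₀ ℕ) × Fin n // p.1.degree + e = k} => monomial p.1.1 1 * F p.1.2)))

theorem monomial_mem_nonTopSpan {n : ℕ} {K : Type*} [Field K] {e k : ℕ}
    (F : Fin n → MvPolynomial (Fin n) K) {a : Fin n →₀ ℕ} (ha : a ∈ nonTopExponents n e)
    (hk : a.degree = k) : monomial a (1 : K) ∈ nonTopSpan e k F :=
  Submodule.subset_span ⟨Sum.inl ⟨a, ha, hk⟩, rfl⟩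

theorem monomial_mul_mem_nonTopSpan {n : ℕ} {K : Type*} [Field K] {e k : ℕ}
    (F : Fin n → MvPolynomial (Fin n) K) (c : Fin n →₀ ℕ) (i : Fin n)
    (hk : c.degree + e = k) : monomial c (1 : K) * F i ∈ nonTopSpan e k F :=
  Submodule.subset_span ⟨Sum.inr ⟨(c, i), hk⟩, rfl⟩

theorem homogeneousSubmodule_le_of_forall_monomial_mem {n : ℕ} {K : Type*} [Field K] {k : ℕ}
    {W : Submodule K (MvPolynomial (Fin n) K)}
    (h : ∀ m : Fin n →₀ ℕ, m.degree = k → monomial m (1 : K) ∈ W) :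
    homogeneousSubmodule (Fin n) K k ≤ W := by
  intro p hp
  rw [p.as_sum]
  refine W.sum_mem fun m hm => ?_
  have : monomial m (coeff m p) = coeff m p • monomial m (1 : K) := by simp [smul_monomial]
  rw [this]
  refine W.smul_mem _ (h m ?_)
  by_contra hne
  exact mem_support_iff.1 hm (IsHomogeneous.coeff_eq_zero hp hne)

/-- For the powers of the variables, all monomials but the one with exponent `(e - 1, …, e - 1)`
are covered. -/
theorem homogeneousSubmodule_le_nonTopSpan_X_pow {n : ℕ} {K : Type*} [Field K] {e k : ℕ}
    (hk : k < n * (e - 1)) :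
    homogeneousSubmodule (Fin n) K k ≤ nonTopSpan e k fun i => X i ^ e := by
  refine homogeneousSubmodule_le_of_forall_monomial_mem fun m hm => ?_
  by_cases h : ∀ i, m i < e
  · exact monomial_mem_nonTopSpan _ ⟨h, by omega⟩ hm
  · push Not at h
    obtain ⟨i, hi⟩ := h
    have hle : Finsupp.single i e ≤ m := by simpa using hi
    have hdeg : (m - Finsupp.single i e).degree + e = k := by
      have := congrArg Finsupp.degree (tsub_add_cancel_of_le hle)
      rwa [map_add, Finsupp.degree_single, hm] at this
    have := monomial_mul_mem_nonTopSpan (K := K) (fun i => X i ^ e) _ i hdeg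
    rwa [X_pow_eq_monomial, monomial_mul, one_mul, tsub_add_cancel_of_le hle] at this

/-- A form in the ideal generated by forms of degree `e` is a linear combination of monomial
multiples of these forms of the right degree. -/
theorem homogeneousSubmodule_inf_span_le_nonTopSpan {n : ℕ} {K : Type*} [Field K] {e k : ℕ}
    {f : Fin n → MvPolynomial (Fin n) K} (hf : ∀ i, (f i).IsHomogeneous e)
    {p : MvPolynomial (Fin n) K} (hp : p.IsHomogeneous k) (hpf : p ∈ Ideal.span (Set.range f)) :
    p ∈ nonTopSpan e k f := by
  obtain ⟨g, rfl⟩ := Ideal.mem_span_range_iff_exists_fun.1 hpf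
  rw [← homogeneousComponent_eq_self hp, map_sum]
  refine Submodule.sum_mem _ fun i _ => ?_
  induction g i using MvPolynomial.induction_on' with
  | add p q hp hq => rw [add_mul, map_add]; exact Submodule.add_mem _ hp hq
  | monomial c r =>
    have hr : monomial c r * f i = r • (monomial c 1 * f i) := by
      rw [← smul_mul_assoc, smul_monomial, smul_eq_mul, mul_one]
    rw [hr, map_smul]
    refine Submodule.smul_mem _ _ ?_
    rw [homogeneousComponent_of_mem ((isHomogeneous_monomial 1 rfl).mul (hf i))]
    split_ifs with h
    · exact monomial_mul_mem_nonTopSpan f c i h.symm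
    · exact Submodule.zero_mem _

/-- If forms `f i` of degree `e` generate all forms of degree `n * (e - 1)`, then a generic member
of the pencil joining `f` to `X i ^ e` has too small a quotient. -/
theorem exists_homogeneousSubmodule_le_nonTopSpan {n : ℕ} {K : Type*} [Field K] [Infinite K] {e : ℕ}
    {f : Fin n → MvPolynomial (Fin n) K} (hf : ∀ i, (f i).IsHomogeneous e)
    (hN : ∀ p : MvPolynomial (Fin n) K, p.IsHomogeneous (n * (e - 1)) →
      p ∈ Ideal.span (Set.range f)) :
    ∃ F : Fin n → MvPolynomial (Fin n) K, ∀ k ≤ n * (e - 1),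
      homogeneousSubmodule (Fin n) K k ≤ nonTopSpan e k F := by
  have hpencil (k : ℕ) (hk : k ≤ n * (e - 1)) :
      {t : K | ¬ homogeneousSubmodule (Fin n) K k ≤
        nonTopSpan e k fun i => X i ^ e + t • (f i - X i ^ e)}.Finite := by
    have : FiniteDimensional K (homogeneousSubmodule (Fin n) K k) :=
      Module.Finite.iff_fg.2 (homogeneousSubmodule_fg (Fin n) K k)
    let a : {a : Fin n →₀ ℕ // a ∈ nonTopExponents n e ∧ a.degree = k} ⊕
        {p : (Fin n →₀ ℕ) × Fin n // p.1.degree + e = k} → MvPolynomial (Fin n) K :=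
      Sum.elim (fun a => monomial a.1 1) fun p => monomial p.1.1 1 * X p.1.2 ^ e
    let b : {a : Fin n →₀ ℕ // a ∈ nonTopExponents n e ∧ a.degree = k} ⊕
        {p : (Fin n →₀ ℕ) × Fin n // p.1.degree + e = k} → MvPolynomial (Fin n) K :=
      Sum.elim 0 fun p => monomial p.1.1 1 * (f p.1.2 - X p.1.2 ^ e)
    have hab (t : K) : Submodule.span K (Set.range fun i => a i + t • b i) =
        nonTopSpan e k fun i => X i ^ e + t • (f i - X i ^ e) := by
      rw [nonTopSpan]
      congr 2
      funext i
      rcases i with i | i <;> simp [a, b, mul_add]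
    have ha (i) : a i ∈ homogeneousSubmodule (Fin n) K k := by
      rcases i with i | i
      · exact isHomogeneous_monomial 1 i.2.2
      · have := (isHomogeneous_monomial (1 : K) (rfl : i.1.1.degree = _)).mul
          (isHomogeneous_X_pow i.1.2 e)
        rwa [i.2] at this
    have hb (i) : b i ∈ homogeneousSubmodule (Fin n) K k := by
      rcases i with i | i
      · exact isHomogeneous_zero _ _ _
      · have := (isHomogeneous_monomial (1 : K) (rfl : i.1.1.degree = _)).mul
          ((hf i.1.2).sub (isHomogeneous_X_pow i.1.2 e))
        rwa [i.2] at this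
    simp_rw [← hab]
    rcases hk.lt_or_eq with hk | hk
    · refine finite_setOf_not_le_span_add_smul _ a b ha hb 0 ?_
      rw [hab]
      simpa using homogeneousSubmodule_le_nonTopSpan_X_pow hk
    · refine finite_setOf_not_le_span_add_smul _ a b ha hb 1 ?_
      rw [hab]
      intro p hp
      simpa using homogeneousSubmodule_inf_span_le_nonTopSpan hf hp (hN p (hk ▸ hp))
  obtain ⟨t, ht⟩ := ((Set.finite_Iic (n * (e - 1))).biUnion hpencil).infinite_compl.nonempty
  simp only [Set.mem_compl_iff, Set.mem_iUnion, Set.mem_ofPred_eq, not_exists, not_not] at ht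
  exact ⟨_, ht⟩

theorem monomial_mem_of_forall_nonTopSpan {n : ℕ} {K : Type*} [Field K] {e : ℕ}
    {F : Fin n → MvPolynomial (Fin n) K}
    (hF : ∀ k ≤ n * (e - 1), homogeneousSubmodule (Fin n) K k ≤ nonTopSpan e k F)
    {W : Submodule K (MvPolynomial (Fin n) K)} {m : Fin n →₀ ℕ}
    (ha : ∀ a ∈ nonTopExponents n e, monomial a 1 ∈ W)
    (hc : ∀ (c : Fin n →₀ ℕ) (i : Fin n), c.degree + e ≤ m.degree → monomial c 1 * F i ∈ W) :
    monomial m 1 ∈ W := by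
  rcases le_total m.degree (n * (e - 1)) with hm | hm
  · suffices nonTopSpan e m.degree F ≤ W from this (hF _ hm (isHomogeneous_monomial 1 rfl))
    refine Submodule.span_le.2 ?_
    rintro _ ⟨a | p, rfl⟩
    · exact ha a.1 a.2.1
    · exact hc _ _ p.2.le
  · obtain ⟨g, hg, hgN⟩ := m.exists_le_degree_eq _ hm
    suffices nonTopSpan e (n * (e - 1)) F ≤
        W.comap (LinearMap.mulLeft K (monomial (m - g) (1 : K))) by
      have h := this (hF _ le_rfl (isHomogeneous_monomial 1 hgN))
      rwa [Submodule.mem_comap, LinearMap.mulLeft_apply, monomial_mul, one_mul,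
        tsub_add_cancel_of_le hg] at h
    refine Submodule.span_le.2 ?_
    rintro _ ⟨a | p, rfl⟩
    · exact absurd a.2.2 a.2.1.2
    · change monomial (m - g) 1 * (monomial p.1.1 1 * F p.1.2) ∈ W
      rw [← mul_assoc, monomial_mul, one_mul]
      refine hc _ _ ?_
      have h := congrArg Finsupp.degree (tsub_add_cancel_of_le hg)
      have hp := p.2
      rw [map_add] at h ⊢
      omega

theorem ncard_le_of_monomial_mem_span {σ K : Type*} [Field K] {s : Set (σ →₀ ℕ)}
    {w : Set (MvPolynomial σ K)} (hw : w.Finite)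
    (h : ∀ m ∈ s, monomial m (1 : K) ∈ Submodule.span K w) : s.ncard ≤ w.ncard := by
  have := hw.fintype
  have hli : LinearIndependent K fun m : s => (monomial m.1 (1 : K) : MvPolynomial σ K) := by
    simpa [Function.comp_def] using
      (basisMonomials σ K).linearIndependent.comp _ (Subtype.val_injective (p := (· ∈ s)))
  have hle := linearIndependent_le_span' _ hli w (by rintro _ ⟨m, rfl⟩; exact h m.1 m.2)
  have hc := Cardinal.toNat_le_toNat hle (Cardinal.natCast_lt_aleph0 (n := _))
  rwa [Cardinal.toNat_natCast, ← Nat.card_eq_fintype_card] at hc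

/-- Forms of degree `e` in `n` variables, `n` in number, never generate all forms of degree
`n * (e - 1)`. -/
theorem exists_isHomogeneous_notMem_span {n : ℕ} {K : Type*} [Field K] [Infinite K] {e : ℕ}
    (he : 0 < e) {f : Fin n → MvPolynomial (Fin n) K} (hf : ∀ i, (f i).IsHomogeneous e) :
    ∃ p : MvPolynomial (Fin n) K, p.IsHomogeneous (n * (e - 1)) ∧
      p ∉ Ideal.span (Set.range f) := by
  by_contra! hN
  obtain ⟨F, hF⟩ := exists_homogeneousSubmodule_le_nonTopSpan hf hN
  let v : (Fin n →₀ ℕ) × (Fin n →₀ ℕ) → MvPolynomial (Fin n) K :=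
    fun p => monomial p.1 1 * ∏ i, F i ^ p.2 i
  let S (D : ℕ) : Set ((Fin n →₀ ℕ) × (Fin n →₀ ℕ)) :=
    nonTopExponents n e ×ˢ {b | b.degree ≤ D}
  let T (D : ℕ) := Submodule.span K (v '' S D)
  have hmulF (D : ℕ) (i : Fin n) {p : MvPolynomial (Fin n) K} (hp : p ∈ T D) :
      p * F i ∈ T (D + 1) := by
    suffices T D ≤ (T (D + 1)).comap (LinearMap.mulRight K (F i)) from this hp
    refine Submodule.span_le.2 ?_
    rintro _ ⟨⟨a, b⟩, ⟨ha, hb⟩, rfl⟩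
    refine Submodule.subset_span ⟨(a, b + Finsupp.single i 1), ⟨ha, ?_⟩, ?_⟩
    · simpa using hb
    · simp only [v, LinearMap.mulRight_apply, Finsupp.add_apply, pow_add, Finset.prod_mul_distrib,
        mul_assoc]
      congr 2
      simp [Finsupp.single_apply, Finset.prod_ite_eq]
  have hbase (D : ℕ) {a : Fin n →₀ ℕ} (ha : a ∈ nonTopExponents n e) : monomial a (1 : K) ∈ T D :=
    Submodule.subset_span ⟨(a, 0), ⟨ha, by simp⟩, by simp [v]⟩
  have hmem (D : ℕ) (m : Fin n →₀ ℕ) (hm : m.degree < e * (D + 1)) :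
      monomial m (1 : K) ∈ T D := by
    induction D generalizing m with
    | zero =>
      refine monomial_mem_of_forall_nonTopSpan hF (fun a ha => ?_) fun c i hc => by omega
      exact hbase 0 ha
    | succ D ih =>
      refine monomial_mem_of_forall_nonTopSpan hF (fun a ha => hbase _ ha) fun c i hc => ?_
      exact hmulF D i (ih c (by rw [mul_add] at hm; omega))
  obtain ⟨D, hD⟩ := exists_mul_ncard_setOf_degree_le_lt n (n * (e - 1)) (pow_pos he n)
  refine hD.not_ge ((pow_mul_ncard_setOf_degree_le_le n D he).trans ?_)
  have hS : (S (D + n * (e - 1))).Finite :=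
    (finite_nonTopExponents n e).prod (Finsupp.finite_of_degree_le _)
  have hcard := ncard_le_of_monomial_mem_span
    (s := {b : Fin n →₀ ℕ | b.degree ≤ e * D + n * (e - 1)}) (hS.image v) fun m hm =>
      hmem (D + n * (e - 1)) m <| by
        have h₁ : m.degree ≤ e * D + n * (e - 1) := hm
        have h₂ := Nat.le_mul_of_pos_left (n * (e - 1)) he
        rw [mul_add, mul_add]
        omega
  refine hcard.trans ((Set.ncard_image_le hS).trans ?_)
  rw [Set.ncard_prod]
  exact Nat.mul_le_mul_right _ (ncard_nonTopExponents_le n he)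

/-- In characteristic zero, the powers of linear forms span the forms. -/
theorem homogeneousSubmodule_le_of_forall_pow_mem {n k : ℕ} {K : Type*} [Field K] [CharZero K]
    {W : Submodule K (MvPolynomial (Fin n) K)}
    (h : ∀ y : Fin n → K, (∑ i, C (y i) * X i) ^ k ∈ W) :
    homogeneousSubmodule (Fin n) K k ≤ W := by
  classical
  refine homogeneousSubmodule_le_of_forall_monomial_mem fun m hm => ?_
  by_contra hmW
  obtain ⟨φ, hφm, hφ⟩ := Submodule.exists_le_ker_of_notMem hmW
  let e : (Fin n → ℕ) ≃ (Fin n →₀ ℕ) := Finsupp.equivFunOnFinite.symm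
  let P : MvPolynomial (Fin n) K := ∑ a ∈ Finset.univ.piAntidiag k,
    monomial (e a) ((Nat.multinomial Finset.univ a : K) * φ (monomial (e a) 1))
  have hterm (y : Fin n → K) (a : Fin n → ℕ) :
      (Nat.multinomial Finset.univ a : MvPolynomial (Fin n) K) * ∏ i, (C (y i) * X i) ^ a i =
        ((Nat.multinomial Finset.univ a : K) * ∏ i, y i ^ a i) • monomial (e a) 1 := by
    have he : monomial (e a) (1 : K) = ∏ i, X i ^ a i := by
      rw [monomial_eq, Finsupp.prod_fintype _ _ (by simp)]
      simp [e]
    rw [he, smul_eq_C_mul]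
    simp only [mul_pow, Finset.prod_mul_distrib, C_mul, map_prod, map_pow, map_natCast, mul_assoc]
  have hP : P = 0 := by
    refine MvPolynomial.funext fun y => ?_
    have hy := hφ (h y)
    rw [LinearMap.mem_ker, Finset.sum_pow_eq_sum_piAntidiag, map_sum] at hy
    rw [map_zero, ← hy, map_sum]
    refine Finset.sum_congr rfl fun a _ => ?_
    rw [hterm, map_smul, eval_monomial, Finsupp.prod_fintype _ _ (by simp), smul_eq_mul]
    simp only [e, Finsupp.equivFunOnFinite_symm_apply_apply]
    ring
  have hm' : ⇑m ∈ Finset.univ.piAntidiag k := by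
    simpa [Finset.mem_piAntidiag, Finsupp.degree_eq_sum] using hm
  have hcoeff : coeff m P = (Nat.multinomial Finset.univ m : K) * φ (monomial m 1) := by
    have hem : e m = m := Finsupp.equivFunOnFinite.symm_apply_apply m
    rw [coeff_sum, Finset.sum_eq_single ⇑m]
    · rw [hem, coeff_monomial, if_pos rfl]
    · intro a _ ha
      rw [coeff_monomial, if_neg]
      exact fun h => ha (e.injective (h.trans hem.symm))
    · exact fun h => absurd hm' h
  rw [hP, coeff_zero] at hcoeff
  rcases mul_eq_zero.1 hcoeff.symm with h₀ | h₀
  · exact (Nat.multinomial_pos _ _).ne' (Nat.cast_eq_zero.1 h₀)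
  · exact hφm h₀

/-- The Hessian does not vanish in the Milnor algebra of a form admitting an associated form. -/
theorem hess_notMem_jacIdeal {n d : ℕ} (hd : 2 ≤ d)
    {f Af : MvPolynomial (Fin n) ℂ} (hf : f.IsHomogeneous d) (hAf : IsAssociatedForm n d f Af) :
    hess f ∉ jacIdeal f := by
  intro hmem
  obtain ⟨p, hp, hpJ⟩ := exists_isHomogeneous_notMem_span (e := d - 1) (by omega)
    fun i => hf.pderiv (i := i)
  refine hpJ (homogeneousSubmodule_le_of_forall_pow_mem
    (W := (jacIdeal f).restrictScalars ℂ) (fun y => ?_) hp)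
  have h := Ideal.add_mem _ (Ideal.Quotient.eq.1 (hAf.2 y))
    (Ideal.mul_mem_left _ (C (eval y Af)) hmem)
  rwa [sub_add_cancel] at h

theorem eval_substM {n : ℕ} (M : Matrix (Fin n) (Fin n) ℂ) (p : MvPolynomial (Fin n) ℂ)
    (y : Fin n → ℂ) : eval y (substM M p) = eval (M *ᵥ y) p := by
  induction p using MvPolynomial.induction_on with
  | C a => simp [substM]
  | add p q hp hq => simp_all [substM]
  | mul_X p i hp =>
    have h : eval y (substM M (p * X i)) =
        eval y (substM M p) * eval y (∑ j, C (M i j) * X j) := by simp [substM]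
    rw [h, hp]
    simp [mulVec, dotProduct]

theorem substM_substM {n : ℕ} (M N : Matrix (Fin n) (Fin n) ℂ) (p : MvPolynomial (Fin n) ℂ) :
    substM M (substM N p) = substM (N * M) p := by
  refine MvPolynomial.funext fun y => ?_
  simp [eval_substM, mulVec_mulVec]

theorem substM_one {n : ℕ} (p : MvPolynomial (Fin n) ℂ) : substM 1 p = p :=
  MvPolynomial.funext fun y => by simp [eval_substM]

theorem substM_substM_inv {n : ℕ} {g : Matrix (Fin n) (Fin n) ℂ} (hg : IsUnit g.det)
    (p : MvPolynomial (Fin n) ℂ) : substM g (substM g⁻¹ p) = p := by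
  rw [substM_substM, nonsing_inv_mul g hg, substM_one]

theorem substM_C {n : ℕ} (M : Matrix (Fin n) (Fin n) ℂ) (a : ℂ) : substM M (C a) = C a := by
  simp [substM]

theorem substM_mul {n : ℕ} (M : Matrix (Fin n) (Fin n) ℂ) (p q : MvPolynomial (Fin n) ℂ) :
    substM M (p * q) = substM M p * substM M q :=
  map_mul _ _ _

theorem substM_add {n : ℕ} (M : Matrix (Fin n) (Fin n) ℂ) (p q : MvPolynomial (Fin n) ℂ) :
    substM M (p + q) = substM M p + substM M q :=
  map_add _ _ _

theorem substM_sub {n : ℕ} (M : Matrix (Fin n) (Fin n) ℂ) (p q : MvPolynomial (Fin n) ℂ) :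
    substM M (p - q) = substM M p - substM M q :=
  map_sub _ _ _

theorem substM_pow {n : ℕ} (M : Matrix (Fin n) (Fin n) ℂ) (p : MvPolynomial (Fin n) ℂ) (k : ℕ) :
    substM M (p ^ k) = substM M p ^ k :=
  map_pow _ _ _

/-- Chain rule for a linear change of variables. -/
theorem pderiv_substM {n : ℕ} (M : Matrix (Fin n) (Fin n) ℂ) (p : MvPolynomial (Fin n) ℂ)
    (j : Fin n) :
    pderiv j (substM M p) = ∑ i, C (M i j) * substM M (pderiv i p) := by
  induction p using MvPolynomial.induction_on with
  | C a => simp [substM]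
  | add p q hp hq =>
    simp only [substM_add, map_add, hp, hq, ← Finset.sum_add_distrib, ← mul_add]
  | mul_X p k hp =>
    have hX : substM M (X k) = ∑ j, C (M k j) * X j := by simp [substM]
    have hP (i : Fin n) : substM M ((Pi.single i 1 : Fin n → MvPolynomial (Fin n) ℂ) k) =
        if k = i then 1 else 0 := by
      by_cases hi : k = i <;> simp [substM, hi]
    simp only [substM_mul, pderiv_mul, hp, hX, substM_add, pderiv_X, hP, mul_add,
      Finset.sum_add_distrib, map_sum, pderiv_C, zero_mul, zero_add]
    congr 1
    · rw [Finset.sum_mul]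
      exact Finset.sum_congr rfl fun i _ => by ring
    · simp [Pi.single_apply, mul_comm]

/-- The Hessian determinant is a covariant of weight two. -/
theorem hess_substM {n : ℕ} (M : Matrix (Fin n) (Fin n) ℂ) (p : MvPolynomial (Fin n) ℂ) :
    hess (substM M p) = C (M.det ^ 2) * substM M (hess p) := by
  have hM : (Matrix.of fun i j : Fin n => pderiv i (pderiv j (substM M p))) =
      (M.map C)ᵀ * (Matrix.of fun i j : Fin n => substM M (pderiv i (pderiv j p))) *
        M.map C := by
    ext1 i j
    simp only [of_apply, pderiv_substM, map_sum, pderiv_mul, pderiv_C, zero_mul, zero_add,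
      mul_apply, transpose_apply, map_apply, Finset.mul_sum, Finset.sum_mul]
    exact Finset.sum_congr rfl fun k _ => Finset.sum_congr rfl fun l _ => by ring
  have hC : (M.map C).det = (C M.det : MvPolynomial (Fin n) ℂ) := (RingHom.map_det _ _).symm
  have hs : (Matrix.of fun i j : Fin n => substM M (pderiv i (pderiv j p))).det =
      substM M (hess p) := by
    simp only [substM, hess, AlgHom.map_det]
    rfl
  rw [hess, hM, det_mul, det_mul, det_transpose, hC, hs, map_pow]
  ring

theorem substM_mem_jacIdeal {n : ℕ} {g : Matrix (Fin n) (Fin n) ℂ} (hg : IsUnit g.det)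
    {f p : MvPolynomial (Fin n) ℂ} (hp : p ∈ jacIdeal (substM g⁻¹ f)) :
    substM g p ∈ jacIdeal f := by
  suffices jacIdeal (substM g⁻¹ f) ≤ (jacIdeal f).comap
      (aeval (fun i => ∑ j, C (g i j) * X j) :
        MvPolynomial (Fin n) ℂ →ₐ[ℂ] MvPolynomial (Fin n) ℂ) from this hp
  refine Ideal.span_le.2 ?_
  rintro _ ⟨j, rfl⟩
  change substM g _ ∈ jacIdeal f
  have h : substM g (pderiv j (substM g⁻¹ f)) = ∑ i, C (g⁻¹ i j) * pderiv i f := by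
    have (i : Fin n) : substM g (C (g⁻¹ i j) * substM g⁻¹ (pderiv i f)) =
        C (g⁻¹ i j) * pderiv i f := by
      rw [substM_mul, substM_C, substM_substM_inv hg]
    rw [pderiv_substM]
    simp_rw [← this]
    exact map_sum _ _ _
  rw [h]
  exact Ideal.sum_mem _ fun i _ => Ideal.mul_mem_left _ _ (Ideal.subset_span ⟨i, rfl⟩)

theorem substM_linearForm {n : ℕ} (g : Matrix (Fin n) (Fin n) ℂ) (y : Fin n → ℂ) :
    substM g (∑ i, C (y i) * X i) = ∑ i, C ((gᵀ *ᵥ y) i) * X i := by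
  refine MvPolynomial.funext fun x => ?_
  have h (z : Fin n → ℂ) (w : Fin n → ℂ) :
      eval w (∑ i, C (z i) * X i : MvPolynomial (Fin n) ℂ) = z ⬝ᵥ w := by simp [dotProduct]
  rw [eval_substM, h, h, mulVec_transpose, dotProduct_mulVec]

/-- Equivariance of the associated form: for nondegenerate `f` of degree `d ≥ 3`
and `g ∈ GLₙ(ℂ)`, one has `A(g·f) = (det g)² · (g·A(f))`, where `(g·f)(x) = f(x·g⁻ᵗ)`
(i.e. `g·f = f ∘ g⁻¹`) and `(g·F)(y) = F(y·g)` (i.e. `g·F = F ∘ gᵀ`). -/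
theorem associatedForm_equivariance (n d : ℕ) (hn : 2 ≤ n) (hd : 3 ≤ d)
    (f : MvPolynomial (Fin n) ℂ) (hf : f.IsHomogeneous d)
    (hnd : ∀ x : Fin n → ℂ, (∀ i, eval x (pderiv i f) = 0) → x = 0)
    (g : Matrix (Fin n) (Fin n) ℂ) (hg : IsUnit g.det)
    (Af Agf : MvPolynomial (Fin n) ℂ)
    (hAf : IsAssociatedForm n d f Af)
    (hAgf : IsAssociatedForm n d (substM g⁻¹ f) Agf) :
    Agf = C (g.det ^ 2) * substM gᵀ Af := by
  refine MvPolynomial.funext fun y => ?_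
  have h₁ := Ideal.Quotient.eq.1 (hAf.2 (gᵀ *ᵥ y))
  have h₂ := substM_mem_jacIdeal hg (Ideal.Quotient.eq.1 (hAgf.2 y))
  have h₃ : substM g ((∑ i, C (y i) * X i) ^ (n * (d - 2)) -
        C (eval y Agf) * hess (substM g⁻¹ f)) =
      (∑ i, C ((gᵀ *ᵥ y) i) * X i) ^ (n * (d - 2)) -
        C (eval y Agf) * C (g⁻¹.det ^ 2) * hess f := by
    rw [hess_substM, ← substM_linearForm, substM_sub, substM_pow, substM_mul, substM_mul, substM_C,
      substM_C, substM_substM_inv hg, mul_assoc]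
  rw [h₃] at h₂
  have h₄ := Ideal.sub_mem _ h₁ h₂
  rw [sub_sub_sub_cancel_left, ← sub_mul, ← C_mul, ← C_sub] at h₄
  have h₅ : eval y Agf * g⁻¹.det ^ 2 - eval (gᵀ *ᵥ y) Af = 0 := by
    by_contra hne
    have h₆ := Ideal.mul_mem_left _ (C (eval y Agf * g⁻¹.det ^ 2 - eval (gᵀ *ᵥ y) Af)⁻¹) h₄
    rw [← mul_assoc, ← C_mul, inv_mul_cancel₀ hne, C_1, one_mul] at h₆
    exact hess_notMem_jacIdeal (by omega) hf hAf h₆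
  have hdet : g.det * g⁻¹.det = 1 := by rw [← det_mul, mul_nonsing_inv g hg, det_one]
  rw [eval_mul, eval_C, eval_substM, ← sub_eq_zero.1 h₅]
  linear_combination (-eval y Agf * (g.det * g⁻¹.det + 1)) * hdet
end

section
/- Let 𝐟 = (f₁,…,f_n) be homogeneous forms of degree d−1 in ℂ[x₁,…,x_n] with nonvanishing resultant, and jac(𝐟) the Jacobian determinant. Then for g ∈ GLₙ(ℂ), jac(𝐟 ∘ g^{-t} · g^{-1}) transforms so that 𝐀((g₁,g₂)·𝐟) = det(g₁g₂) · g₁·𝐀(𝐟), where ((g₁,g₂)·𝐟)(x) = 𝐟(x·g₁^{-t})·g₂^{-1}. -/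
open MvPolynomial Matrix

theorem mem_span_X_pow_of_X_pow_mul_mem {σ R : Type*} [CommRing R] {e : ℕ} {k : σ} {s : Set σ}
    (hk : k ∉ s) {a : MvPolynomial σ R}
    (h : a * X k ^ e ∈ Ideal.span ((fun i => (X i : MvPolynomial σ R) ^ e) '' s)) :
    a ∈ Ideal.span ((fun i => (X i : MvPolynomial σ R) ^ e) '' s) := by
  classical
  have himg : (fun i => (X i : MvPolynomial σ R) ^ e) '' s =
      (fun m => monomial m (1 : R)) '' ((fun i => Finsupp.single i e) '' s) := by
    simp only [Set.image_image, X_pow_eq_monomial]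
  rw [himg, mem_ideal_span_monomial_image] at h ⊢
  intro m hm
  obtain ⟨_, ⟨i, hi, rfl⟩, hle⟩ := h (m + Finsupp.single k e) (by
    rw [mem_support_iff] at hm ⊢
    rwa [X_pow_eq_monomial, coeff_mul_monomial, mul_one])
  refine ⟨_, ⟨i, hi, rfl⟩, ?_⟩
  have hik : k ≠ i := fun h => hk (h ▸ hi)
  simpa [Finsupp.single_le_iff, Finsupp.single_apply, hik] using hle

/-- Relations among the powers `X i ^ e` lift to relations among any lifts of these powers, since
they are generated by the Koszul relations. -/
theorem exists_lift_of_sum_mul_X_pow_eq_zero {σ R B : Type*} [CommRing R] [CommRing B]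
    {φ : B →+* MvPolynomial σ R} (hφ : Function.Surjective φ) {e : ℕ} {F : σ → B}
    (hF : ∀ i, φ (F i) = X i ^ e) (s : Finset σ) (a : σ → MvPolynomial σ R)
    (ha : ∑ i ∈ s, a i * X i ^ e = 0) :
    ∃ b : σ → B, ∑ i ∈ s, b i * F i = 0 ∧ ∀ i ∈ s, φ (b i) = a i := by
  classical
  induction s using Finset.induction_on generalizing a with
  | empty => exact ⟨0, by simp⟩
  | insert k s hk ih =>
    rw [Finset.sum_insert hk] at ha
    have hmem : a k ∈ Ideal.span ((fun i => (X i : MvPolynomial σ R) ^ e) '' s) := by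
      apply mem_span_X_pow_of_X_pow_mul_mem (by simpa using hk)
      rw [eq_neg_of_add_eq_zero_left ha]
      exact neg_mem (sum_mem fun i hi =>
        Ideal.mul_mem_left _ _ (Ideal.subset_span ⟨i, hi, rfl⟩))
    obtain ⟨r, hr⟩ := (Submodule.mem_span_image_finset_iff_exists_fun' _).mp hmem
    simp only [smul_eq_mul] at hr
    obtain ⟨b, hb, hba⟩ := ih (fun i => a i + r i * X k ^ e) (by
      rw [← ha, ← hr, Finset.sum_mul, add_comm, ← Finset.sum_add_distrib]
      exact Finset.sum_congr rfl fun i _ => by ring)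
    choose ψ hψ using hφ
    refine ⟨fun i => if i = k then ∑ j ∈ s, ψ (r j) * F j else b i - ψ (r i) * F k, ?_, ?_⟩
    · have hs : ∀ i ∈ s, (if i = k then ∑ j ∈ s, ψ (r j) * F j else b i - ψ (r i) * F k) * F i =
          b i * F i - ψ (r i) * F i * F k := fun i hi => by
        rw [if_neg (ne_of_mem_of_not_mem hi hk)]
        ring
      beta_reduce
      rw [Finset.sum_insert hk, if_pos rfl, Finset.sum_congr rfl hs, Finset.sum_sub_distrib, hb,
        Finset.sum_mul]
      ring
    · intro i hi
      by_cases hik : i = k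
      · subst hik
        simp [hF, hψ, hr]
      · have his := Finset.mem_of_mem_insert_of_ne hi hik
        simp [hik, hF, hψ, hba i his]

/-- If `φ` is reduction modulo `t`, then `t` is a nonzerodivisor modulo any lifts of the powers
`X i ^ e`. -/
theorem mem_span_of_mul_mem_span_of_lift_X_pow {σ R B : Type*} [Fintype σ] [CommRing R]
    [CommRing B] [IsDomain B] {φ : B →+* MvPolynomial σ R} (hφ : Function.Surjective φ) {t : B}
    (ht : t ≠ 0) (hker : RingHom.ker φ = Ideal.span {t}) {e : ℕ} {F : σ → B}
    (hF : ∀ i, φ (F i) = X i ^ e) {w : B}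
    (hw : t * w ∈ Ideal.span (Set.range F)) : w ∈ Ideal.span (Set.range F) := by
  obtain ⟨a, ha⟩ := Ideal.mem_span_range_iff_exists_fun.mp hw
  have htφ : φ t = 0 := by
    rw [← RingHom.mem_ker, hker]
    exact Ideal.mem_span_singleton_self t
  obtain ⟨b, hb, hba⟩ := exists_lift_of_sum_mul_X_pow_eq_zero hφ hF Finset.univ (fun i => φ (a i))
    (by simpa [hF, htφ] using congrArg φ ha)
  have hdvd : ∀ i, ∃ c, a i - b i = t * c := fun i => by
    rw [← dvd_def, ← Ideal.mem_span_singleton, ← hker, RingHom.mem_ker, map_sub,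
      hba i (Finset.mem_univ i), sub_self]
  choose c hc using hdvd
  refine Ideal.mem_span_range_iff_exists_fun.mpr ⟨c, mul_left_cancel₀ ht ?_⟩
  rw [← ha, ← sub_zero (∑ i, a i * F i), ← hb, ← Finset.sum_sub_distrib, Finset.mul_sum]
  exact Finset.sum_congr rfl fun i _ => by rw [← sub_mul, hc, mul_assoc]

theorem homogeneousComponent_add_mul {σ R : Type*} [CommRing R] {f : MvPolynomial σ R} {e : ℕ}
    (hf : f.IsHomogeneous e) (k : ℕ) (a : MvPolynomial σ R) :
    homogeneousComponent (k + e) (a * f) = homogeneousComponent k a * f := by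
  classical
  have key : ∀ j, homogeneousComponent (k + e) (homogeneousComponent j a * f) =
      if j = k then homogeneousComponent k a * f else 0 := fun j => by
    rw [homogeneousComponent_of_mem ((homogeneousComponent_isHomogeneous j a).mul hf)]
    by_cases h : j = k
    · simp [h]
    · rw [if_neg h, if_neg (by omega)]
  conv_lhs => rw [← sum_homogeneousComponent a]
  rw [Finset.sum_mul, map_sum, Finset.sum_congr rfl fun j _ => key j, Finset.sum_ite_eq']
  split_ifs with h
  · rfl
  · rw [homogeneousComponent_eq_zero _ _ (by simpa using h), zero_mul]

theorem homogeneousSubmodule_eq_span_monomial (σ R : Type*) [CommRing R] (N : ℕ) :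
    homogeneousSubmodule σ R N =
      Submodule.span R ((fun m => monomial m (1 : R)) '' {m | m.degree = N}) := by
  apply le_antisymm
  · intro p hp
    rw [p.as_sum]
    refine sum_mem fun m hm => ?_
    rw [← mul_one (coeff m p), ← smul_eq_mul, ← smul_monomial]
    exact Submodule.smul_mem _ _ (Submodule.subset_span
      ⟨m, (IsHomogeneous.degree_eq_sum_deg_support hp hm).symm, rfl⟩)
  · rw [Submodule.span_le]
    rintro _ ⟨m, hm, rfl⟩
    exact isHomogeneous_monomial _ hm

/-- The forms of the critical degree `n * (e - 1)` are never all contained in an ideal generated by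
`n` forms of degree `e` in `n` variables.

The forms `f i` are joined to the powers `X i ^ e` by the family `F i = X i ^ e + t (f i - X i ^ e)`.
If all forms of critical degree lay in the ideal at `t = 1`, then by Nakayama's lemma a nonzero
polynomial multiple `p(t)` of each of them would lie in the ideal of the family. As `t` is a
nonzerodivisor modulo that ideal, one may assume `p(0) ≠ 0`, which fails for `∏ i, X i ^ (e - 1)`. -/
theorem exists_isHomogeneous_notMem_span_s5 {σ K : Type*} [Fintype σ] [Field K] {e k : ℕ}
    (he : Fintype.card σ * (e - 1) = k + e) (he0 : e ≠ 0)
    {f : σ → MvPolynomial σ K} (hf : ∀ i, (f i).IsHomogeneous e) :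
    ∃ m : σ →₀ ℕ, m.degree = k + e ∧ monomial m (1 : K) ∉ Ideal.span (Set.range f) := by
  classical
  by_contra! hall
  let φ : MvPolynomial σ (Polynomial K) →+* MvPolynomial σ K :=
    MvPolynomial.map (Polynomial.evalRingHom 0)
  let ι : MvPolynomial σ K →+* MvPolynomial σ (Polynomial K) := MvPolynomial.map Polynomial.C
  have hφι : ∀ p, φ (ι p) = p := fun p => by
    have : (Polynomial.evalRingHom 0).comp Polynomial.C = RingHom.id K := by ext; simp
    rw [MvPolynomial.map_map, this, MvPolynomial.map_id]
  have hker : RingHom.ker φ = Ideal.span {C Polynomial.X} := by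
    ext p
    rw [RingHom.mem_ker, Ideal.mem_span_singleton]
    refine (C_dvd_iff_map_hom_eq_zero (Polynomial.evalRingHom 0) _ (fun r => ?_) p).symm
    rw [Polynomial.X_dvd_iff, Polynomial.coeff_zero_eq_eval_zero, Polynomial.coe_evalRingHom]
  let F : σ → MvPolynomial σ (Polynomial K) := fun i =>
    X i ^ e + C Polynomial.X * ι (f i - X i ^ e)
  have hF : ∀ i, φ (F i) = X i ^ e := fun i => by
    simp [F, φ]
  let I := Ideal.span (Set.range F)
  let π := (I.restrictScalars (Polynomial K)).mkQ
  let N := (homogeneousSubmodule σ (Polynomial K) (k + e)).map π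
  have hN : N ≤ Ideal.span {(Polynomial.X - 1 : Polynomial K)} • N := by
    simp only [N]
    conv_lhs => rw [homogeneousSubmodule_eq_span_monomial, Submodule.map_span]
    rw [Submodule.span_le]
    rintro _ ⟨_, ⟨m, hm, rfl⟩, rfl⟩
    obtain ⟨a, ha⟩ := Ideal.mem_span_range_iff_exists_fun.mp (hall m hm)
    have ha' : ∑ i, homogeneousComponent k (a i) * f i = monomial m 1 := by
      have := congrArg (homogeneousComponent (k + e)) ha
      rwa [map_sum, Finset.sum_congr rfl fun i _ => homogeneousComponent_add_mul (hf i) k (a i),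
        homogeneousComponent_of_mem (isHomogeneous_monomial _ hm), if_pos rfl] at this
    let h := ∑ i, homogeneousComponent k (a i) * (f i - X i ^ e)
    have hh : h.IsHomogeneous (k + e) := IsHomogeneous.sum _ _ _ fun i _ =>
      (homogeneousComponent_isHomogeneous k (a i)).mul
        ((hf i).sub (isHomogeneous_X_pow i e))
    have hmem : monomial m (1 : Polynomial K) - (Polynomial.X - 1 : Polynomial K) • (-ι h) ∈ I := by
      have : monomial m (1 : Polynomial K) - (Polynomial.X - 1 : Polynomial K) • (-ι h) =
          ∑ i, ι (homogeneousComponent k (a i)) * F i := by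
        have h1 : monomial m (1 : Polynomial K) = ι (monomial m 1) := by simp [ι]
        rw [h1, ← ha', smul_eq_C_mul]
        simp only [h, F, map_sum, map_mul, map_sub, map_one, Finset.mul_sum,
          ← Finset.sum_neg_distrib, ← Finset.sum_sub_distrib]
        refine Finset.sum_congr rfl fun i _ => ?_
        have h2 : ι (X i ^ e) = X i ^ e := by simp [ι]
        rw [h2]
        ring
      rw [this]
      exact sum_mem fun i _ => Ideal.mul_mem_left _ _ (Ideal.subset_span ⟨i, rfl⟩)
    have : π (monomial m 1) = (Polynomial.X - 1 : Polynomial K) • π (-ι h) := by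
      rw [← map_smul, ← sub_eq_zero, ← map_sub]
      exact (Submodule.Quotient.mk_eq_zero _).mpr hmem
    rw [SetLike.mem_coe, this]
    exact Submodule.smul_mem_smul (Ideal.mem_span_singleton_self _)
      (Submodule.mem_map_of_mem (hh.map _).neg)
  obtain ⟨p, hp, hpN⟩ := Submodule.exists_sub_one_mem_and_smul_eq_zero_of_fg_of_le_smul _ N
    ((homogeneousSubmodule_fg (R := Polynomial K) (σ := σ) (k + e)).map π) hN
  have hp0 : p ≠ 0 := by
    rintro rfl
    have := Polynomial.dvd_iff_isRoot.mp (by simpa using Ideal.mem_span_singleton.mp hp :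
      Polynomial.X - Polynomial.C (1 : K) ∣ 1)
    simp at this
  let m : σ →₀ ℕ := Finsupp.equivFunOnFinite.symm fun _ => e - 1
  have hm : m.degree = k + e := by
    simp [Finsupp.degree_eq_sum, m, ← he]
  have hpm : C p * monomial m 1 ∈ I := by
    have := hpN _ (Submodule.mem_map_of_mem (isHomogeneous_monomial (1 : Polynomial K) hm))
    rw [← map_smul, smul_eq_C_mul] at this
    exact (Submodule.Quotient.mk_eq_zero _).mp this
  obtain ⟨q, hpq, hq⟩ := p.exists_eq_pow_rootMultiplicity_mul_and_not_dvd hp0 0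
  have hqm : C q * monomial m 1 ∈ I := by
    rw [hpq, map_zero, sub_zero, map_mul, map_pow, mul_assoc] at hpm
    generalize p.rootMultiplicity 0 = j at hpm
    induction j with
    | zero => simpa using hpm
    | succ j ih =>
      rw [pow_succ', mul_assoc] at hpm
      exact ih (mem_span_of_mul_mem_span_of_lift_X_pow (fun x => ⟨ι x, hφι x⟩)
        (by simp) hker hF hpm)
  have hφm : C (q.eval 0) * monomial m (1 : K) ∈
      Ideal.span ((fun m => monomial m (1 : K)) '' Set.range fun i => Finsupp.single i e) := by
    have := Ideal.mem_map_of_mem φ hqm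
    rw [Ideal.map_span, ← Set.range_comp] at this
    rw [← Set.range_comp]
    convert this using 3
    · ext i : 1
      simp [hF, X_pow_eq_monomial]
    · simp [φ]
  rw [mem_ideal_span_monomial_image] at hφm
  obtain ⟨_, ⟨i, rfl⟩, hle⟩ := hφm m (by
    rw [Polynomial.dvd_iff_isRoot] at hq
    simpa [coeff_C_mul] using hq)
  rw [Finsupp.single_le_iff] at hle
  simp only [m, Finsupp.coe_equivFunOnFinite_symm] at hle
  omega

/-- In characteristic zero, the `N`-th powers of linear forms span all forms of degree `N`. -/
theorem monomial_mem_of_linear_pow_mem {σ K : Type*} [Fintype σ] [Field K] [CharZero K]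
    {N : ℕ} {V : Submodule K (MvPolynomial σ K)}
    (hV : ∀ y : σ → K, (∑ i, C (y i) * X i) ^ N ∈ V) (m : σ →₀ ℕ) (hm : m.degree = N) :
    monomial m 1 ∈ V := by
  classical
  by_contra hmV
  obtain ⟨l, hl, hle⟩ := Submodule.exists_le_ker_of_notMem hmV
  let Q : MvPolynomial σ K := ∑ k ∈ Finset.univ.piAntidiag N,
    monomial (Finsupp.equivFunOnFinite.symm k)
      ((Nat.multinomial Finset.univ k : K) * l (∏ i, X i ^ k i))
  have hQ : Q = 0 := by
    refine MvPolynomial.funext fun y => ?_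
    have := hle (hV y)
    rw [LinearMap.mem_ker, Finset.sum_pow_eq_sum_piAntidiag, map_sum] at this
    rw [map_zero, ← this, map_sum]
    refine Finset.sum_congr rfl fun k _ => ?_
    have : (Nat.multinomial Finset.univ k : MvPolynomial σ K) * ∏ i, (C (y i) * X i) ^ k i =
        ((Nat.multinomial Finset.univ k : K) * ∏ i, y i ^ k i) • ∏ i, X i ^ k i := by
      simp [smul_eq_C_mul, mul_pow, Finset.prod_mul_distrib, mul_assoc]
    rw [this, map_smul, eval_monomial, Finsupp.prod_fintype _ _ (by simp)]
    simp only [Finsupp.coe_equivFunOnFinite_symm, smul_eq_mul]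
    ring
  have hcoeff : coeff m Q = (Nat.multinomial Finset.univ m : K) * l (monomial m 1) := by
    rw [coeff_sum, Finset.sum_eq_single (m : σ → ℕ)]
    · rw [coeff_monomial, if_pos (by ext; simp), monomial_eq, Finsupp.prod_fintype _ _ (by simp)]
      simp
    · intro k _ hk
      rw [coeff_monomial, if_neg]
      rintro rfl
      exact hk (by simp)
    · intro h
      exact absurd (by simpa [Finset.mem_piAntidiag, Finsupp.degree_eq_sum] using hm) h
  rw [hQ, coeff_zero, eq_comm, mul_eq_zero] at hcoeff
  exact hcoeff.elim (by exact_mod_cast (Nat.multinomial_pos _ _).ne') hl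

section SubstM

variable {n : ℕ}

/-- The substitution `substM M` as an algebra homomorphism. -/
noncomputable def substMHom (M : Matrix (Fin n) (Fin n) ℂ) :
    MvPolynomial (Fin n) ℂ →ₐ[ℂ] MvPolynomial (Fin n) ℂ :=
  aeval fun i => ∑ j, C (M i j) * X j

theorem substM_eq_substMHom (M : Matrix (Fin n) (Fin n) ℂ) (p : MvPolynomial (Fin n) ℂ) :
    substM M p = substMHom M p := rfl

theorem substMHom_X (M : Matrix (Fin n) (Fin n) ℂ) (i : Fin n) :
    substMHom M (X i) = ∑ j, C (M i j) * X j := aeval_X _ _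

theorem substMHom_C (M : Matrix (Fin n) (Fin n) ℂ) (c : ℂ) :
    substMHom M (C c) = C c := aeval_C _ _

theorem substMHom_substMHom (M M' : Matrix (Fin n) (Fin n) ℂ) (p : MvPolynomial (Fin n) ℂ) :
    substMHom M (substMHom M' p) = substMHom (M' * M) p := by
  suffices h : (substMHom M).comp (substMHom M') = substMHom (M' * M) from DFunLike.congr_fun h p
  refine algHom_ext fun i => ?_
  simp only [AlgHom.comp_apply, substMHom_X, map_sum, map_mul, substMHom_C, Matrix.mul_apply,
    Finset.mul_sum, Finset.sum_mul]
  rw [Finset.sum_comm]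
  simp only [mul_assoc]

theorem substMHom_one (p : MvPolynomial (Fin n) ℂ) : substMHom 1 p = p := by
  have : substMHom (1 : Matrix (Fin n) (Fin n) ℂ) = AlgHom.id ℂ _ :=
    algHom_ext fun i => by simp [substMHom_X, Matrix.one_apply]
  rw [this, AlgHom.id_apply]

theorem eval_substMHom (M : Matrix (Fin n) (Fin n) ℂ) (y : Fin n → ℂ)
    (p : MvPolynomial (Fin n) ℂ) : eval y (substMHom M p) = eval (M *ᵥ y) p := by
  induction p using MvPolynomial.induction_on with
  | C c => rw [substMHom_C, eval_C, eval_C]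
  | add p q hp hq => rw [map_add, map_add, map_add, hp, hq]
  | mul_X p i hp =>
    rw [map_mul, map_mul, map_mul, hp, substMHom_X, eval_X]
    simp [Matrix.mulVec, dotProduct]

theorem substMHom_linearForm (M : Matrix (Fin n) (Fin n) ℂ) (y : Fin n → ℂ) :
    substMHom M (∑ i, C (y i) * X i) = ∑ i, C ((Mᵀ *ᵥ y) i) * X i := by
  simp only [map_sum, map_mul, substMHom_C, substMHom_X, Matrix.mulVec, dotProduct,
    Matrix.transpose_apply, Finset.mul_sum, Finset.sum_mul]
  rw [Finset.sum_comm]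
  exact Finset.sum_congr rfl fun i _ => Finset.sum_congr rfl fun j _ => by ring

theorem pderiv_substMHom (M : Matrix (Fin n) (Fin n) ℂ) (j : Fin n)
    (p : MvPolynomial (Fin n) ℂ) :
    pderiv j (substMHom M p) = ∑ k, substMHom M (pderiv k p) * C (M k j) := by
  induction p using MvPolynomial.induction_on with
  | C c => simp
  | add p q hp hq => simp only [map_add, hp, hq, add_mul, Finset.sum_add_distrib]
  | mul_X p i hp =>
    have hX : pderiv j (substMHom M (X i)) = C (M i j) := by
      simp [substMHom_X, pderiv_X, Pi.single_apply]
    have hk : ∀ k, substMHom M (pderiv k (p * X i)) * C (M k j) =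
        substMHom M (pderiv k p) * C (M k j) * substMHom M (X i) +
          if k = i then substMHom M p * C (M i j) else 0 := fun k => by
      rw [pderiv_mul, pderiv_X, Pi.single_apply]
      split_ifs with h1 h2 h2
      · subst h1; simp only [map_add, map_mul, map_one]; ring
      · exact absurd h1.symm h2
      · exact absurd h2.symm h1
      · simp only [map_add, map_mul, map_zero]; ring
    rw [map_mul, pderiv_mul, hp, hX, Finset.sum_congr rfl fun k _ => hk k,
      Finset.sum_add_distrib, ← Finset.sum_mul, Finset.sum_ite_eq' Finset.univ i,
      if_pos (Finset.mem_univ i)]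

theorem jacDet_linear_combination_substMHom (M B : Matrix (Fin n) (Fin n) ℂ)
    (f : Fin n → MvPolynomial (Fin n) ℂ) :
    jacDet (fun i => ∑ j, C (B j i) * substMHom M (f j)) =
      C (B.det * M.det) * substMHom M (jacDet f) := by
  have hJ : (Matrix.of fun i j => pderiv j (∑ l, C (B l i) * substMHom M (f l))) =
      (C.mapMatrix B)ᵀ * ((substMHom M).mapMatrix (Matrix.of fun i j => pderiv j (f i)) *
        C.mapMatrix M) := by
    ext1 i j
    simp [Matrix.mul_apply, pderiv_substMHom]
  rw [jacDet, jacDet, hJ, Matrix.det_mul, Matrix.det_mul, Matrix.det_transpose, AlgHom.map_det,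
    ← RingHom.map_det, ← RingHom.map_det, map_mul]
  ring

end SubstM

theorem IsAssociatedFormT.jacDet_notMem_span {n d : ℕ} (hn : 2 ≤ n) (hd : 3 ≤ d)
    {f : Fin n → MvPolynomial (Fin n) ℂ} {Af : MvPolynomial (Fin n) ℂ}
    (hf : ∀ i, (f i).IsHomogeneous (d - 1)) (hAf : IsAssociatedFormT n d f Af) :
    jacDet f ∉ Ideal.span (Set.range f) := by
  intro hjac
  obtain ⟨k, hk⟩ : ∃ k, n * (d - 2) = k + (d - 1) :=
    Nat.exists_eq_add_of_le' (le_trans (by omega) (Nat.mul_le_mul_right (d - 2) hn))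
  obtain ⟨m, hm, hmf⟩ := exists_isHomogeneous_notMem_span_s5 (k := k)
    (by rw [Fintype.card_fin, ← hk]; rfl) (by omega) hf
  refine hmf (monomial_mem_of_linear_pow_mem
    (V := (Ideal.span (Set.range f)).restrictScalars ℂ) (fun y => ?_) m hm)
  rw [Submodule.restrictScalars_mem, ← hk]
  have := Ideal.Quotient.eq.mp (hAf.2 y)
  exact (Submodule.sub_mem_iff_left _ (Ideal.mul_mem_left _ _ hjac)).mp this

/-- Equivariance of the associated form of an `n`-tuple: for `𝐟 = (f₁,…,fₙ)` of degree `d-1`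
with nonvanishing resultant (no common zero away from the origin) and `g₁, g₂ ∈ GLₙ(ℂ)`,
one has `𝐀((g₁,g₂)·𝐟) = det(g₁g₂) · g₁·𝐀(𝐟)`, where `((g₁,g₂)·𝐟)(x) = 𝐟(x·g₁⁻ᵗ)·g₂⁻¹`. -/
theorem associatedFormT_equivariance (n d : ℕ) (hn : 2 ≤ n) (hd : 3 ≤ d)
    (f : Fin n → MvPolynomial (Fin n) ℂ) (hf : ∀ i, (f i).IsHomogeneous (d - 1))
    (hres : ∀ x : Fin n → ℂ, (∀ i, eval x (f i) = 0) → x = 0)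
    (g₁ g₂ : Matrix (Fin n) (Fin n) ℂ) (hg₁ : IsUnit g₁.det) (hg₂ : IsUnit g₂.det)
    (Af Agf : MvPolynomial (Fin n) ℂ)
    (hAf : IsAssociatedFormT n d f Af)
    (hAgf : IsAssociatedFormT n d
      (fun i => ∑ j, C (g₂⁻¹ j i) * substM g₁⁻¹ (f j)) Agf) :
    Agf = C ((g₁ * g₂).det) * substM g₁ᵀ Af := by
  refine MvPolynomial.funext fun y => ?_
  set I := Ideal.span (Set.range f)
  set F : Fin n → MvPolynomial (Fin n) ℂ := fun i => ∑ j, C (g₂⁻¹ j i) * substM g₁⁻¹ (f j)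
    with hF
  have hinv : ∀ p, substMHom g₁ (substMHom g₁⁻¹ p) = p := fun p => by
    rw [substMHom_substMHom, Matrix.nonsing_inv_mul _ hg₁, substMHom_one]
  have hmap : (Ideal.span (Set.range F)).map (substMHom g₁) ≤ I := by
    rw [Ideal.map_span, Ideal.span_le]
    rintro _ ⟨_, ⟨i, rfl⟩, rfl⟩
    simp only [hF, map_sum, map_mul, substMHom_C, substM_eq_substMHom, hinv]
    exact sum_mem fun j _ => Ideal.mul_mem_left _ _ (Ideal.subset_span ⟨j, rfl⟩)
  have hjac : substMHom g₁ (jacDet F) = C (g₂⁻¹.det * g₁⁻¹.det) * jacDet f := by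
    simp only [hF, substM_eq_substMHom]
    rw [jacDet_linear_combination_substMHom, map_mul, substMHom_C, hinv]
  have hg := hmap (Ideal.mem_map_of_mem (substMHom g₁) (Ideal.Quotient.eq.mp (hAgf.2 y)))
  rw [map_sub, map_pow, map_mul, substMHom_linearForm, substMHom_C, hjac] at hg
  have hsub := sub_mem hg (Ideal.Quotient.eq.mp (hAf.2 (g₁ᵀ *ᵥ y)))
  rw [sub_sub_sub_cancel_left, ← mul_assoc, ← C_mul, ← sub_mul, ← C_sub] at hsub
  have hzero : eval (g₁ᵀ *ᵥ y) Af - eval y Agf * (g₂⁻¹.det * g₁⁻¹.det) = 0 := by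
    by_contra hc
    exact hAf.jacDet_notMem_span hn hd hf
      ((Ideal.unit_mul_mem_iff_mem _ ((isUnit_iff_ne_zero.mpr hc).map C)).mp hsub)
  rw [map_mul, eval_C, substM_eq_substMHom, eval_substMHom, sub_eq_zero.mp hzero,
    Matrix.det_nonsing_inv, Matrix.det_nonsing_inv, Ring.inverse_eq_inv', Matrix.det_mul]
  field_simp [hg₁.ne_zero, hg₂.ne_zero]
end

section
/- The determinantal variety W'_d ⊆ ℂ[x,y]_{d-1} ⊕ ℂ[x,y]_{d-1} consisting of pairs (f₁,f₂) whose four partial derivatives (f₁)_x, (f₁)_y, (f₂)_x, (f₂)_y are linearly dependent is, for d ≥ 4, a Cohen–Macaulay, reduced, and normal variety of dimension d + 4. In particular, it is smooth at the point ((d−1)x^{d-2}y, y^{d-1}). -/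
open MvPolynomial

/-- A Noetherian local ring is Cohen–Macaulay iff its maximal ideal contains a regular
sequence of length equal to its Krull dimension. -/
def IsCMLocalRing (S : Type*) [CommRing S] [IsLocalRing S] : Prop :=
  ∃ rs : List S, (∀ r ∈ rs, r ∈ IsLocalRing.maximalIdeal S)
    ∧ RingTheory.Sequence.IsRegular S rs
    ∧ (rs.length : WithBot (WithTop ℕ)) = ringKrullDim S

/-- A Noetherian local ring is regular iff its maximal ideal is generated by
`dim`-many elements. -/
def IsRegLocalRing (S : Type*) [CommRing S] [IsLocalRing S] : Prop :=
  ∃ s : Finset S, Ideal.span (s : Set S) = IsLocalRing.maximalIdeal S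
    ∧ ((s.card : ℕ) : WithBot (WithTop ℕ)) = ringKrullDim S

/-- The generic `4 × (d-1)` matrix of the pairs `(f₁,f₂)` of binary forms of degree `d-1`,
`f₁ = ∑ C(d-1,i)aᵢx^(d-1-i)yⁱ`, `f₂ = ∑ C(d-1,i)bᵢx^(d-1-i)yⁱ`, with rows
`(a₀,…,a_(d-2))`, `(a₁,…,a_(d-1))`, `(b₀,…,b_(d-2))`, `(b₁,…,b_(d-1))`;
here the variable `X (0,i)` stands for `aᵢ` and `X (1,i)` for `bᵢ`. -/
noncomputable def genMat (d : ℕ) :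
    Matrix (Fin 4) (Fin (d - 1)) (MvPolynomial (Fin 2 × Fin d) ℂ) :=
  fun r s => X (⟨(r : ℕ) / 2, by have := r.isLt; omega⟩,
    ⟨(s : ℕ) + (r : ℕ) % 2, by have := s.isLt; have := r.isLt; omega⟩)

/-- The ideal of `4 × 4` minors of `genMat d`, cutting out the variety `W'_d` of pairs
`(f₁,f₂)` whose four partial derivatives are linearly dependent. -/
noncomputable def minorsIdeal (d : ℕ) : Ideal (MvPolynomial (Fin 2 × Fin d) ℂ) :=
  Ideal.span {p | ∃ c : Fin 4 → Fin (d - 1), p = ((genMat d).submatrix id c).det}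

/-- The point of `W'_d` corresponding to the pair `((d-1)x^(d-2)y, y^(d-1))`:
`a₁ = 1`, `b_(d-1) = 1` and all other coordinates `0`. -/
noncomputable def specialPoint (d : ℕ) (hd : 4 ≤ d) : Fin 2 × Fin d → ℂ :=
  fun q => if q = (0, ⟨1, by omega⟩) then 1 else if q = (1, ⟨d - 1, by omega⟩) then 1 else 0

/-- The maximal ideal of the coordinate ring of `W'_d` at the special point. -/
noncomputable def specialMaxIdeal (d : ℕ) (hd : 4 ≤ d) :
    Ideal (MvPolynomial (Fin 2 × Fin d) ℂ ⧸ minorsIdeal d) :=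
  (Ideal.span {p | ∃ s : Fin 2 × Fin d, p = X s - C (specialPoint d hd s)}).map
    (Ideal.Quotient.mk (minorsIdeal d))

lemma sum_sq_lt_sum_sq_of_perm {k : ℕ} (μ : Fin k → ℤ) (hμ : Monotone μ)
    (σ : Equiv.Perm (Fin k)) (hσ : σ ≠ 1) :
    ∑ j, μ j ^ 2 < ∑ j, (μ j + ((j : ℕ) : ℤ) - ((σ j : ℕ) : ℤ)) ^ 2 := by
  set w : Fin k → ℤ := fun j => μ j + ((j : ℕ) : ℤ) with hw
  set g : Fin k → ℤ := fun j => ((j : ℕ) : ℤ) with hg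
  have hwm : StrictMono w := fun i j hij => by
    have := hμ hij.le
    have : ((i : ℕ) : ℤ) < ((j : ℕ) : ℤ) := by exact_mod_cast hij
    simp only [hw]; linarith
  have hmono : Monovary w g := fun i j hij => by
    have : i < j := by simpa [hg] using hij
    exact (hwm this).le
  have hlt : ∑ j, w j * g (σ j) < ∑ j, w j * g j := by
    rw [hmono.sum_mul_comp_perm_lt_sum_mul_iff]
    intro h
    apply hσ
    have hs : StrictMono (σ⁻¹ : Equiv.Perm (Fin k)) := by
      apply Monotone.strictMono_of_injective _ (Equiv.injective _)
      intro a b hab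
      rcases hab.eq_or_lt with rfl | hab
      · exact le_rfl
      · have := @h (σ⁻¹ a) (σ⁻¹ b) (by simpa [hg] using hab)
        exact hwm.le_iff_le.1 this
    have h2 := Subsingleton.elim (hs.orderIsoOfSurjective _ (Equiv.surjective _)) (OrderIso.refl _)
    rw [← inv_inj, inv_one]
    ext1 x
    exact DFunLike.congr_fun h2 x
  have hsq : ∑ j, g (σ j) ^ 2 = ∑ j, g j ^ 2 := Equiv.sum_comp σ (fun j => g j ^ 2)
  have e1 : ∑ j, (w j - g (σ j)) ^ 2 = ∑ j, w j ^ 2 - 2 * ∑ j, w j * g (σ j) + ∑ j, g (σ j) ^ 2 := by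
    rw [Finset.mul_sum, ← Finset.sum_sub_distrib, ← Finset.sum_add_distrib]
    exact Finset.sum_congr rfl fun j _ => by ring
  have e2 : ∑ j, μ j ^ 2 = ∑ j, w j ^ 2 - 2 * ∑ j, w j * g j + ∑ j, g j ^ 2 := by
    rw [Finset.mul_sum, ← Finset.sum_sub_distrib, ← Finset.sum_add_distrib]
    exact Finset.sum_congr rfl fun j _ => by simp only [hw, hg]; ring
  change _ < ∑ j, (w j - g (σ j)) ^ 2
  rw [e1, e2, hsq]
  linarith

section Straightening

variable {A B : Type*} [CommRing A] [CommRing B] [Algebra A B]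

lemma prod_sub_prod_mem_pow {ι : Type*} (s : Finset ι) (V : Submodule A B) (h1 : 1 ≤ V)
    (x y : ι → B) (hy : ∀ i, y i ∈ V) (hxy : ∀ i, x i - y i ∈ (1 : Submodule A B)) :
    ∏ i ∈ s, x i - ∏ i ∈ s, y i ∈ V ^ (s.card - 1) := by
  classical
  have hprod : ∀ t : Finset ι, ∏ i ∈ t, y i ∈ V ^ t.card := fun t => by
    induction t using Finset.induction_on with
    | empty => simpa using Submodule.one_le.1 (le_refl (1 : Submodule A B))
    | insert a t ha ih =>
      rw [Finset.prod_insert ha, Finset.card_insert_of_notMem ha, pow_succ']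
      exact Submodule.mul_mem_mul (hy a) ih
  induction s using Finset.induction_on with
  | empty => simp
  | insert a t ha ih =>
    rw [Finset.prod_insert ha, Finset.prod_insert ha, Finset.card_insert_of_notMem ha,
      Nat.add_sub_cancel]
    have hx : x a ∈ V := by
      have := V.add_mem (h1 (hxy a)) (hy a)
      simpa using this
    have e : x a * ∏ i ∈ t, x i - y a * ∏ i ∈ t, y i
        = x a * (∏ i ∈ t, x i - ∏ i ∈ t, y i) + (x a - y a) * ∏ i ∈ t, y i := by ring
    rw [e]
    refine Submodule.add_mem _ ?_ ?_
    · rcases t.eq_empty_or_nonempty with rfl | hne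
      · simp
      · have hc : t.card = (t.card - 1) + 1 := by have := hne.card_pos; omega
        rw [hc, pow_succ']
        exact Submodule.mul_mem_mul hx ih
    · have := Submodule.mul_mem_mul (hxy a) (hprod t)
      rwa [one_mul] at this

lemma sum_perm_prod_mem_pow {k : ℕ} (V : Submodule A B) (h1 : 1 ≤ V) (η : ℤ → B)
    (hη : ∀ i, η i ∈ V) (μ : Fin k → ℤ) (N : Matrix (Fin k) (Fin k) B) (hdet : N.det = 0)
    (hN : ∀ i j, N i j - η (μ j + ((j : ℕ) : ℤ) - ((i : ℕ) : ℤ)) ∈ (1 : Submodule A B)) :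
    ∑ σ : Equiv.Perm (Fin k), Equiv.Perm.sign σ •
      ∏ j, η (μ j + ((j : ℕ) : ℤ) - ((σ j : ℕ) : ℤ)) ∈ V ^ (k - 1) := by
  have h := Matrix.det_apply N
  rw [hdet] at h
  have e : ∑ σ : Equiv.Perm (Fin k), Equiv.Perm.sign σ •
      ∏ j, η (μ j + ((j : ℕ) : ℤ) - ((σ j : ℕ) : ℤ)) =
      - ∑ σ : Equiv.Perm (Fin k), Equiv.Perm.sign σ •
        (∏ j, N (σ j) j - ∏ j, η (μ j + ((j : ℕ) : ℤ) - ((σ j : ℕ) : ℤ))) := by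
    simp only [smul_sub, Finset.sum_sub_distrib]
    rw [← h]; simp
  rw [e]
  refine Submodule.neg_mem _ (Submodule.sum_mem _ fun σ _ => ?_)
  have := prod_sub_prod_mem_pow (A := A) Finset.univ V h1 (fun j => N (σ j) j)
    (fun j => η (μ j + ((j : ℕ) : ℤ) - ((σ j : ℕ) : ℤ))) (fun _ => hη _) (fun j => hN _ _)
  rw [Finset.card_univ, Fintype.card_fin] at this
  rcases Int.units_eq_one_or (Equiv.Perm.sign σ) with hs | hs <;> rw [hs]
  · simpa using this
  · rw [Units.neg_smul, one_smul]
    exact Submodule.neg_mem _ this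

lemma multiset_prod_mem_pow {κ : Type*} (V : Submodule A B) (η : κ → B) (hη : ∀ i, η i ∈ V)
    (ν : Multiset κ) : (ν.map η).prod ∈ V ^ ν.card := by
  induction ν using Multiset.induction_on with
  | empty => simpa using Submodule.one_le.1 (le_refl (1 : Submodule A B))
  | cons a t ih =>
    rw [Multiset.map_cons, Multiset.prod_cons, Multiset.card_cons, pow_succ']
    exact Submodule.mul_mem_mul (hη a) ih

/-- Rewriting with Hankel minors pushes the indices of a product of `m` factors apart until the
product has filtration degree less than `m`. -/
lemma multiset_prod_mem_pow_pred (V : Submodule A B) (h1 : 1 ≤ V) (η : ℤ → B)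
    (hη : ∀ i, η i ∈ V) (lo hi : ℤ) (hsupp : ∀ i, ¬ (lo ≤ i ∧ i ≤ hi) → η i = 0) {k m : ℕ}
    (hk : 1 ≤ k) (good : (Fin k → ℤ) → Prop)
    (hgood : ∀ μ, Monotone μ → good μ → ∃ N : Matrix (Fin k) (Fin k) B, N.det = 0 ∧
      ∀ i j, N i j - η (μ j + ((j : ℕ) : ℤ) - ((i : ℕ) : ℤ)) ∈ (1 : Submodule A B))
    (hsub : ∀ ν : Multiset ℤ, ν.card = m → (∀ x ∈ ν, lo ≤ x ∧ x ≤ hi) →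
      ∃ μ : Fin k → ℤ, Monotone μ ∧ good μ ∧ Multiset.map μ Finset.univ.val ≤ ν)
    (ν : Multiset ℤ) (hν : ν.card = m) : (ν.map η).prod ∈ V ^ (m - 1) := by
  by_cases hr : ∀ x ∈ ν, lo ≤ x ∧ x ≤ hi
  swap
  · push Not at hr
    obtain ⟨x, hx, hx'⟩ := hr
    have : (ν.map η).prod = 0 := by
      apply Multiset.prod_eq_zero
      rw [Multiset.mem_map]
      exact ⟨x, hx, hsupp x (by rintro ⟨a, b⟩; exact absurd (hx' a) (not_lt.2 b))⟩
    rw [this]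
    exact Submodule.zero_mem _
  obtain ⟨μ, hμ, hg, hle⟩ := hsub ν hν hr
  obtain ⟨N, hdet, hN⟩ := hgood μ hμ hg
  obtain ⟨ν', rfl⟩ := Multiset.le_iff_exists_add.1 hle
  have hcard : k + ν'.card = m := by simpa using hν
  have hsum := sum_perm_prod_mem_pow V h1 η hη μ N hdet hN
  rw [Fintype.sum_eq_add_sum_compl 1] at hsum
  have hrest := multiset_prod_mem_pow V η hη ν'
  have hmul := Submodule.mul_mem_mul hsum hrest
  rw [← pow_add, show k - 1 + ν'.card = m - 1 by omega, add_mul] at hmul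
  have key : ∀ σ ∈ ({1}ᶜ : Finset (Equiv.Perm (Fin k))),
      (∏ j, η (μ j + ((j : ℕ) : ℤ) - ((σ j : ℕ) : ℤ))) * (ν'.map η).prod ∈ V ^ (m - 1) := by
    intro σ hσ
    have hσ1 : σ ≠ 1 := by simpa using hσ
    have hE := sum_sq_lt_sum_sq_of_perm μ hμ σ hσ1
    have := multiset_prod_mem_pow_pred V h1 η hη lo hi hsupp hk good hgood hsub
      (Multiset.map (fun j : Fin k => μ j + ((j : ℕ) : ℤ) - ((σ j : ℕ) : ℤ)) Finset.univ.val + ν')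
      (by simpa using hcard)
    rw [Multiset.map_add, Multiset.prod_add, Multiset.map_map] at this
    exact this
  have hS : (∑ σ ∈ ({1}ᶜ : Finset (Equiv.Perm (Fin k))), Equiv.Perm.sign σ •
      ∏ j, η (μ j + ((j : ℕ) : ℤ) - ((σ j : ℕ) : ℤ))) * (ν'.map η).prod ∈ V ^ (m - 1) := by
    rw [Finset.sum_mul]
    refine Submodule.sum_mem _ fun σ hσ => ?_
    rcases Int.units_eq_one_or (Equiv.Perm.sign σ) with hs | hs <;> rw [hs]
    · simpa using key σ hσ
    · rw [Units.neg_smul, one_smul, neg_mul]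
      exact Submodule.neg_mem _ (key σ hσ)
  have := (Submodule.add_mem_iff_left _ hS).1 hmul
  rw [Multiset.map_add, Multiset.prod_add, Multiset.map_map]
  simp only [Equiv.Perm.sign_one, one_smul, Equiv.Perm.coe_one, id_eq, add_sub_cancel_right] at this
  exact this
termination_by ((m : ℤ) * (|lo| + |hi|) ^ 2 + 1 - (ν.map (· ^ 2)).sum).toNat
decreasing_by
  have hb : ∀ x ∈ (Multiset.map μ Finset.univ.val + ν').map (· ^ 2), x ≤ (|lo| + |hi|) ^ 2 := by
    intro x hx
    obtain ⟨y, hy, rfl⟩ := Multiset.mem_map.1 hx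
    obtain ⟨h1, h2⟩ := hr y hy
    apply sq_le_sq.2
    rw [abs_of_nonneg (by positivity : (0 : ℤ) ≤ |lo| + |hi|)]
    rw [abs_le]
    constructor
    · linarith [neg_abs_le lo, abs_nonneg hi]
    · linarith [le_abs_self hi, abs_nonneg lo]
  have hb2 := Multiset.sum_le_card_nsmul _ _ hb
  rw [Multiset.card_map, hν, nsmul_eq_mul] at hb2
  have hν2 : ν = Multiset.map μ Finset.univ.val + ν' := by assumption
  rw [hν2]
  simp only [Multiset.map_add, Multiset.sum_add, Multiset.map_map] at hb2 ⊢
  have e1 : (Multiset.map ((fun x => x ^ 2) ∘ μ) Finset.univ.val).sum = ∑ j, μ j ^ 2 := rfl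
  have e2 : (Multiset.map ((fun x : ℤ => x ^ 2) ∘ fun j : Fin k =>
    μ j + ((j : ℕ) : ℤ) - ((σ j : ℕ) : ℤ)) Finset.univ.val).sum =
     ∑ j, (μ j + ((j : ℕ) : ℤ) - ((σ j : ℕ) : ℤ)) ^ 2 := rfl
  rw [e2]
  rw [e1] at hb2 ⊢
  generalize (m : ℤ) * (|lo| + |hi|) ^ 2 = c at hb2 ⊢
  rw [Int.toNat_lt_toNat (by linarith)]
  linarith

lemma one_sup_pow_le (W : Submodule A B) (m : ℕ) :
    (1 ⊔ W) ^ (m + 1) ≤ (1 ⊔ W) ^ m ⊔ W ^ (m + 1) := by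
  induction m with
  | zero => simp
  | succ m ih =>
    calc (1 ⊔ W) ^ (m + 1 + 1) = (1 ⊔ W) ^ (m + 1) * (1 ⊔ W) := pow_succ _ _
      _ = (1 ⊔ W) ^ (m + 1) ⊔ (1 ⊔ W) ^ (m + 1) * W := by rw [Submodule.mul_sup, mul_one]
      _ ≤ (1 ⊔ W) ^ (m + 1) ⊔ ((1 ⊔ W) ^ m ⊔ W ^ (m + 1)) * W := by gcongr
      _ = (1 ⊔ W) ^ (m + 1) ⊔ ((1 ⊔ W) ^ m * W ⊔ W ^ (m + 1 + 1)) := by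
        rw [Submodule.sup_mul, pow_succ W (m + 1)]
      _ ≤ _ := by
        refine sup_le le_sup_left (sup_le (le_sup_of_le_left ?_) le_sup_right)
        rw [pow_succ]
        gcongr
        exact le_sup_right

/-- If products of `m + 1` generators have filtration degree at most `m`, then the filtration
is exhausted in degree `m`. -/
lemma one_sup_span_pow_eq_top {κ : Type*} (η : κ → B) (m : ℕ)
    (hgen : Algebra.adjoin A (Set.range η) = ⊤)
    (h : ∀ ν : Multiset κ, ν.card = m + 1 →
      (ν.map η).prod ∈ (1 ⊔ Submodule.span A (Set.range η)) ^ m) :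
    (1 ⊔ Submodule.span A (Set.range η)) ^ m = ⊤ := by
  set W := Submodule.span A (Set.range η) with hW
  set U := (1 ⊔ W) ^ m with hU
  have hWm : W ^ (m + 1) ≤ U := by
    rw [hW, Submodule.span_pow, Submodule.span_le]
    intro x hx
    obtain ⟨f, rfl⟩ := Set.mem_pow.1 hx
    choose g hg using fun i => (f i).2
    have := h (Multiset.map g Finset.univ.val) (by simp)
    rw [Multiset.map_map] at this
    have e : (List.ofFn fun i => (f i : B)).prod = ∏ i, η (g i) := by
      rw [List.prod_ofFn]; exact Finset.prod_congr rfl fun i _ => (hg i).symm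
    rw [e]
    exact this
  have hmul : (1 ⊔ W) * U ≤ U := by
    rw [hU, ← pow_succ']
    exact (one_sup_pow_le W m).trans (sup_le le_rfl hWm)
  have h1U : (1 : B) ∈ U := by
    have : (1 : Submodule A B) ^ m ≤ U := by rw [hU]; gcongr; exact le_sup_left
    rw [one_pow] at this
    exact Submodule.one_le.1 this
  rw [eq_top_iff]
  rintro b -
  have hb : b ∈ Algebra.adjoin A (Set.range η) := hgen ▸ Algebra.mem_top
  suffices ∀ u ∈ U, b * u ∈ U by simpa using this 1 h1U
  induction hb using Algebra.adjoin_induction with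
  | mem x hx =>
    intro u hu
    exact hmul (Submodule.mul_mem_mul (Submodule.mem_sup_right (Submodule.subset_span hx)) hu)
  | algebraMap r =>
    intro u hu
    rw [← Algebra.smul_def]
    exact U.smul_mem r hu
  | add x y _ _ hx hy =>
    intro u hu
    rw [add_mul]
    exact U.add_mem (hx u hu) (hy u hu)
  | mul x y _ _ hx hy =>
    intro u hu
    rw [mul_assoc]
    exact hx _ (hy u hu)

end Straightening

section Specialization

/-- Linear independence over a polynomial ring may be checked after specializing one variable,
provided its difference with the special value acts injectively. -/
lemma eq_zero_of_specialization {ι σ k T T' : Type*} [Fintype ι] [CommRing k] [CommRing T]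
    [CommRing T'] [Algebra k T] [Algebra k T'] (φ : MvPolynomial (Option σ) k →ₐ[k] T) (r : k)
    (hnzd : ∀ x, (φ (X none) - algebraMap k T r) * x = 0 → x = 0) (ψ : T →ₐ[k] T')
    (hψ : ψ (φ (X none)) = algebraMap k T' r) (e : ι → T)
    (h : ∀ g : ι → MvPolynomial σ k,
      ∑ i, ψ (φ (rename some (g i))) * ψ (e i) = 0 → g = 0)
    (f : ι → MvPolynomial (Option σ) k) (hf : ∑ i, φ (f i) * e i = 0) : f = 0 := by
  set E := optionEquivLeft k σ with hE
  set φ' : Polynomial (MvPolynomial σ k) →ₐ[k] T := φ.comp E.symm.toAlgHom with hφ'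
  have hX : φ' Polynomial.X = φ (X none) := by
    simp only [hφ', AlgHom.comp_apply]
    congr 1
    change E.symm Polynomial.X = _
    rw [AlgEquiv.symm_apply_eq, hE, optionEquivLeft_X_none]
  have hC : ∀ a, φ' (Polynomial.C a) = φ (rename some a) := by
    intro a
    simp only [hφ', AlgHom.comp_apply]
    congr 1
    change E.symm (Polynomial.C a) = _
    rw [AlgEquiv.symm_apply_eq]
    induction a using MvPolynomial.induction_on with
    | C a =>
      rw [rename_C, hE, optionEquivLeft_C]
    | add p q hp hq => simp only [map_add, hp, hq]
    | mul_X p i hp =>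
      simp only [map_mul, hp, rename_X]
      rw [hE, optionEquivLeft_X_some]
  have heval : ∀ p : Polynomial (MvPolynomial σ k),
      ψ (φ' p) = ψ (φ (rename some (p.eval (C r)))) := by
    intro p
    induction p using Polynomial.induction_on' with
    | add p q hp hq => simp only [map_add, Polynomial.eval_add, hp, hq]
    | monomial m a =>
      rw [← Polynomial.C_mul_X_pow_eq_monomial]
      simp only [map_mul, map_pow, hX, hC, hψ, Polynomial.eval_mul, Polynomial.eval_C,
        Polynomial.eval_pow, Polynomial.eval_X, rename_C]
      congr 2
      rw [← algebraMap_eq, AlgHom.commutes, AlgHom.commutes]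
  have key : ∀ (N : ℕ) (p : ι → Polynomial (MvPolynomial σ k)), (∀ i, (p i).degree < N) →
      ∑ i, φ' (p i) * e i = 0 → p = 0 := by
    intro N
    induction N with
    | zero =>
      intro p hp _
      funext i
      have := hp i
      by_contra hne
      have h0 : p i ≠ 0 := hne
      rw [Polynomial.degree_eq_natDegree h0, Nat.cast_zero] at this
      exact absurd this (not_lt.2 (by exact_mod_cast Nat.zero_le _))
    | succ N ih =>
      intro p hp hsum
      have h0 : (fun i => (p i).eval (C r)) = 0 := by
        apply h
        have := congrArg ψ hsum
        rw [map_sum, map_zero] at this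
        rw [← this]
        refine Finset.sum_congr rfl fun i _ => ?_
        rw [map_mul, heval]
      have hdiv : ∀ i, ∃ q, p i = (Polynomial.X - Polynomial.C (C r)) * q := fun i =>
        Polynomial.dvd_iff_isRoot.2 (congrFun h0 i)
      choose q hq using hdiv
      have hq0 : q = 0 := by
        apply ih
        · intro i
          rcases subsingleton_or_nontrivial (MvPolynomial σ k) with hs | hs
          · rw [Subsingleton.elim (q i) 0, Polynomial.degree_zero]
            exact WithBot.bot_lt_coe _
          by_cases hqi : q i = 0
          · rw [hqi, Polynomial.degree_zero]; exact WithBot.bot_lt_coe _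
          have h1 := hp i
          rw [hq i, (Polynomial.monic_X_sub_C _).degree_mul_comm,
            (Polynomial.monic_X_sub_C _).degree_mul, Polynomial.degree_X_sub_C,
            Polynomial.degree_eq_natDegree hqi] at h1
          rw [Polynomial.degree_eq_natDegree hqi]
          have h2 : (q i).natDegree + 1 < N + 1 := by exact_mod_cast h1
          exact_mod_cast Nat.lt_of_succ_lt_succ h2
        · apply hnzd
          rw [← hsum, Finset.mul_sum]
          refine Finset.sum_congr rfl fun i _ => ?_
          rw [hq i, map_mul, map_sub, hX, hC, rename_C, mul_assoc, ← algebraMap_eq, AlgHom.commutes]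
      funext i
      rw [hq i, hq0]
      simp
  have hE0 : (fun i => E (f i)) = 0 := by
    apply key (Finset.univ.sup (fun i => (E (f i)).natDegree) + 1)
    · intro i
      refine lt_of_le_of_lt Polynomial.degree_le_natDegree ?_
      have : (E (f i)).natDegree ≤ Finset.univ.sup (fun i => (E (f i)).natDegree) :=
        Finset.le_sup (f := fun i => (E (f i)).natDegree) (Finset.mem_univ i)
      exact_mod_cast Nat.lt_succ_of_le this
    · rw [← hf]
      refine Finset.sum_congr rfl fun i _ => ?_
      congr 1
      simp only [hφ', AlgHom.comp_apply]
      congr 1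
      exact E.symm_apply_apply _
  funext i
  have := congrFun hE0 i
  simpa using this

end Specialization

/-- The monomial with exponent `s` evaluated at `x`. -/
def symProd {κ B : Type*} [CommMonoid B] {k : ℕ} (x : κ → B) (s : Sym κ k) : B :=
  ((s : Multiset κ).map x).prod

lemma map_symProd {κ B B' F : Type*} [CommMonoid B] [CommMonoid B'] [FunLike F B B']
    [MonoidHomClass F B B'] (f : F) {k : ℕ} (x : κ → B) (s : Sym κ k) :
    f (symProd x s) = symProd (fun i => f (x i)) s := by
  rw [symProd, map_multiset_prod, Multiset.map_map]
  rfl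

lemma span_range_pow {κ A B : Type*} [CommRing A] [CommRing B] [Algebra A B] (x : κ → B) (k : ℕ) :
    Submodule.span A (Set.range x) ^ k =
      Submodule.span A (Set.range (symProd x : Sym κ k → B)) := by
  rw [Submodule.span_pow]
  congr 1
  ext b
  rw [Set.mem_pow]
  constructor
  · rintro ⟨f, rfl⟩
    choose g hg using fun i => (f i).2
    refine ⟨⟨Multiset.map g Finset.univ.val, by simp⟩, ?_⟩
    simp only [symProd, Sym.coe_mk, Multiset.map_map]
    rw [List.prod_ofFn]
    exact Finset.prod_congr rfl fun i _ => hg i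
  · rintro ⟨⟨s, hs⟩, rfl⟩
    induction s using Quotient.inductionOn with
    | h l =>
      have hl : l.length = k := by simpa using hs
      subst hl
      refine ⟨fun i => ⟨x (l.get i), Set.mem_range_self _⟩, ?_⟩
      simp [symProd]

lemma span_range_optionElim {κ A B : Type*} [CommRing A] [CommRing B] [Algebra A B] (y : κ → B) :
    Submodule.span A (Set.range (fun o : Option κ => o.elim 1 y)) =
      1 ⊔ Submodule.span A (Set.range y) := by
  rw [Submodule.one_eq_span, ← Submodule.span_union]
  congr 1
  ext b
  constructor
  · rintro ⟨o | o, rfl⟩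
    · exact Or.inl rfl
    · exact Or.inr ⟨o, rfl⟩
  · rintro (rfl | ⟨o, rfl⟩)
    · exact ⟨none, rfl⟩
    · exact ⟨some o, rfl⟩

section FieldIndependence

/-- The polynomial `∏ (1 + ρᵢ z)` over a finite set of indices. -/
noncomputable def revProd {ι K : Type*} [CommRing K] (ρ : ι → K) (t : Finset ι) : Polynomial K :=
  ∏ i ∈ t, (1 + Polynomial.C (ρ i) * Polynomial.X)

lemma revProd_natDegree_le {ι K : Type*} [CommRing K] (ρ : ι → K) (t : Finset ι) :
    (revProd ρ t).natDegree ≤ t.card := by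
  refine (Polynomial.natDegree_prod_le _ _).trans ?_
  rw [Finset.card_eq_sum_ones]
  refine Finset.sum_le_sum fun i _ => ?_
  compute_degree

lemma revProd_coeff_zero {ι K : Type*} [CommRing K] (ρ : ι → K) (t : Finset ι) :
    (revProd ρ t).coeff 0 = 1 := by
  simp [revProd, Polynomial.coeff_zero_prod]

lemma revProd_coeff {ι K : Type*} [CommRing K] (ρ : ι → K) (t : Finset ι) (j : ℕ) :
    (revProd ρ t).coeff j = ∑ u ∈ t.powersetCard j, ∏ i ∈ u, ρ i := by
  classical
  rw [revProd, Finset.prod_one_add, Polynomial.finsetSum_coeff]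
  simp_rw [Finset.prod_mul_distrib, Finset.prod_const, ← map_prod, Polynomial.coeff_C_mul_X_pow]
  rw [Finset.powersetCard_eq_filter, Finset.sum_filter]
  refine Finset.sum_congr rfl fun u _ => ?_
  simp only [eq_comm]

lemma revProd_eq_of_card_eq_three {ι K : Type*} [CommRing K] (ρ : ι → K) (t : Finset ι)
    (ht : t.card = 3) : revProd ρ t = 1 + Polynomial.C ((revProd ρ t).coeff 1) * Polynomial.X
      + Polynomial.C ((revProd ρ t).coeff 2) * Polynomial.X ^ 2
      + Polynomial.C ((revProd ρ t).coeff 3) * Polynomial.X ^ 3 := by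
  conv_lhs => rw [(revProd ρ t).as_sum_range' 4 (by have := revProd_natDegree_le ρ t; omega)]
  simp [Finset.sum_range_succ, revProd_coeff_zero, ← Polynomial.C_mul_X_pow_eq_monomial]

variable {N : ℕ} {K : Type*} [Field K] (ρ : Fin (N + 3) → K)

/-- Coefficients of the first form of the pair attached to a three element set of roots. -/
noncomputable def tripleA {N : ℕ} {K : Type*} [CommRing K] (ρ : Fin (N + 3) → K)
    (t : Finset (Fin (N + 3))) : Polynomial K :=
  (1 + Polynomial.C ((revProd ρ t).coeff 1) * Polynomial.X) * revProd ρ tᶜ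

/-- Coefficients of the second form of the pair attached to a three element set of roots. -/
noncomputable def tripleB {N : ℕ} {K : Type*} [CommRing K] (ρ : Fin (N + 3) → K)
    (t : Finset (Fin (N + 3))) : Polynomial K :=
  -((Polynomial.C ((revProd ρ t).coeff 2) +
    Polynomial.C ((revProd ρ t).coeff 3) * Polynomial.X) * revProd ρ tᶜ)

lemma tripleA_eq (t : Finset (Fin (N + 3))) (ht : t.card = 3) :
    tripleA ρ t = revProd ρ Finset.univ + Polynomial.X ^ 2 * tripleB ρ t := by
  have h : revProd ρ Finset.univ = revProd ρ t * revProd ρ tᶜ :=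
    (Finset.prod_mul_prod_compl t _).symm
  rw [h]
  conv_rhs => enter [1, 1]; rw [revProd_eq_of_card_eq_three ρ t ht]
  simp only [tripleA, tripleB]
  ring

lemma tripleA_natDegree_le (t : Finset (Fin (N + 3))) (ht : t.card = 3) :
    (tripleA ρ t).natDegree ≤ N + 1 := by
  have h1 : (revProd ρ tᶜ).natDegree ≤ N := by
    refine (revProd_natDegree_le ρ _).trans ?_
    rw [Finset.card_compl, Fintype.card_fin, ht]
    omega
  rw [tripleA, add_comm N 1]
  refine Polynomial.natDegree_mul_le_of_le ?_ h1
  compute_degree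

lemma tripleB_natDegree_le (t : Finset (Fin (N + 3))) (ht : t.card = 3) :
    (tripleB ρ t).natDegree ≤ N + 1 := by
  have h1 : (revProd ρ tᶜ).natDegree ≤ N := by
    refine (revProd_natDegree_le ρ _).trans ?_
    rw [Finset.card_compl, Fintype.card_fin, ht]
    omega
  rw [tripleB, Polynomial.natDegree_neg, add_comm N 1]
  refine Polynomial.natDegree_mul_le_of_le ?_ h1
  compute_degree

lemma tripleB_coeff_top (t : Finset (Fin (N + 3))) (ht : t.card = 3) {j : ℕ} (hj : N ≤ j) :
    (tripleB ρ t).coeff j = -(revProd ρ Finset.univ).coeff (j + 2) := by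
  have h1 := congrArg (fun p => p.coeff (j + 2)) (tripleA_eq ρ t ht)
  simp only [Polynomial.coeff_add, Polynomial.coeff_X_pow_mul] at h1
  rw [Polynomial.coeff_eq_zero_of_natDegree_lt
    (lt_of_le_of_lt (tripleA_natDegree_le ρ t ht) (by omega))] at h1
  linear_combination -h1

lemma tripleB_eval_eq_zero (hne : ∀ i, ρ i ≠ 0) (t : Finset (Fin (N + 3))) (k : Fin (N + 3))
    (hk : k ∉ t) : (tripleB ρ t).eval (-(ρ k)⁻¹) = 0 := by
  have : (revProd ρ tᶜ).eval (-(ρ k)⁻¹) = 0 := by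
    rw [revProd, Polynomial.eval_prod]
    refine Finset.prod_eq_zero (Finset.mem_compl.2 hk) ?_
    simp [hne k]
  simp [tripleB, this]

lemma tripleB_eval_ne_zero (hinj : Function.Injective ρ) (hne : ∀ i, ρ i ≠ 0)
    (hadd : ∀ i j, i ≠ j → ρ i + ρ j ≠ 0) (t : Finset (Fin (N + 3))) (ht : t.card = 3)
    (k : Fin (N + 3)) (hk : k ∈ t) : (tripleB ρ t).eval (-(ρ k)⁻¹) ≠ 0 := by
  have h0 : (revProd ρ tᶜ).eval (-(ρ k)⁻¹) ≠ 0 := by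
    rw [revProd, Polynomial.eval_prod]
    refine Finset.prod_ne_zero_iff.2 fun i hi h => ?_
    have hik : i ≠ k := fun h => Finset.mem_compl.1 hi (h ▸ hk)
    simp only [Polynomial.eval_add, Polynomial.eval_one, Polynomial.eval_mul, Polynomial.eval_C,
      Polynomial.eval_X] at h
    apply hik
    apply hinj
    have hk0 := hne k
    field_simp at h
    linear_combination -h
  obtain ⟨l, m, hkl, hkm, hlm, rfl⟩ : ∃ l m, k ≠ l ∧ k ≠ m ∧ l ≠ m ∧ t = {k, l, m} := by
    have : (t.erase k).card = 2 := by rw [Finset.card_erase_of_mem hk, ht]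
    obtain ⟨l, m, hlm, he⟩ := Finset.card_eq_two.1 this
    have hl : l ∈ t.erase k := by simp [he]
    have hm : m ∈ t.erase k := by simp [he]
    refine ⟨l, m, (Finset.ne_of_mem_erase hl).symm, (Finset.ne_of_mem_erase hm).symm, hlm, ?_⟩
    rw [← he, Finset.insert_erase hk]
  have hP : revProd ρ {k, l, m} = 1 + Polynomial.C (ρ k + ρ l + ρ m) * Polynomial.X +
      Polynomial.C (ρ k * ρ l + ρ k * ρ m + ρ l * ρ m) * Polynomial.X ^ 2 +
      Polynomial.C (ρ k * ρ l * ρ m) * Polynomial.X ^ 3 := by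
    rw [revProd, Finset.prod_insert (by simp [hkl, hkm]), Finset.prod_insert (by simp [hlm]),
      Finset.prod_singleton]
    simp only [map_add, map_mul]
    ring
  have c2 : (revProd ρ {k, l, m}).coeff 2 = ρ k * ρ l + ρ k * ρ m + ρ l * ρ m := by
    rw [hP]; simp [-map_add, -map_mul, Polynomial.coeff_one]
  have c3 : (revProd ρ {k, l, m}).coeff 3 = ρ k * ρ l * ρ m := by
    rw [hP]; simp [-map_add, -map_mul, Polynomial.coeff_one]
  rw [tripleB, c2, c3]
  simp only [Polynomial.eval_neg, Polynomial.eval_mul, Polynomial.eval_add, Polynomial.eval_C,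
    Polynomial.eval_X, neg_ne_zero]
  refine mul_ne_zero ?_ h0
  have : ρ k * ρ l + ρ k * ρ m + ρ l * ρ m + ρ k * ρ l * ρ m * -(ρ k)⁻¹ = ρ k * (ρ l + ρ m) := by
    have hk0 := hne k
    field_simp
    ring
  rw [this]
  exact mul_ne_zero (hne k) (hadd _ _ hlm)

/-- Monomials of degree at most three in the coefficients of the second form are linearly
independent as functions on the three element subsets of the roots. -/
lemma tripleB_independent (hinj : Function.Injective ρ) (hne : ∀ i, ρ i ≠ 0)
    (hadd : ∀ i j, i ≠ j → ρ i + ρ j ≠ 0) (v : Sym (Option (Fin N)) 3 → K)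
    (h : ∀ t : Finset (Fin (N + 3)), t.card = 3 →
      ∑ s, v s * symProd (fun o => o.elim 1 (fun j : Fin N => (tripleB ρ t).coeff j)) s = 0) :
    v = 0 := by
  classical
  let T3 := {t : Finset (Fin (N + 3)) // t.card = 3}
  let y : Fin N → (T3 → K) := fun j t => (tripleB ρ t.1).coeff j
  let x : Option (Fin N) → (T3 → K) := fun o => o.elim 1 y
  set V := Submodule.span K (Set.range x) with hV
  have hlam : ∀ k, (fun t : T3 => (tripleB ρ t.1).eval (-(ρ k)⁻¹)) ∈ V := by
    intro k
    have : (fun t : T3 => (tripleB ρ t.1).eval (-(ρ k)⁻¹)) =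
        ∑ j : Fin N, ((-(ρ k)⁻¹) ^ (j : ℕ)) • x (some j) +
        (-(revProd ρ Finset.univ).coeff (N + 2) * (-(ρ k)⁻¹) ^ N
          - (revProd ρ Finset.univ).coeff (N + 3) * (-(ρ k)⁻¹) ^ (N + 1)) • x none := by
      funext t
      rw [Polynomial.eval_eq_sum_range' (n := N + 2)
        (lt_of_le_of_lt (tripleB_natDegree_le ρ t.1 t.2) (by omega)), Finset.sum_range_succ,
        Finset.sum_range_succ, tripleB_coeff_top ρ t.1 t.2 le_rfl,
        tripleB_coeff_top ρ t.1 t.2 (Nat.le_succ N), Finset.sum_range]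
      simp only [x, y, Option.elim, Pi.add_apply, Finset.sum_apply, Pi.smul_apply, smul_eq_mul,
        Pi.one_apply, mul_one]
      rw [Finset.sum_congr rfl fun i _ => mul_comm _ _]
      ring
    rw [this]
    refine Submodule.add_mem _ (Submodule.sum_mem _ fun j _ => Submodule.smul_mem _ _ ?_)
      (Submodule.smul_mem _ _ ?_) <;> exact Submodule.subset_span (Set.mem_range_self _)
  have hsingle : ∀ t : T3, (Pi.single t 1 : T3 → K) ∈ V ^ 3 := by
    intro t
    have hprod : (∏ k ∈ t.1, fun t : T3 => (tripleB ρ t.1).eval (-(ρ k)⁻¹)) ∈ V ^ 3 := by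
      have := multiset_prod_mem_pow V _ hlam t.1.val
      rwa [Finset.card_val, t.2] at this
    have hc : (∏ k ∈ t.1, (tripleB ρ t.1).eval (-(ρ k)⁻¹)) ≠ 0 :=
      Finset.prod_ne_zero_iff.2 fun k hk => tripleB_eval_ne_zero ρ hinj hne hadd _ t.2 k hk
    convert Submodule.smul_mem _ (∏ k ∈ t.1, (tripleB ρ t.1).eval (-(ρ k)⁻¹))⁻¹ hprod using 1
    funext t'
    rw [Pi.smul_apply, Finset.prod_apply, smul_eq_mul]
    by_cases htt : t' = t
    · subst htt
      rw [Pi.single_eq_same, inv_mul_cancel₀ hc]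
    · rw [Pi.single_eq_of_ne htt]
      have : ∃ k ∈ t.1, k ∉ t'.1 := by
        by_contra! hcon
        exact htt (Subtype.ext (Finset.eq_of_subset_of_card_le hcon (by rw [t.2, t'.2])).symm)
      obtain ⟨k, hk, hk'⟩ := this
      rw [Finset.prod_eq_zero (f := fun k => (tripleB ρ t'.1).eval (-(ρ k)⁻¹)) hk
        (tripleB_eval_eq_zero ρ hne _ k hk'), mul_zero]
  have htop : Submodule.span K (Set.range (symProd x : Sym (Option (Fin N)) 3 → (T3 → K))) = ⊤ := by
    rw [← span_range_pow, eq_top_iff]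
    intro f _
    rw [pi_eq_sum_univ' f]
    exact Submodule.sum_mem _ fun t _ => Submodule.smul_mem _ _ (hsingle t)
  have hcard : Fintype.card (Sym (Option (Fin N)) 3) = Module.finrank K (T3 → K) := by
    rw [Module.finrank_fintype_fun_eq_card, Sym.card_sym_eq_choose]
    simp [T3]
  have hli := linearIndependent_of_top_le_span_of_card_eq_finrank htop.ge hcard
  rw [Fintype.linearIndependent_iff] at hli
  funext s
  refine hli v ?_ s
  funext t
  rw [Finset.sum_apply, Pi.zero_apply, ← h t.1 t.2]
  refine Finset.sum_congr rfl fun s _ => ?_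
  rw [Pi.smul_apply, smul_eq_mul]
  congr 1
  refine (map_symProd (Pi.evalRingHom (fun _ => K) t) x s).trans ?_
  congr 1
  funext o
  cases o <;> rfl

end FieldIndependence

section Relations

/-- The column of the `4 × (d-1)` matrix of two sequences at position `s`. -/
def quad {B : Type*} (a b : ℕ → B) (s : ℕ) : Fin 4 → B := ![a s, a (s + 1), b s, b (s + 1)]

/-- The coordinate ring of `W'_d` for `d = N + 4`. -/
def CoordRing (N : ℕ) : Type := MvPolynomial (Fin 2 × Fin (N + 4)) ℂ ⧸ minorsIdeal (N + 4)

noncomputable instance (N : ℕ) : CommRing (CoordRing N) :=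
  inferInstanceAs (CommRing (MvPolynomial (Fin 2 × Fin (N + 4)) ℂ ⧸ minorsIdeal (N + 4)))

noncomputable instance (N : ℕ) : Algebra ℂ (CoordRing N) :=
  inferInstanceAs (Algebra ℂ (MvPolynomial (Fin 2 × Fin (N + 4)) ℂ ⧸ minorsIdeal (N + 4)))

/-- The quotient map onto the coordinate ring. -/
noncomputable def CoordRing.mk (N : ℕ) :
    MvPolynomial (Fin 2 × Fin (N + 4)) ℂ →ₐ[ℂ] CoordRing N :=
  Ideal.Quotient.mkₐ ℂ (minorsIdeal (N + 4))

lemma CoordRing.mk_surjective (N : ℕ) : Function.Surjective (CoordRing.mk N) :=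
  Ideal.Quotient.mk_surjective

lemma CoordRing.mk_eq_zero {N : ℕ} {p} : CoordRing.mk N p = 0 ↔ p ∈ minorsIdeal (N + 4) :=
  Ideal.Quotient.eq_zero_iff_mem

/-- Sequences extending a family of coordinates by zero. -/
def extSeq {B : Type*} [Zero B] {N : ℕ} (x : Fin 2 × Fin (N + 4) → B) (r : Fin 2) (i : ℕ) : B :=
  if h : i < N + 4 then x (r, ⟨i, h⟩) else 0

lemma map_extSeq {B B' F : Type*} [Zero B] [Zero B'] [FunLike F B B'] [ZeroHomClass F B B']
    (f : F) {N : ℕ} (x : Fin 2 × Fin (N + 4) → B) (r : Fin 2) (i : ℕ) :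
    f (extSeq x r i) = extSeq (fun q => f (x q)) r i := by
  unfold extSeq
  split_ifs <;> simp

lemma genMat_apply {N : ℕ} (r : Fin 4) (s : Fin (N + 4 - 1)) :
    genMat (N + 4) r s = quad (extSeq X 0) (extSeq X 1) s r := by
  have := s.isLt
  have h0 : (s : ℕ) < N + 4 := by omega
  have h1 : (s : ℕ) + 1 < N + 4 := by omega
  fin_cases r <;> simp [genMat, quad, extSeq, h0, h1]

/-- The coordinate functions on `W'_d`, as two sequences. -/
noncomputable def CoordRing.coord (N : ℕ) (r : Fin 2) (i : ℕ) : CoordRing N :=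
  extSeq (fun q => CoordRing.mk N (X q)) r i

lemma CoordRing.coord_eq_zero {N : ℕ} {r : Fin 2} {i : ℕ} (h : N + 4 ≤ i) :
    CoordRing.coord N r i = 0 := by
  rw [CoordRing.coord, extSeq, dif_neg (by omega)]

lemma CoordRing.coord_eq_mk {N : ℕ} {r : Fin 2} (i : Fin (N + 4)) :
    CoordRing.coord N r i = CoordRing.mk N (X (r, i)) := by
  rw [CoordRing.coord, extSeq, dif_pos i.isLt]

lemma CoordRing.det_eq_zero {N : ℕ} (s : Fin 4 → ℕ) (hs : ∀ j, s j < N + 3) :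
    (Matrix.of fun r j => quad (CoordRing.coord N 0) (CoordRing.coord N 1) (s j) r).det = 0 := by
  have h : CoordRing.mk N ((genMat (N + 4)).submatrix id (fun j => ⟨s j, hs j⟩)).det = 0 :=
    CoordRing.mk_eq_zero.2 (Ideal.subset_span ⟨_, rfl⟩)
  rw [AlgHom.map_det] at h
  rw [← h]
  congr 1
  ext r j
  simp only [Matrix.of_apply, AlgHom.mapMatrix_apply, Matrix.map_apply, Matrix.submatrix_apply, id,
    genMat_apply]
  fin_cases r <;> simp [quad, CoordRing.coord, map_extSeq]

/-- Algebra maps out of the coordinate ring. -/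
lemma CoordRing.exists_lift {N : ℕ} {B : Type*} [CommRing B] [Algebra ℂ B]
    (x : Fin 2 × Fin (N + 4) → B)
    (h : ∀ s : Fin 4 → ℕ, (∀ j, s j < N + 3) →
      (Matrix.of fun r j => quad (extSeq x 0) (extSeq x 1) (s j) r).det = 0) :
    ∃ f : CoordRing N →ₐ[ℂ] B, ∀ p, f (CoordRing.mk N p) = aeval x p := by
  refine ⟨Ideal.Quotient.liftₐ (minorsIdeal (N + 4)) (aeval x) ?_, fun p => rfl⟩
  intro p hp
  have : minorsIdeal (N + 4) ≤ RingHom.ker (aeval x : _ →ₐ[ℂ] B) := by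
    rw [minorsIdeal, Ideal.span_le]
    rintro _ ⟨c, rfl⟩
    rw [SetLike.mem_coe, RingHom.mem_ker, AlgHom.map_det, ← h (fun j => c j) fun j => (c j).isLt]
    congr 1
    ext r j
    simp only [Matrix.of_apply, AlgHom.mapMatrix_apply, Matrix.map_apply, Matrix.submatrix_apply,
      id, genMat_apply]
    have : extSeq x = fun r i => aeval x (extSeq (N := N) (X : _ → MvPolynomial _ ℂ) r i) := by
      funext r i
      rw [map_extSeq]
      simp
    rw [this]
    fin_cases r <;> rfl
  exact this hp

lemma CoordRing.algHom_coord {N : ℕ} {B : Type*} [CommRing B] [Algebra ℂ B]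
    {x : Fin 2 × Fin (N + 4) → B} {f : CoordRing N →ₐ[ℂ] B}
    (hf : ∀ p, f (CoordRing.mk N p) = aeval x p) (r : Fin 2) (i : ℕ) :
    f (CoordRing.coord N r i) = extSeq x r i := by
  simp [CoordRing.coord, map_extSeq, hf]

/-- Generators of the polynomial subring over which the coordinate ring is free. -/
def params {B : Type*} [Sub B] {N : ℕ} (a b : ℕ → B) :
    Option (Option (Option (Option (Option (Fin (N + 3)))))) → B
  | none => a (N + 3)
  | some none => b 0
  | some (some none) => a 0
  | some (some (some none)) => a 1
  | some (some (some (some none))) => b (N + 3)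
  | some (some (some (some (some j)))) => a (j + 2) - b j

lemma map_params {B B' F : Type*} [Ring B] [Ring B'] [FunLike F B B'] [RingHomClass F B B']
    (f : F) {N : ℕ} (a b : ℕ → B) (o) :
    f (params (N := N) a b o) = params (fun i => f (a i)) (fun i => f (b i)) o := by
  rcases o with _ | _ | _ | _ | _ | j <;> simp [params]

end Relations

section Spanning

variable {A B : Type*} [CommRing A] [CommRing B] [Algebra A B] {N : ℕ}

/-- The subsequence `b₀, b₁, …` placed at positions `2, 3, …` of a window. -/
def window {B : Type*} [Zero B] (b : ℕ → B) (lo hi i : ℤ) : B :=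
  if lo ≤ i ∧ i ≤ hi then b (i - 2).toNat else 0

lemma window_natCast_add_two {B : Type*} [Zero B] (b : ℕ → B) (lo hi : ℤ) (j : ℕ) :
    window b lo hi (j + 2) = if lo ≤ (j : ℤ) + 2 ∧ (j : ℤ) + 2 ≤ hi then b j else 0 := by
  rw [window]
  congr 2
  omega

lemma quad_sub_window_mem {a b : ℕ → B} {lo hi : ℤ} (s : ℕ) (r : Fin 4)
    (ha : ∀ i : ℕ, i ≤ s + 1 → a i - window b lo hi i ∈ (1 : Submodule A B))
    (hb : ∀ i : ℕ, i ≤ s + 1 → b i - window b lo hi (i + 2) ∈ (1 : Submodule A B)) :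
    quad a b s r - window b lo hi (s + (r : ℕ)) ∈ (1 : Submodule A B) := by
  fin_cases r
  · simpa [quad] using ha s (by omega)
  · simpa [quad] using ha (s + 1) le_rfl
  · simpa [quad] using hb s (by omega)
  · have := hb (s + 1) le_rfl
    rw [show ((s + 1 : ℕ) : ℤ) + 2 = s + 3 by push_cast; ring] at this
    simpa [quad] using this

lemma exists_monotone_map_eq {α : Type*} [LinearOrder α] {k : ℕ} (ν : Multiset α)
    (hν : ν.card = k) : ∃ μ : Fin k → α, Monotone μ ∧ Multiset.map μ Finset.univ.val = ν := by
  obtain ⟨l, hl, rfl⟩ : ∃ l : List α, l.Pairwise (· ≤ ·) ∧ (l : Multiset α) = ν :=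
    ⟨ν.sort (· ≤ ·), Multiset.pairwise_sort _ _, Multiset.sort_eq _ _⟩
  obtain rfl : l.length = k := by simpa using hν
  refine ⟨l.get, fun i j hij => hl.rel_get_of_le hij, ?_⟩
  rw [Fin.univ_val_map, List.ofFn_get]

/-- The monomials of degree at most three in the remaining coordinates span an algebra on which
the four by four minors vanish. -/
lemma span_eq_top_of_minors {a b : ℕ → B}
    (hgen : Algebra.adjoin A (Set.range fun j : Fin N => b (j + 1)) = ⊤)
    (ha : ∀ i : ℕ, i ≤ N + 3 → a i - window b 3 (N + 2) i ∈ (1 : Submodule A B))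
    (hb : ∀ i : ℕ, i ≤ N + 3 → b i - window b 3 (N + 2) (i + 2) ∈ (1 : Submodule A B))
    (hdet : ∀ s : Fin 4 → ℕ, (∀ j, s j < N + 3) →
      (Matrix.of fun r j => quad a b (s j) r).det = 0) :
    Submodule.span A (Set.range (symProd (fun o : Option (Fin N) => o.elim 1 fun j => b (j + 1)) :
      Sym (Option (Fin N)) 3 → B)) = ⊤ := by
  rw [← span_range_pow, span_range_optionElim]
  refine one_sup_span_pow_eq_top _ 3 hgen fun ν hν => ?_
  set V : Submodule A B := 1 ⊔ Submodule.span A (Set.range fun j : Fin N => b (j + 1)) with hV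
  have h1 : (1 : Submodule A B) ≤ V := le_sup_left
  have hη : ∀ i, window b 3 (N + 2) i ∈ V := by
    intro i
    rw [window]
    split_ifs with h
    · refine (le_sup_right : _ ≤ V) (Submodule.subset_span ⟨⟨(i - 3).toNat, by omega⟩, ?_⟩)
      simp only
      congr 1
      omega
    · exact V.zero_mem
  have key := multiset_prod_mem_pow_pred V h1 (window b 3 (N + 2)) hη 3 (N + 2)
    (fun i hi => if_neg hi) (k := 4) (m := 4) (by norm_num)
    (fun μ => ∀ j, 3 ≤ μ j ∧ μ j ≤ N + 2)
    (by
      intro μ _ hμ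
      refine ⟨(Matrix.of fun r j => quad a b ((μ j + ((j : ℕ) : ℤ) - 3).toNat) r).submatrix
        Fin.revPerm id, ?_, ?_⟩
      · rw [Matrix.det_permute, hdet, mul_zero]
        intro j
        have := hμ j
        have := j.isLt
        omega
      · intro i j
        have h3 := hμ j
        have hj := j.isLt
        have hi := i.isLt
        have : ((Fin.revPerm i : Fin 4) : ℕ) = 4 - (i + 1) := Fin.val_rev i
        rw [Matrix.submatrix_apply, Matrix.of_apply]
        convert quad_sub_window_mem (A := A) (a := a) (b := b) (lo := 3) (hi := N + 2)
          ((μ j + ((j : ℕ) : ℤ) - 3).toNat) (Fin.revPerm i) (fun i hi => ha i (by omega))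
          (fun i hi => hb i (by omega)) using 3
        · rfl
        · omega)
    (by
      intro ν hν hmem
      obtain ⟨μ, hmono, hμν⟩ : ∃ μ : Fin 4 → ℤ, Monotone μ ∧
          Multiset.map μ Finset.univ.val = ν := exists_monotone_map_eq ν hν
      refine ⟨μ, hmono, fun j => hmem _ ?_, hμν.le⟩
      rw [← hμν]
      exact Multiset.mem_map_of_mem _ (Finset.mem_univ j))
    (ν.map fun j : Fin N => ((j : ℕ) : ℤ) + 3) (by simpa using hν)
  rw [Multiset.map_map] at key
  convert key using 2
  refine Multiset.map_congr rfl fun j _ => ?_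
  have := j.isLt
  rw [Function.comp, window, if_pos (by omega)]
  congr 1
  omega

end Spanning

section Chart

variable {B B' : Type*} [CommRing B] [CommRing B'] {N : ℕ}

/-- The first sequence of the pair with prescribed linear relation between its derivatives. -/
def chartA (g : Fin (N + 4) ⊕ Fin 4 → B) (i : ℕ) : B :=
  if h : i < N + 4 then g (Sum.inl ⟨i, h⟩) else 0

/-- The second sequence of the pair with prescribed linear relation between its derivatives. -/
def chartB (g : Fin (N + 4) ⊕ Fin 4 → B) : ℕ → B
  | 0 => g (Sum.inr 0)
  | i + 1 => -(g (Sum.inr 1) * chartA g i + g (Sum.inr 2) * chartA g (i + 1) +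
      g (Sum.inr 3) * chartB g i)

lemma map_chartA {F : Type*} [FunLike F B B'] [RingHomClass F B B'] (f : F)
    (g : Fin (N + 4) ⊕ Fin 4 → B) (i : ℕ) : f (chartA g i) = chartA (fun q => f (g q)) i := by
  unfold chartA
  split_ifs <;> simp

lemma map_chartB {F : Type*} [FunLike F B B'] [RingHomClass F B B'] (f : F)
    (g : Fin (N + 4) ⊕ Fin 4 → B) (i : ℕ) : f (chartB g i) = chartB (fun q => f (g q)) i := by
  induction i with
  | zero => simp [chartB]
  | succ i ih => simp [chartB, map_chartA, ih]

lemma chartA_of_le (g : Fin (N + 4) ⊕ Fin 4 → B) {i : ℕ} (hi : N + 4 ≤ i) : chartA g i = 0 := by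
  rw [chartA, dif_neg (by omega)]

/-- The pair with prescribed linear relation between its derivatives. -/
def chartPoint (g : Fin (N + 4) ⊕ Fin 4 → B) (q : Fin 2 × Fin (N + 4)) : B :=
  if q.1 = 0 then chartA g q.2 else chartB g q.2

lemma extSeq_chartPoint_zero (g : Fin (N + 4) ⊕ Fin 4 → B) (i : ℕ) :
    extSeq (chartPoint g) 0 i = chartA g i := by
  by_cases h : i < N + 4
  · rw [extSeq, dif_pos h, chartPoint, if_pos rfl]
  · rw [extSeq, dif_neg h, chartA_of_le _ (by omega)]

lemma extSeq_chartPoint_one (g : Fin (N + 4) ⊕ Fin 4 → B) {i : ℕ} (hi : i < N + 4) :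
    extSeq (chartPoint g) 1 i = chartB g i := by
  rw [extSeq, dif_pos hi, chartPoint, if_neg (by simp)]

lemma chart_quad_relation (g : Fin (N + 4) ⊕ Fin 4 → B) (s : ℕ) (hs : s < N + 3) :
    ∑ r, (![g (Sum.inr 1), g (Sum.inr 2), g (Sum.inr 3), 1] : Fin 4 → B) r *
      quad (extSeq (chartPoint g) 0) (extSeq (chartPoint g) 1) s r = 0 := by
  simp only [Fin.sum_univ_four, quad, extSeq_chartPoint_zero,
    extSeq_chartPoint_one g (show s < N + 4 by omega),
    extSeq_chartPoint_one g (show s + 1 < N + 4 by omega), chartB]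
  simp

lemma chart_det_eq_zero (g : Fin (N + 4) ⊕ Fin 4 → B) (s : Fin 4 → ℕ) (hs : ∀ j, s j < N + 3) :
    (Matrix.of fun r j =>
      quad (extSeq (chartPoint g) 0) (extSeq (chartPoint g) 1) (s j) r).det = 0 := by
  set M := (Matrix.of fun r j =>
    quad (extSeq (chartPoint g) 0) (extSeq (chartPoint g) 1) (s j) r) with hM
  set v : Fin 4 → B := ![g (Sum.inr 1), g (Sum.inr 2), g (Sum.inr 3), 1]
  have h0 : Matrix.vecMul v M = 0 := by
    funext j
    exact chart_quad_relation g (s j) (hs j)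
  have h1 : Matrix.vecMul v (M * M.adjugate) = 0 := by
    rw [← Matrix.vecMul_vecMul, h0, Matrix.zero_vecMul]
  rw [Matrix.mul_adjugate] at h1
  have h2 := congrFun h1 3
  rw [Matrix.vecMul_smul, Matrix.vecMul_one] at h2
  simpa [v] using h2

lemma exists_chart [Algebra ℂ B] (g : Fin (N + 4) ⊕ Fin 4 → B) :
    ∃ f : CoordRing N →ₐ[ℂ] B, (∀ i, f (CoordRing.coord N 0 i) = chartA g i) ∧
      ∀ i, i < N + 4 → f (CoordRing.coord N 1 i) = chartB g i := by
  obtain ⟨f, hf⟩ := CoordRing.exists_lift (chartPoint g) (chart_det_eq_zero g)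
  exact ⟨f, fun i => by rw [CoordRing.algHom_coord hf, extSeq_chartPoint_zero],
    fun i hi => by rw [CoordRing.algHom_coord hf, extSeq_chartPoint_one g hi]⟩

end Chart

section Independence

/-- The monomials of degree at most three in the second sequence are linearly independent over
the polynomials in some of the parameters. -/
def ChartIndep {B τ : Type*} [CommRing B] [Algebra ℂ B] {N : ℕ}
    (g : Fin (N + 4) ⊕ Fin 4 → B)
    (p : τ → Option (Option (Option (Option (Option (Fin (N + 3))))))) : Prop :=
  ∀ f : Sym (Option (Fin N)) 3 → MvPolynomial τ ℂ,
    ∑ s, aeval (fun o => params (chartA g) (chartB g) (p o)) (f s) *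
      symProd (fun o : Option (Fin N) => o.elim 1 fun j => chartB g (j + 1)) s = 0 → f = 0

lemma ChartIndep.of_specialization {B B' τ : Type*} [CommRing B] [Algebra ℂ B] [IsDomain B]
    [CommRing B'] [Algebra ℂ B'] {N : ℕ} {g : Fin (N + 4) ⊕ Fin 4 → B}
    {g' : Fin (N + 4) ⊕ Fin 4 → B'}
    {p : Option τ → Option (Option (Option (Option (Option (Fin (N + 3))))))}
    (ψ : B →ₐ[ℂ] B') (hψ : ∀ q, ψ (g q) = g' q) (r : ℂ)
    (hne : params (chartA g) (chartB g) (p none) ≠ algebraMap ℂ B r)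
    (hr : params (chartA g') (chartB g') (p none) = algebraMap ℂ B' r)
    (h : ChartIndep g' fun o => p (some o)) : ChartIndep g p := by
  have hA : ∀ i, ψ (chartA g i) = chartA g' i := fun i => by simp [map_chartA, hψ]
  have hB : ∀ i, ψ (chartB g i) = chartB g' i := fun i => by simp [map_chartB, hψ]
  intro f hf
  refine eq_zero_of_specialization (aeval fun o => params (chartA g) (chartB g) (p o)) r ?_ ψ ?_
    (symProd fun o : Option (Fin N) => o.elim 1 fun j => chartB g (j + 1)) ?_ f hf
  · intro x hx
    rw [aeval_X] at hx
    exact (mul_eq_zero.1 hx).resolve_left (sub_ne_zero.2 hne)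
  · rw [aeval_X, map_params]
    simp only [hA, hB, hr]
  · intro f' hf'
    apply h f'
    rw [← hf']
    refine Finset.sum_congr rfl fun s _ => ?_
    congr 1
    · rw [aeval_rename, ← AlgHom.comp_apply, comp_aeval]
      congr 2
      funext o
      simp only [Function.comp_apply]
      rw [map_params]
      simp only [hA, hB]
    · rw [map_symProd]
      congr 1
      funext o
      rcases o with _ | o
      · simp
      · simp [hB]

variable {N : ℕ} {K : Type*} [Field K]

/-- The chart coordinates of the pair attached to a three element set of roots. -/
noncomputable def tripleChart (ρ : Fin (N + 3) → K) (t : Finset (Fin (N + 3))) :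
    Fin (N + 4) ⊕ Fin 4 → K
  | Sum.inl i => (Polynomial.X * tripleA ρ t).coeff i
  | Sum.inr i => (![0, (revProd ρ t).coeff 3, (revProd ρ t).coeff 2,
      (revProd ρ t).coeff 1] : Fin 4 → K) i

lemma chartA_tripleChart (ρ : Fin (N + 3) → K) (t : Finset (Fin (N + 3))) (ht : t.card = 3)
    (i : ℕ) : chartA (tripleChart ρ t) i = (Polynomial.X * tripleA ρ t).coeff i := by
  by_cases hi : i < N + 4
  · rw [chartA, dif_pos hi, tripleChart]
  · rw [chartA_of_le _ (by omega)]
    symm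
    refine Polynomial.coeff_eq_zero_of_natDegree_lt ?_
    refine lt_of_le_of_lt (Polynomial.natDegree_mul_le_of_le Polynomial.natDegree_X_le
      (tripleA_natDegree_le ρ t ht)) (by omega)

lemma chartB_tripleChart (ρ : Fin (N + 3) → K) (t : Finset (Fin (N + 3))) (ht : t.card = 3)
    (i : ℕ) : chartB (tripleChart ρ t) i = (Polynomial.X * tripleB ρ t).coeff i := by
  induction i with
  | zero => simp [chartB, tripleChart]
  | succ i ih =>
    rw [chartB, ih, chartA_tripleChart ρ t ht, chartA_tripleChart ρ t ht]
    simp only [tripleChart]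
    have h : (Polynomial.C ((revProd ρ t).coeff 3) * Polynomial.X +
        Polynomial.C ((revProd ρ t).coeff 2)) * (Polynomial.X * tripleA ρ t) +
        (Polynomial.C ((revProd ρ t).coeff 1) * Polynomial.X + 1) *
        (Polynomial.X * tripleB ρ t) = 0 := by
      simp only [tripleA, tripleB]
      ring
    have h2 := congrArg (fun p => p.coeff (i + 1)) h
    simp only [add_mul, mul_assoc, Polynomial.coeff_add, Polynomial.coeff_C_mul,
      Polynomial.coeff_X_mul, one_mul, Polynomial.coeff_zero] at h2
    simp only [Matrix.cons_val, Polynomial.coeff_X_mul]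
    linear_combination -h2

lemma params_tripleChart (ρ : Fin (N + 3) → K) (t : Finset (Fin (N + 3))) (ht : t.card = 3)
    (j : Fin (N + 3)) : params (N := N) (chartA (tripleChart ρ t)) (chartB (tripleChart ρ t))
      (some (some (some (some (some j))))) = (revProd ρ Finset.univ).coeff (j + 1) := by
  simp only [params, chartA_tripleChart ρ t ht, chartB_tripleChart ρ t ht, tripleA_eq ρ t ht]
  rw [Polynomial.coeff_X_mul, Polynomial.coeff_add]
  rcases (j : ℕ) with _ | i
  · simp [Polynomial.coeff_X_pow_mul']
  · simp [Polynomial.coeff_X_pow_mul']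

lemma chartIndep_triple (N : ℕ) :
    ∃ (K : Type) (_ : Field K) (_ : Algebra ℂ K) (ρ : Fin (N + 3) → K),
      ChartIndep (fun q (t : {t : Finset (Fin (N + 3)) // t.card = 3}) => tripleChart ρ t.1 q)
        fun j : Fin (N + 3) => some (some (some (some (some j)))) := by
  let K := FractionRing (MvPolynomial (Fin (N + 3)) ℂ)
  let ρ : Fin (N + 3) → K := fun i => algebraMap (MvPolynomial (Fin (N + 3)) ℂ) K (X i)
  have hKinj : Function.Injective (algebraMap (MvPolynomial (Fin (N + 3)) ℂ) K) :=
    IsFractionRing.injective _ _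
  refine ⟨K, inferInstance, inferInstance, ρ, fun f hf => ?_⟩
  have hcoord : ∀ t : {t : Finset (Fin (N + 3)) // t.card = 3},
      ∑ s, aeval (fun j : Fin (N + 3) => (revProd ρ Finset.univ).coeff (j + 1)) (f s) *
        symProd (fun o : Option (Fin N) => o.elim 1 fun j => (tripleB ρ t.1).coeff j) s = 0 := by
    intro t
    have h := congrArg (Pi.evalAlgHom ℂ (fun _ => K) t) hf
    rw [map_sum, map_zero] at h
    rw [← h]
    refine Finset.sum_congr rfl fun s _ => ?_
    rw [map_mul, map_symProd, ← AlgHom.comp_apply, comp_aeval]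
    congr 2
    · congr 1
      funext j
      simp only
      rw [map_params, ← params_tripleChart ρ t.1 t.2 j]
      simp only [map_chartA, map_chartB]
      rfl
    · funext o
      rcases o with _ | j
      · simp
      · simp only [Option.elim, map_chartB]
        refine Eq.trans ?_ (chartB_tripleChart ρ t.1 t.2 (j + 1)).symm
        rw [Polynomial.coeff_X_mul]
  have hv := tripleB_independent ρ
    (fun i j hij => X_injective (hKinj hij))
    (fun i => by
      rw [Ne, map_eq_zero_iff _ hKinj]
      exact X_ne_zero i)
    (fun i j hij h => by
      rw [← map_add, map_eq_zero_iff _ hKinj] at h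
      have := congrArg (eval fun k => if k = i then (1 : ℂ) else 0) h
      simp [hij.symm] at this)
    _ (fun t ht => hcoord ⟨t, ht⟩)
  funext s
  have h1 := congrFun hv s
  have h2 : (fun j : Fin (N + 3) => (revProd ρ Finset.univ).coeff (j + 1)) =
      fun j : Fin (N + 3) => algebraMap (MvPolynomial (Fin (N + 3)) ℂ) K
        (esymm (Fin (N + 3)) ℂ (j + 1)) := by
    funext j
    rw [revProd_coeff, esymm, map_sum]
    exact Finset.sum_congr rfl fun u _ => (map_prod _ _ _).symm
  rw [h2, Pi.zero_apply] at h1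
  replace h1 : aeval (algebraMap (MvPolynomial (Fin (N + 3)) ℂ) K ∘
    fun j : Fin (N + 3) => esymm (Fin (N + 3)) ℂ (j + 1)) (f s) = 0 := h1
  rw [aeval_algebraMap_apply, map_eq_zero_iff _ hKinj] at h1
  have h3 := esymmAlgHom_fin_injective ℂ (le_refl (N + 3))
  rw [injective_iff_map_eq_zero] at h3
  apply h3
  rw [← Subalgebra.coe_eq_zero, esymmAlgHom_apply]
  exact h1

end Independence

section GenericChart

/-- The generic point of the chart with some of its coordinates specialized. -/
noncomputable def partialPoint {σ : Type*} [DecidableEq σ] (F : Finset σ) (c : σ → ℂ) (q : σ) :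
    MvPolynomial σ ℂ :=
  if q ∈ F then C (c q) else X q

lemma aeval_partialPoint {σ B : Type*} [DecidableEq σ] [CommRing B] [Algebra ℂ B] (F : Finset σ)
    (c : σ → ℂ) (g : σ → B) (h : ∀ q ∈ F, g q = algebraMap ℂ B (c q)) (q : σ) :
    aeval g (partialPoint F c q) = g q := by
  unfold partialPoint
  split_ifs with hq
  · rw [aeval_C, h q hq]
  · rw [aeval_X]

lemma aeval_partialPoint_insert {σ : Type*} [DecidableEq σ] (F : Finset σ) (v : σ)
    (c : σ → ℂ) (q : σ) :
    aeval (partialPoint {v} c) (partialPoint F c q) = partialPoint (insert v F) c q := by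
  by_cases hq : q ∈ F
  · simp [partialPoint, hq]
  · by_cases hv : q = v
    · subst hv
      simp [partialPoint, hq]
    · simp [partialPoint, hq, hv]

/-- The values at which coordinates of the chart are specialized. -/
def baseValue {N : ℕ} (q : Fin (N + 4) ⊕ Fin 4) : ℂ := if q = Sum.inl ⟨1, by omega⟩ then 1 else 0

lemma chartIndep_partialPoint {N : ℕ} {K : Type*} [Field K] [Algebra ℂ K] (ρ : Fin (N + 3) → K)
    (hρ : ChartIndep
      (fun q (t : {t : Finset (Fin (N + 3)) // t.card = 3}) => tripleChart ρ t.1 q)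
      fun j : Fin (N + 3) => some (some (some (some (some j)))))
    (F : Finset (Fin (N + 4) ⊕ Fin 4)) (hF : ∀ q ∈ F, q = Sum.inl ⟨1, by omega⟩ ∨
      q = Sum.inl ⟨0, by omega⟩ ∨ q = Sum.inr 0 ∨ q = Sum.inl ⟨N + 3, by omega⟩) :
    ChartIndep (partialPoint F baseValue)
      fun j : Option (Fin (N + 3)) => some (some (some (some j))) := by
  refine ChartIndep.of_specialization
    (aeval fun q (t : {t : Finset (Fin (N + 3)) // t.card = 3}) => tripleChart ρ t.1 q)
    (aeval_partialPoint _ _ _ ?_) 0 ?_ ?_ hρ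
  · have hA0 : ∀ t : Finset (Fin (N + 3)), (tripleA ρ t).coeff 0 = 1 := fun t => by
      simp [tripleA, Polynomial.mul_coeff_zero, revProd_coeff_zero]
    intro q hq
    funext t
    rcases hF q hq with rfl | rfl | rfl | rfl
    · simp [tripleChart, baseValue, hA0]
    · simp [tripleChart, baseValue]
    · simp [tripleChart, baseValue]
    · have := Polynomial.coeff_eq_zero_of_natDegree_lt
        (lt_of_le_of_lt (tripleA_natDegree_le ρ t.1 t.2) (show N + 1 < N + 2 by omega))
      simp [tripleChart, baseValue, Polynomial.coeff_X_mul, this]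
  · intro h
    let pt : Fin (N + 4) ⊕ Fin 4 → ℂ := fun q =>
      if q = Sum.inl ⟨1, by omega⟩ ∨ q = Sum.inl ⟨N + 2, by omega⟩ ∨ q = Sum.inr 1 then 1 else 0
    have := congrArg (aeval pt) h
    simp only [params, map_chartB] at this
    rw [map_zero, map_zero, funext (aeval_partialPoint _ baseValue pt ?_)] at this
    · simp [chartB, chartA, pt] at this
    · intro q hq
      rcases hF q hq with rfl | rfl | rfl | rfl <;> simp [pt, baseValue]
  · simp only [params]
    funext t
    have h1 : chartB (fun q (t : {t : Finset (Fin (N + 3)) // t.card = 3}) => tripleChart ρ t.1 q)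
        (N + 3) t = chartB (tripleChart ρ t.1) (N + 3) :=
      map_chartB (Pi.evalRingHom (fun _ => K) t)
        (fun q (t : {t : Finset (Fin (N + 3)) // t.card = 3}) => tripleChart ρ t.1 q) (N + 3)
    rw [h1, chartB_tripleChart ρ t.1 t.2, Polynomial.coeff_eq_zero_of_natDegree_lt]
    · simp
    · refine lt_of_le_of_lt (Polynomial.natDegree_mul_le_of_le Polynomial.natDegree_X_le
        (tripleB_natDegree_le ρ t.1 t.2)) (by omega)

lemma chartIndep_generic (N : ℕ) :
    ChartIndep (N := N) (X : _ → MvPolynomial (Fin (N + 4) ⊕ Fin 4) ℂ) fun o => o := by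
  classical
  let c : Fin (N + 4) ⊕ Fin 4 → ℂ := baseValue
  let u : Fin (N + 4) ⊕ Fin 4 := Sum.inl ⟨N + 3, by omega⟩
  let v : Fin (N + 4) ⊕ Fin 4 := Sum.inr 0
  let w : Fin (N + 4) ⊕ Fin 4 := Sum.inl ⟨0, by omega⟩
  let z : Fin (N + 4) ⊕ Fin 4 := Sum.inl ⟨1, by omega⟩
  have hX : (X : _ → MvPolynomial (Fin (N + 4) ⊕ Fin 4) ℂ) = partialPoint ∅ c := by
    funext q
    simp [partialPoint]
  have hA : ∀ (F : Finset _) i (hi : i < N + 4), chartA (partialPoint F c) i =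
      partialPoint F c (Sum.inl ⟨i, hi⟩) := fun F i hi => by rw [chartA, dif_pos hi]
  have hneX : ∀ (q) (r : ℂ), (X q : MvPolynomial (Fin (N + 4) ⊕ Fin 4) ℂ) ≠
      algebraMap ℂ _ r := fun q r h => by
    have := congrArg (eval fun _ => r + 1) h
    simp [algebraMap_eq] at this
  rw [hX]
  refine ChartIndep.of_specialization (aeval (partialPoint {u} c))
    (aeval_partialPoint_insert _ _ _) 0 ?_ ?_ ?_
  · simp only [params]
    rw [hA _ _ (by omega), partialPoint, if_neg (by simp)]
    exact hneX _ _
  · simp only [params]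
    rw [hA _ _ (by omega), partialPoint, if_pos (by simp [u])]
    simp [c, baseValue]
  refine ChartIndep.of_specialization (aeval (partialPoint {v} c))
    (aeval_partialPoint_insert _ _ _) 0 ?_ ?_ ?_
  · simp only [params, chartB]
    rw [partialPoint, if_neg (by simp [u])]
    exact hneX _ _
  · simp only [params, chartB]
    rw [partialPoint, if_pos (by simp [v])]
    simp [c, baseValue]
  refine ChartIndep.of_specialization (aeval (partialPoint {w} c))
    (aeval_partialPoint_insert _ _ _) 0 ?_ ?_ ?_
  · simp only [params]
    rw [hA _ _ (by omega), partialPoint, if_neg (by simp [u, v])]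
    exact hneX _ _
  · simp only [params]
    rw [hA _ _ (by omega), partialPoint, if_pos (by simp [w])]
    simp [c, baseValue]
  refine ChartIndep.of_specialization (aeval (partialPoint {z} c))
    (aeval_partialPoint_insert _ _ _) 1 ?_ ?_ ?_
  · simp only [params]
    rw [hA _ _ (by omega), partialPoint, if_neg (by simp [u, v, w])]
    exact hneX _ _
  · simp only [params]
    rw [hA _ _ (by omega), partialPoint, if_pos (by simp [z])]
    simp [c, baseValue]
  obtain ⟨K, _, _, ρ, hρ⟩ := chartIndep_triple N
  refine chartIndep_partialPoint ρ hρ _ ?_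
  intro q hq
  simpa [u, v, w, z] using hq

end GenericChart

section Freeness

/-- The polynomial ring over which the coordinate ring of `W'_d` is free. -/
abbrev ParamRing (N : ℕ) : Type :=
  MvPolynomial (Option (Option (Option (Option (Option (Fin (N + 3))))))) ℂ

/-- The inclusion of the polynomial ring of parameters into the coordinate ring. -/
noncomputable def paramMap (N : ℕ) : ParamRing N →ₐ[ℂ] CoordRing N :=
  aeval (params (CoordRing.coord N 0) (CoordRing.coord N 1))

noncomputable instance (N : ℕ) : Algebra (ParamRing N) (CoordRing N) :=
  (paramMap N).toAlgebra

instance (N : ℕ) : IsScalarTower ℂ (ParamRing N) (CoordRing N) :=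
  IsScalarTower.of_algebraMap_eq fun x => ((paramMap N).commutes x).symm

lemma algebraMap_paramRing_X (N : ℕ)
    (o : Option (Option (Option (Option (Option (Fin (N + 3))))))) :
    algebraMap (ParamRing N) (CoordRing N) (X o) =
    params (CoordRing.coord N 0) (CoordRing.coord N 1) o :=
  aeval_X _ _

lemma CoordRing.params_mem_one (N : ℕ)
    (o : Option (Option (Option (Option (Option (Fin (N + 3))))))) :
    params (CoordRing.coord N 0) (CoordRing.coord N 1) o ∈
    (1 : Submodule (ParamRing N) (CoordRing N)) :=
  Submodule.mem_one.2 ⟨X o, algebraMap_paramRing_X N o⟩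

lemma CoordRing.coord_zero_sub_window_mem (N i : ℕ) (hi : i ≤ N + 3) :
    CoordRing.coord N 0 i - window (CoordRing.coord N 1) 3 (N + 2) i ∈
      (1 : Submodule (ParamRing N) (CoordRing N)) := by
  have hp := CoordRing.params_mem_one N
  rcases i with _ | _ | i
  · simpa [window, params] using hp (some (some none))
  · simpa [window, params] using hp (some (some (some none)))
  · have hq := hp (some (some (some (some (some ⟨i, by omega⟩)))))
    simp only [params] at hq
    rw [show ((i + 1 + 1 : ℕ) : ℤ) = (i : ℤ) + 2 by push_cast; ring, window_natCast_add_two]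
    split_ifs with h
    · exact hq
    · rw [sub_zero]
      by_cases h0 : i = 0
      · subst h0
        simpa [params] using Submodule.add_mem _ hq (hp (some none))
      · obtain rfl : i = N + 1 := by omega
        exact hp none

lemma CoordRing.coord_one_sub_window_mem (N i : ℕ) (hi : i ≤ N + 3) :
    CoordRing.coord N 1 i - window (CoordRing.coord N 1) 3 (N + 2) (i + 2) ∈
      (1 : Submodule (ParamRing N) (CoordRing N)) := by
  have hp := CoordRing.params_mem_one N
  rw [window_natCast_add_two]
  split_ifs with h
  · rw [sub_self]
    exact Submodule.zero_mem _
  · rw [sub_zero]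
    by_cases h0 : i = 0
    · subst h0
      exact hp (some none)
    by_cases h3 : i = N + 3
    · subst h3
      exact hp (some (some (some (some none))))
    have hq := hp (some (some (some (some (some ⟨i, by omega⟩)))))
    simp only [params] at hq
    by_cases h1 : i = N + 1
    · subst h1
      simpa [params] using Submodule.sub_mem _ (hp none) hq
    · obtain rfl : i = N + 2 := by omega
      rw [CoordRing.coord_eq_zero (by omega), zero_sub] at hq
      simpa using Submodule.neg_mem _ hq

lemma CoordRing.adjoin_eq_top_of_coord_mem {N : ℕ} {A : Type*} [CommRing A] [Algebra ℂ A]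
    [Algebra A (CoordRing N)] [IsScalarTower ℂ A (CoordRing N)]
    (U : Subalgebra A (CoordRing N)) (h : ∀ r i, i ≤ N + 3 → CoordRing.coord N r i ∈ U) :
    U = ⊤ := by
  rw [eq_top_iff]
  intro x _
  obtain ⟨p, rfl⟩ := CoordRing.mk_surjective N x
  induction p using MvPolynomial.induction_on with
  | C c =>
    rw [← algebraMap_eq, AlgHom.commutes, IsScalarTower.algebraMap_apply ℂ A (CoordRing N)]
    exact U.algebraMap_mem _
  | add p q hp hq => rw [map_add]; exact U.add_mem (hp trivial) (hq trivial)
  | mul_X p q hp =>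
    rw [map_mul]
    refine U.mul_mem (hp trivial) ?_
    obtain ⟨r, i⟩ := q
    rw [← CoordRing.coord_eq_mk]
    exact h r i (by omega)

lemma CoordRing.adjoin_eq_top (N : ℕ) : Algebra.adjoin (ParamRing N)
    (Set.range fun j : Fin N => CoordRing.coord N 1 (j + 1)) = ⊤ := by
  apply CoordRing.adjoin_eq_top_of_coord_mem
  set U := Algebra.adjoin (ParamRing N) (Set.range fun j : Fin N => CoordRing.coord N 1 (j + 1))
  have h1 : ∀ x ∈ (1 : Submodule (ParamRing N) (CoordRing N)), x ∈ U := by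
    intro x hx
    obtain ⟨y, rfl⟩ := Submodule.mem_one.1 hx
    exact U.algebraMap_mem _
  have hw : ∀ i : ℤ, window (CoordRing.coord N 1) 3 (N + 2) i ∈ U := by
    intro i
    rw [window]
    split_ifs with h
    · refine Algebra.subset_adjoin ⟨⟨(i - 3).toNat, by omega⟩, ?_⟩
      simp only
      congr 1
      omega
    · exact U.zero_mem
  intro r i hi
  fin_cases r
  · simpa using U.add_mem (h1 _ (CoordRing.coord_zero_sub_window_mem N i hi)) (hw i)
  · simpa using U.add_mem (h1 _ (CoordRing.coord_one_sub_window_mem N i hi)) (hw (i + 2))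

/-- The family of monomials which is a basis of the coordinate ring. -/
noncomputable def coordMonomial (N : ℕ) : Sym (Option (Fin N)) 3 → CoordRing N :=
  symProd fun o : Option (Fin N) => o.elim 1 fun j => CoordRing.coord N 1 (j + 1)

lemma CoordRing.span_coordMonomial (N : ℕ) :
    Submodule.span (ParamRing N) (Set.range (coordMonomial N)) = ⊤ :=
  span_eq_top_of_minors (CoordRing.adjoin_eq_top N) (CoordRing.coord_zero_sub_window_mem N)
    (CoordRing.coord_one_sub_window_mem N) CoordRing.det_eq_zero

/-- The polynomial ring of the chart. -/
abbrev ChartRing (N : ℕ) : Type := MvPolynomial (Fin (N + 4) ⊕ Fin 4) ℂ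

lemma chart_algebraMap {N : ℕ} {B : Type*} [CommRing B] [Algebra ℂ B]
    {g : Fin (N + 4) ⊕ Fin 4 → B} (f : CoordRing N →ₐ[ℂ] B)
    (h0 : ∀ i, f (CoordRing.coord N 0 i) = chartA g i)
    (h1 : ∀ i, i < N + 4 → f (CoordRing.coord N 1 i) = chartB g i) (p : ParamRing N) :
    f (algebraMap (ParamRing N) (CoordRing N) p) =
      aeval (fun o => params (chartA g) (chartB g) o) p := by
  change f (aeval _ p) = _
  rw [← AlgHom.comp_apply, comp_aeval]
  congr 2
  funext o
  simp only [map_params]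
  rcases o with _ | _ | _ | _ | _ | j <;> simp only [params, h0] <;> rw [h1 _ (by omega)]

lemma chart_sum_eq_zero {N : ℕ} (f : CoordRing N →ₐ[ℂ] ChartRing N)
    (h0 : ∀ i, f (CoordRing.coord N 0 i) = chartA X i)
    (h1 : ∀ i, i < N + 4 → f (CoordRing.coord N 1 i) = chartB X i)
    (g : Sym (Option (Fin N)) 3 → ParamRing N)
    (hg : f (∑ s, g s • coordMonomial N s) = 0) : g = 0 := by
  apply chartIndep_generic N g
  rw [← hg, map_sum]
  refine Finset.sum_congr rfl fun s _ => ?_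
  rw [Algebra.smul_def, map_mul, chart_algebraMap f h0 h1, coordMonomial, map_symProd]
  congr 2
  funext o
  rcases o with _ | j
  · simp
  · simp only [Option.elim]
    rw [h1 _ (by omega)]

lemma CoordRing.linearIndependent_coordMonomial (N : ℕ) :
    LinearIndependent (ParamRing N) (coordMonomial N) := by
  obtain ⟨f, h0, h1⟩ := exists_chart (N := N) (X : _ → ChartRing N)
  rw [Fintype.linearIndependent_iff]
  intro g hg s
  exact congrFun (chart_sum_eq_zero f h0 h1 g (by rw [hg, map_zero])) s

/-- The monomial basis of the coordinate ring over its parameters. -/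
noncomputable def CoordRing.basis (N : ℕ) :
    Module.Basis (Sym (Option (Fin N)) 3) (ParamRing N) (CoordRing N) :=
  Module.Basis.mk (CoordRing.linearIndependent_coordMonomial N) (CoordRing.span_coordMonomial N).ge

instance (N : ℕ) : Module.Free (ParamRing N) (CoordRing N) :=
  Module.Free.of_basis (CoordRing.basis N)

instance (N : ℕ) : Module.Finite (ParamRing N) (CoordRing N) :=
  Module.Finite.of_basis (CoordRing.basis N)

lemma genericChart_injective {N : ℕ} (f : CoordRing N →ₐ[ℂ] ChartRing N)
    (h0 : ∀ i, f (CoordRing.coord N 0 i) = chartA X i)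
    (h1 : ∀ i, i < N + 4 → f (CoordRing.coord N 1 i) = chartB X i) : Function.Injective f := by
  rw [injective_iff_map_eq_zero]
  intro x hx
  have hs := (CoordRing.basis N).sum_repr x
  simp only [CoordRing.basis, Module.Basis.mk_apply] at hs
  rw [← hs] at hx ⊢
  have := chart_sum_eq_zero f h0 h1 _ hx
  exact Finset.sum_eq_zero fun s _ => by rw [show _ = _ from congrFun this s]; simp

instance (N : ℕ) : Nontrivial (CoordRing N) := by
  obtain ⟨f, -, -⟩ := exists_chart (N := N) (X : _ → ChartRing N)
  exact f.toRingHom.domain_nontrivial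

instance (N : ℕ) : IsDomain (CoordRing N) := by
  obtain ⟨f, h0, h1⟩ := exists_chart (N := N) (X : _ → ChartRing N)
  exact (genericChart_injective f h0 h1).isDomain f.toRingHom

instance (N : ℕ) : IsNoetherianRing (CoordRing N) :=
  inferInstanceAs (IsNoetherianRing (MvPolynomial (Fin 2 × Fin (N + 4)) ℂ ⧸ minorsIdeal (N + 4)))

end Freeness

section CohenMacaulay

/-- Replacement of the variables in `t` by constants. -/
noncomputable def partialEval {σ k : Type*} [CommRing k] (x : σ → k) (t : σ → Prop) :
    MvPolynomial σ k →ₐ[k] MvPolynomial σ k :=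
  open Classical in aeval fun i => if t i then C (x i) else X i

lemma mem_span_iff_partialEval_eq_zero {σ k : Type*} [CommRing k] (x : σ → k) (t : σ → Prop)
    (p : MvPolynomial σ k) :
    p ∈ Ideal.span {q | ∃ i, t i ∧ X i - C (x i) = q} ↔ partialEval x t p = 0 := by
  classical
  set I : Ideal (MvPolynomial σ k) := Ideal.span {q | ∃ i, t i ∧ X i - C (x i) = q}
  constructor
  · intro hp
    have : I ≤ RingHom.ker (partialEval x t) := by
      rw [Ideal.span_le]
      rintro _ ⟨i, hi, rfl⟩
      simp only [partialEval, SetLike.mem_coe, RingHom.mem_ker, map_sub, aeval_X, if_pos hi,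
        algHom_C, algebraMap_eq, sub_self]
    exact this hp
  · intro hp
    have key : (Ideal.Quotient.mkₐ k I).comp (partialEval x t) = Ideal.Quotient.mkₐ k I := by
      apply algHom_ext
      intro i
      simp only [partialEval, AlgHom.comp_apply, aeval_X]
      split_ifs with h
      · exact (Ideal.Quotient.mk_eq_mk_iff_sub_mem _ _).2
          (by rw [← neg_sub]; exact I.neg_mem (Ideal.subset_span ⟨i, h, rfl⟩))
      · rfl
    rw [← Ideal.Quotient.eq_zero_iff_mem]
    have := congrArg (· p) key
    simp only [AlgHom.comp_apply, hp, map_zero] at this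
    exact this.symm

lemma isWeaklyRegular_X_sub_C {σ k : Type*} [CommRing k] [IsDomain k] (x : σ → k)
    (l : List σ) (hl : l.Nodup) :
    RingTheory.Sequence.IsWeaklyRegular (MvPolynomial σ k) (l.map fun i => X i - C (x i)) := by
  classical
  refine ⟨fun n hn => ?_⟩
  rw [List.length_map] at hn
  rw [List.getElem_map, isSMulRegular_iff_right_eq_zero_of_smul]
  intro q
  obtain ⟨q, rfl⟩ := Submodule.mkQ_surjective _ q
  have hI : (Ideal.ofList ((l.map fun i => X i - C (x i)).take n) • ⊤ :
      Submodule (MvPolynomial σ k) (MvPolynomial σ k)) =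
      Ideal.span {q | ∃ i, i ∈ l.take n ∧ X i - C (x i) = q} := by
    rw [smul_eq_mul, Ideal.mul_top, ← List.map_take, Ideal.ofList]
    simp only [List.mem_map]
  rw [← map_smul]
  simp only [Submodule.mkQ_apply, Submodule.Quotient.mk_eq_zero]
  rw [hI, mem_span_iff_partialEval_eq_zero, mem_span_iff_partialEval_eq_zero, smul_eq_mul, map_mul]
  intro h
  refine (mul_eq_zero.1 h).resolve_left ?_
  have hmem : l[n] ∉ l.take n := by
    intro h
    obtain ⟨m, hm, he⟩ := List.mem_take_iff_getElem.1 h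
    have := (List.Nodup.getElem_inj_iff hl).1 he
    omega
  simp only [partialEval, map_sub, aeval_X, if_neg hmem, algHom_C, algebraMap_eq]
  intro h0
  have := congrArg (coeff (Finsupp.single l[n] 1)) h0
  have hne : (0 : σ →₀ ℕ) ≠ Finsupp.single l[n] 1 := (Finsupp.single_ne_zero.2 one_ne_zero).symm
  rw [coeff_sub, coeff_X, if_pos rfl, coeff_C, if_neg hne, coeff_zero, sub_zero] at this
  exact one_ne_zero this

lemma ringKrullDim_le_of_isIntegral (A S : Type*) [CommRing A] [CommRing S] [Algebra A S]
    [Algebra.IsIntegral A S] : ringKrullDim S ≤ ringKrullDim A := by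
  exact Order.krullDim_le_of_strictMono (PrimeSpectrum.comap (algebraMap A S))
    fun p q hpq => Ideal.IsIntegral.comap_lt_comap hpq

lemma ringKrullDim_paramRing (N : ℕ) : ringKrullDim (ParamRing N) = (N + 8 : ℕ) := by
  rw [MvPolynomial.ringKrullDim_of_isNoetherianRing, ringKrullDim_eq_zero_of_field]
  simp only [Nat.card_eq_fintype_card, Fintype.card_option, Fintype.card_fin, zero_add]

/-- The maximal ideals of an algebra which is free over a polynomial ring contain a regular
sequence of the expected length. -/
lemma exists_isRegular {k σ S : Type*} [Field k] [IsAlgClosed k] [Fintype σ] [CommRing S]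
    [Algebra (MvPolynomial σ k) S] [Module.Finite (MvPolynomial σ k) S]
    [Module.Free (MvPolynomial σ k) S] [IsNoetherianRing S] (P : Ideal S) [P.IsMaximal] :
    ∃ rs : List (Localization P.primeCompl),
      (∀ r ∈ rs, r ∈ IsLocalRing.maximalIdeal (Localization P.primeCompl)) ∧
      RingTheory.Sequence.IsRegular (Localization P.primeCompl) rs ∧
      rs.length = Fintype.card σ := by
  have hmax : (P.comap (algebraMap (MvPolynomial σ k) S)).IsMaximal :=
    Ideal.isMaximal_comap_of_isIntegral_of_isMaximal P
  obtain ⟨x, hx⟩ := isMaximal_iff_eq_vanishingIdeal_singleton.1 hmax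
  have hw := (isWeaklyRegular_X_sub_C x Finset.univ.toList (Finset.nodup_toList _)).of_flat (S := S)
  have hmem : ∀ r ∈ ((Finset.univ.toList : List σ).map fun i => X i - C (x i)).map
      (algebraMap (MvPolynomial σ k) S), r ∈ P := by
    intro r hr
    simp only [List.mem_map] at hr
    obtain ⟨_, ⟨i, -, rfl⟩, rfl⟩ := hr
    rw [← Ideal.mem_comap, hx, mem_vanishingIdeal_singleton_iff]
    simp
  refine ⟨_, ?_, hw.isRegular_of_isLocalization_of_mem (Localization P.primeCompl) P hmem, ?_⟩
  · intro r hr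
    obtain ⟨y, hy, rfl⟩ := List.mem_map.1 hr
    exact (IsLocalization.AtPrime.to_map_mem_maximal_iff _ P y).2 (hmem y hy)
  · simp

lemma ringKrullDim_coordRing_le (N : ℕ) : ringKrullDim (CoordRing N) ≤ (N + 8 : ℕ) :=
  (ringKrullDim_le_of_isIntegral (ParamRing N) (CoordRing N)).trans (ringKrullDim_paramRing N).le

lemma exists_isRegular_coordRing {N : ℕ} (P : Ideal (CoordRing N)) [P.IsMaximal] :
    ∃ rs : List (Localization P.primeCompl),
      (∀ r ∈ rs, r ∈ IsLocalRing.maximalIdeal (Localization P.primeCompl)) ∧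
      RingTheory.Sequence.IsRegular (Localization P.primeCompl) rs ∧ rs.length = N + 8 := by
  obtain ⟨rs, h1, h2, h3⟩ := exists_isRegular
    (σ := Option (Option (Option (Option (Option (Fin (N + 3))))))) (k := ℂ) P
  exact ⟨rs, h1, h2, by simpa using h3⟩

lemma ringKrullDim_localization_coordRing {N : ℕ} (P : Ideal (CoordRing N)) [P.IsMaximal] :
    ringKrullDim (Localization P.primeCompl) = (N + 8 : ℕ) := by
  apply le_antisymm
  · rw [IsLocalization.AtPrime.ringKrullDim_eq_height P]
    exact Ideal.height_le_ringKrullDim_of_isPrime.trans (ringKrullDim_coordRing_le N)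
  · obtain ⟨rs, -, h2, h3⟩ := exists_isRegular_coordRing P
    rw [← ringKrullDim_add_length_eq_ringKrullDim_of_isRegular rs h2, h3]
    have : Nontrivial (Localization P.primeCompl ⧸ Ideal.ofList rs) := by
      rw [Ideal.Quotient.nontrivial_iff]
      intro h
      exact h2.top_ne_smul (by rw [h]; simp)
    have := ringKrullDim_nonneg_of_nontrivial (R := Localization P.primeCompl ⧸ Ideal.ofList rs)
    exact le_add_of_nonneg_left this

lemma ringKrullDim_coordRing (N : ℕ) : ringKrullDim (CoordRing N) = (N + 8 : ℕ) := by
  refine le_antisymm (ringKrullDim_coordRing_le N) ?_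
  obtain ⟨P, hP⟩ := Ideal.exists_maximal (CoordRing N)
  rw [← ringKrullDim_localization_coordRing P, IsLocalization.AtPrime.ringKrullDim_eq_height P]
  exact Ideal.height_le_ringKrullDim_of_isPrime

lemma isCMLocalRing_localization {N : ℕ} (P : Ideal (CoordRing N)) [P.IsMaximal] :
    IsCMLocalRing (Localization P.primeCompl) := by
  obtain ⟨rs, h1, h2, h3⟩ := exists_isRegular_coordRing P
  refine ⟨rs, h1, h2, ?_⟩
  rw [h3, ringKrullDim_localization_coordRing]
  rfl

end CohenMacaulay

section Colon

/-- If a ring becomes equal to an integrally closed overring after inverting an element `δ`, then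
powers of `δ` clear the denominators of the elements integral over it. -/
lemma exists_dvd_pow_mul_of_isIntegral {S T : Type*} [CommRing S] [IsDomain S] [CommRing T]
    [IsDomain T] [IsIntegrallyClosed T] (ρ : S →+* T) (hρ : Function.Injective ρ) (δ : S)
    (hδ : ∀ t, ∃ k y, ρ δ ^ k * t = ρ y) {u v : S} (hv : v ≠ 0)
    (h : IsIntegral S (algebraMap S (FractionRing S) u / algebraMap S (FractionRing S) v)) :
    ∃ k, v ∣ δ ^ k * u := by
  have h1 := h.map_of_comp_eq ρ (IsFractionRing.map (K := FractionRing S) (L := FractionRing T) hρ)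
    (by ext x; simp [IsFractionRing.map])
  obtain ⟨t, ht⟩ := IsIntegrallyClosed.isIntegral_iff.1 h1
  have hv' : ρ v ≠ 0 := (map_ne_zero_iff ρ hρ).2 hv
  have ht2 : ρ u = t * ρ v := by
    apply IsFractionRing.injective T (FractionRing T)
    rw [map_mul, ht, map_div₀]
    simp only [IsFractionRing.map, IsLocalization.map_eq]
    rw [div_mul_cancel₀]
    exact (map_ne_zero_iff _ (IsFractionRing.injective T (FractionRing T))).2 hv'
  obtain ⟨k, y, hy⟩ := hδ t
  refine ⟨k, y, hρ ?_⟩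
  rw [map_mul, map_mul, map_pow, ht2, ← hy]
  ring

lemma exists_pow_mul_mem_range {N : ℕ} (f : CoordRing N →ₐ[ℂ] ChartRing N)
    (h0 : ∀ i, f (CoordRing.coord N 0 i) = chartA X i)
    (h1 : ∀ i, i < N + 4 → f (CoordRing.coord N 1 i) = chartB X i)
    (s : Fin 3 → ℕ) (hs : ∀ j, s j < N + 3) (σ : Equiv.Perm (Fin 3)) (t : ChartRing N) :
    ∃ k y, f (Matrix.of fun r j => quad (CoordRing.coord N 0) (CoordRing.coord N 1) (s j)
      (σ r).castSucc).det ^ k * t = f y := by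
  set M : Matrix (Fin 3) (Fin 3) (CoordRing N) := Matrix.of fun r j =>
    quad (CoordRing.coord N 0) (CoordRing.coord N 1) (s j) (σ r).castSucc with hM
  have hq : ∀ j r, f (quad (CoordRing.coord N 0) (CoordRing.coord N 1) (s j) r) =
      quad (extSeq (chartPoint (X : _ → ChartRing N)) 0) (extSeq (chartPoint X) 1) (s j) r := by
    intro j r
    have := hs j
    fin_cases r <;> simp [quad, h0, h1 _ (show s j < N + 4 by omega),
      h1 _ (show s j + 1 < N + 4 by omega), extSeq_chartPoint_zero,
      extSeq_chartPoint_one _ (show s j < N + 4 by omega),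
      extSeq_chartPoint_one _ (show s j + 1 < N + 4 by omega)]
  set c : Fin 3 → ChartRing N := fun r => X (Sum.inr (σ r).succ) with hc
  set w : Fin 3 → CoordRing N := fun j =>
    -quad (CoordRing.coord N 0) (CoordRing.coord N 1) (s j) 3 with hw
  have hrel : Matrix.vecMul c (f.mapMatrix M) = fun j => f (w j) := by
    funext j
    have hr := chart_quad_relation (X : _ → ChartRing N) (s j) (hs j)
    rw [Fin.sum_univ_castSucc, ← Equiv.sum_comp σ] at hr
    simp only [Matrix.vecMul, dotProduct, AlgHom.mapMatrix_apply, Matrix.map_apply, hM,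
      Matrix.of_apply, hq, hw, map_neg, hc]
    have h3 : (![X (Sum.inr 1), X (Sum.inr 2), X (Sum.inr 3), 1] : Fin 4 → ChartRing N)
        (Fin.last 3) = 1 := rfl
    have hi : ∀ i : Fin 3, (![X (Sum.inr 1), X (Sum.inr 2), X (Sum.inr 3), 1] :
        Fin 4 → ChartRing N) i.castSucc = X (Sum.inr i.succ) := by
      intro i
      fin_cases i <;> rfl
    rw [h3, one_mul] at hr
    simp only [hi] at hr
    exact eq_neg_of_add_eq_zero_left hr
  have hcr : ∀ r, f M.det * c r = f (Matrix.vecMul w M.adjugate r) := by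
    intro r
    have h2 : Matrix.vecMul c (f.mapMatrix M * (f.mapMatrix M).adjugate) =
        Matrix.vecMul (fun j => f (w j)) (f.mapMatrix M).adjugate := by
      rw [← Matrix.vecMul_vecMul, hrel]
    rw [Matrix.mul_adjugate, Matrix.vecMul_smul, Matrix.vecMul_one, ← AlgHom.map_det] at h2
    have h3 := congrFun h2 r
    rw [Pi.smul_apply, smul_eq_mul] at h3
    rw [h3, ← AlgHom.map_adjugate]
    simp [Matrix.vecMul, dotProduct]
  have hX : ∀ q, ∃ k y, f M.det ^ k * X q = f y := by
    rintro (i | i)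
    · exact ⟨0, CoordRing.coord N 0 i, by rw [h0, chartA, dif_pos i.isLt]; simp⟩
    · refine Fin.cases ?_ (fun i => ?_) i
      · exact ⟨0, CoordRing.coord N 1 0, by rw [h1 _ (by omega), chartB]; simp⟩
      · exact ⟨1, _, by simpa [hc] using hcr (σ.symm i)⟩
  induction t using MvPolynomial.induction_on with
  | C z => exact ⟨0, algebraMap ℂ _ z, by simp [algebraMap_eq]⟩
  | add p q hp hq =>
    obtain ⟨k, y, hy⟩ := hp
    obtain ⟨l, z, hz⟩ := hq
    refine ⟨k + l, M.det ^ l * y + M.det ^ k * z, ?_⟩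
    simp only [map_add, map_mul, map_pow, ← hy, ← hz]
    ring
  | mul_X p q hp =>
    obtain ⟨k, y, hy⟩ := hp
    obtain ⟨l, z, hz⟩ := hX q
    refine ⟨k + l, y * z, ?_⟩
    rw [map_mul, ← hy, ← hz]
    ring

/-- The involution of the coordinate ring exchanging the two forms and the two variables. -/
lemma CoordRing.exists_reversal (N : ℕ) : ∃ ω : CoordRing N →ₐ[ℂ] CoordRing N,
    Function.Bijective ω ∧ ∀ s < N + 3, ∀ r,
      ω (quad (CoordRing.coord N 0) (CoordRing.coord N 1) s r) =
        quad (CoordRing.coord N 0) (CoordRing.coord N 1) (N + 2 - s) r.rev := by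
  set x : Fin 2 × Fin (N + 4) → CoordRing N := fun q => CoordRing.coord N q.1.rev (N + 3 - q.2)
  have hx : ∀ r i, i < N + 4 → extSeq x r i = CoordRing.coord N r.rev (N + 3 - i) := by
    intro r i hi
    rw [extSeq, dif_pos hi]
  have hquad : ∀ s < N + 3, ∀ r, quad (extSeq x 0) (extSeq x 1) s r =
      quad (CoordRing.coord N 0) (CoordRing.coord N 1) (N + 2 - s) r.rev := by
    intro s hs r
    have e : N + 2 - s + 1 = N + 3 - s := by omega
    fin_cases r <;> simp [quad, hx _ s (by omega), hx _ (s + 1) (by omega), Fin.rev, e]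
  obtain ⟨ω, hω⟩ := CoordRing.exists_lift x (by
    intro s hs
    have h := CoordRing.det_eq_zero (N := N) (fun j => N + 2 - s j) (fun j => by omega)
    have h2 := Matrix.det_permute Fin.revPerm (Matrix.of fun r j =>
      quad (CoordRing.coord N 0) (CoordRing.coord N 1) (N + 2 - s j) r)
    rw [h, mul_zero] at h2
    rw [← h2]
    congr 1
    ext r j
    exact hquad (s j) (hs j) r)
  have hcoord : ∀ r i, i < N + 4 →
      ω (CoordRing.coord N r i) = CoordRing.coord N r.rev (N + 3 - i) := fun r i hi => by
    rw [CoordRing.algHom_coord hω, hx r i hi]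
  have hinv : ∀ y, ω (ω y) = y := by
    intro y
    obtain ⟨p, rfl⟩ := CoordRing.mk_surjective N y
    change ((ω.comp ω).comp (CoordRing.mk N)) p = CoordRing.mk N p
    congr 1
    apply algHom_ext
    rintro ⟨r, i⟩
    simp only [AlgHom.comp_apply]
    rw [← CoordRing.coord_eq_mk, hcoord _ _ i.isLt, hcoord _ _ (by omega), Fin.rev_rev]
    congr 1
    omega
  refine ⟨ω, Function.Involutive.bijective hinv, fun s hs r => ?_⟩
  rw [← hquad s hs r]
  fin_cases r <;> simp [quad, CoordRing.algHom_coord hω]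

lemma CoordRing.exists_dvd_pow_minor_mul {N : ℕ} {u v : CoordRing N} (hv : v ≠ 0)
    (h : IsIntegral (CoordRing N) (algebraMap _ (FractionRing (CoordRing N)) u /
      algebraMap _ (FractionRing (CoordRing N)) v))
    (s : Fin 3 → ℕ) (hs : ∀ j, s j < N + 3) (e : Fin 3 → Fin 4)
    (he : e = (fun i => i.rev.castSucc) ∨ e = fun i => i.rev.succ) :
    ∃ k, v ∣ (Matrix.of fun i j =>
      quad (CoordRing.coord N 0) (CoordRing.coord N 1) (s j) (e i)).det ^ k * u := by
  obtain ⟨f, h0, h1⟩ := exists_chart (N := N) (X : _ → ChartRing N)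
  have hf := genericChart_injective f h0 h1
  rcases he with rfl | rfl
  · exact exists_dvd_pow_mul_of_isIntegral f.toRingHom hf _
      (exists_pow_mul_mem_range f h0 h1 s hs Fin.revPerm) hv h
  · obtain ⟨ω, hω, hωq⟩ := CoordRing.exists_reversal N
    refine exists_dvd_pow_mul_of_isIntegral (f.comp ω).toRingHom (hf.comp hω.1) _ ?_ hv h
    intro t
    obtain ⟨k, y, hy⟩ := exists_pow_mul_mem_range f h0 h1 (fun j => N + 2 - s j)
      (fun j => by omega) 1 t
    obtain ⟨z, rfl⟩ := hω.2 y
    refine ⟨k, z, ?_⟩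
    refine Eq.trans ?_ hy
    congr 2
    change f (ω _) = _
    rw [AlgHom.map_det]
    congr 2
    ext i j
    simp only [AlgHom.mapMatrix_apply, Matrix.map_apply, Matrix.of_apply, hωq _ (hs j)]
    congr 1
    fin_cases i <;> rfl

end Colon

section Normality

/-- The polynomial ring over which the locus of pairs with two relations between their
derivatives is finite. -/
abbrev BaseRing (N : ℕ) : Type := MvPolynomial (Option (Option (Option (Fin (N + 3))))) ℂ

/-- The inclusion of polynomial rings. -/
noncomputable def baseMap (N : ℕ) : BaseRing N →ₐ[ℂ] ParamRing N :=
  rename fun o => some (some o)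

noncomputable instance (N : ℕ) : Algebra (BaseRing N) (CoordRing N) :=
  ((algebraMap (ParamRing N) (CoordRing N)).comp (baseMap N).toRingHom).toAlgebra

lemma algebraMap_baseRing {N : ℕ} (p : BaseRing N) : algebraMap (BaseRing N) (CoordRing N) p =
    algebraMap (ParamRing N) (CoordRing N) (baseMap N p) :=
  rfl

instance (N : ℕ) : IsScalarTower ℂ (BaseRing N) (CoordRing N) :=
  IsScalarTower.of_algebraMap_eq fun x => by
    rw [algebraMap_baseRing, AlgHom.commutes, ← IsScalarTower.algebraMap_apply]

lemma algebraMap_baseRing_X (N : ℕ) (o : Option (Option (Option (Fin (N + 3))))) :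
    algebraMap (BaseRing N) (CoordRing N) (X o) =
      params (CoordRing.coord N 0) (CoordRing.coord N 1) (some (some o)) := by
  rw [algebraMap_baseRing, baseMap, rename_X, algebraMap_paramRing_X]

/-- The ideal generated by the minors of the first three rows and of the last three rows. -/
noncomputable def tripleMinors (N : ℕ) : Ideal (CoordRing N) :=
  Ideal.span {δ | ∃ (s : Fin 3 → ℕ) (e : Fin 3 → Fin 4), (∀ j, s j < N + 3) ∧
    (e = (fun i => i.rev.castSucc) ∨ e = fun i => i.rev.succ) ∧
    δ = (Matrix.of fun i j =>
      quad (CoordRing.coord N 0) (CoordRing.coord N 1) (s j) (e i)).det}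

lemma exists_three_le {n : ℤ} (ν : Multiset ℤ) (hν : ν.card = 5) :
    ∃ μ : Fin 3 → ℤ, Monotone μ ∧ ((∀ j, μ j < n) ∨ ∀ j, ¬ μ j < n) ∧
      Multiset.map μ Finset.univ.val ≤ ν := by
  have key : ∀ p : ℤ → Prop, ∀ _ : DecidablePred p, 3 ≤ (ν.filter p).card →
      ∃ μ : Fin 3 → ℤ, Monotone μ ∧ (∀ j, p (μ j)) ∧ Multiset.map μ Finset.univ.val ≤ ν := by
    intro p _ hp
    obtain ⟨t, ht⟩ := Multiset.card_pos_iff_exists_mem.1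
      ((Nat.choose_pos hp).trans_eq (Multiset.card_powersetCard 3 (ν.filter p)).symm)
    obtain ⟨ht, hcard⟩ := Multiset.mem_powersetCard.1 ht
    obtain ⟨μ, hmono, rfl⟩ := exists_monotone_map_eq t hcard
    refine ⟨μ, hmono, fun j => ?_, ht.trans (Multiset.filter_le _ _)⟩
    exact (Multiset.mem_filter.1 (Multiset.subset_of_le ht
      (Multiset.mem_map_of_mem _ (Finset.mem_univ j)))).2
  have hsum := congrArg Multiset.card (Multiset.filter_add_not (fun x => x < n) ν)
  rw [Multiset.card_add, hν] at hsum
  by_cases h : 3 ≤ (ν.filter fun x => x < n).card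
  · obtain ⟨μ, h1, h2, h3⟩ := key _ _ h
    exact ⟨μ, h1, Or.inl h2, h3⟩
  · obtain ⟨μ, h1, h2, h3⟩ := key (fun x => ¬ x < n) _ (by omega)
    exact ⟨μ, h1, Or.inr h2, h3⟩

/-- An algebra in which the three by three minors of the first and of the last three rows vanish
is finite over the smaller polynomial ring. -/
lemma finite_of_triple_minors {A B : Type*} [CommRing A] [CommRing B] [Algebra A B] {N : ℕ}
    {a b : ℕ → B}
    (hgen : Algebra.adjoin A (Set.range fun j : Fin (N + 2) => b j) = ⊤)
    (ha : ∀ i : ℕ, i ≤ N + 3 → a i - window b 2 (N + 3) i ∈ (1 : Submodule A B))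
    (hb : ∀ i : ℕ, i ≤ N + 3 → b i - window b 2 (N + 3) (i + 2) ∈ (1 : Submodule A B))
    (hdet : ∀ (s : Fin 3 → ℕ) (e : Fin 3 → Fin 4), (∀ j, s j < N + 3) →
      (e = (fun i => i.rev.castSucc) ∨ e = fun i => i.rev.succ) →
      (Matrix.of fun i j => quad a b (s j) (e i)).det = 0) : Module.Finite A B := by
  set V : Submodule A B := 1 ⊔ Submodule.span A (Set.range fun j : Fin (N + 2) => b j) with hV
  have h1 : (1 : Submodule A B) ≤ V := le_sup_left
  have hη : ∀ i, window b 2 (N + 3) i ∈ V := by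
    intro i
    rw [window]
    split_ifs with h
    · exact (le_sup_right : _ ≤ V) (Submodule.subset_span ⟨⟨(i - 2).toNat, by omega⟩, rfl⟩)
    · exact V.zero_mem
  have hentry : ∀ (s : ℕ), s < N + 3 → ∀ r : Fin 4,
      quad a b s r - window b 2 (N + 3) (s + (r : ℕ)) ∈ (1 : Submodule A B) := fun s hs r =>
    quad_sub_window_mem s r (fun i hi => ha i (by omega)) fun i hi => hb i (by omega)
  have htop : V ^ 4 = ⊤ := by
    refine one_sup_span_pow_eq_top _ 4 hgen fun ν hν => ?_
    have key := multiset_prod_mem_pow_pred V h1 (window b 2 (N + 3)) hη 2 (N + 3)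
      (fun i hi => if_neg hi) (k := 3) (m := 5) (by norm_num)
      (fun μ => (∀ j, 2 ≤ μ j ∧ μ j ≤ N + 2) ∨ ∀ j, 3 ≤ μ j ∧ μ j ≤ N + 3)
      (by
        rintro μ - (hμ | hμ)
        · refine ⟨_, hdet (fun j => (μ j + ((j : ℕ) : ℤ) - 2).toNat) _ (fun j => ?_) (Or.inl rfl),
            fun i j => ?_⟩
          · have := hμ j
            omega
          · have h3 := hμ j
            have hr : ((i.rev.castSucc : Fin 4) : ℕ) = 3 - (i + 1) := Fin.val_rev i
            rw [Matrix.of_apply]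
            convert hentry (μ j + ((j : ℕ) : ℤ) - 2).toNat (by omega) i.rev.castSucc using 3
            omega
        · refine ⟨_, hdet (fun j => (μ j + ((j : ℕ) : ℤ) - 3).toNat) _ (fun j => ?_) (Or.inr rfl),
            fun i j => ?_⟩
          · have := hμ j
            omega
          · have h3 := hμ j
            have hr : ((i.rev.succ : Fin 4) : ℕ) = 3 - (i + 1) + 1 :=
              congrArg (· + 1) (Fin.val_rev i)
            rw [Matrix.of_apply]
            convert hentry (μ j + ((j : ℕ) : ℤ) - 3).toNat (by omega) i.rev.succ using 3
            omega)
      (by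
        intro ν hν hmem
        obtain ⟨μ, hmono, hor, hle⟩ := exists_three_le (n := N + 3) ν hν
        have hm : ∀ j, 2 ≤ μ j ∧ μ j ≤ N + 3 := fun j => hmem _
          (Multiset.subset_of_le hle (Multiset.mem_map_of_mem _ (Finset.mem_univ j)))
        refine ⟨μ, hmono, ?_, hle⟩
        rcases hor with h | h
        · exact Or.inl fun j => ⟨(hm j).1, by linarith [h j]⟩
        · exact Or.inr fun j => ⟨by have := h j; omega, (hm j).2⟩)
      (ν.map fun j : Fin (N + 2) => ((j : ℕ) : ℤ) + 2) (by simpa using hν)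
    rw [Multiset.map_map] at key
    convert key using 2
    refine Multiset.map_congr rfl fun j _ => ?_
    have := j.isLt
    rw [Function.comp, window_natCast_add_two, if_pos (by omega)]
  refine ⟨?_⟩
  rw [← htop]
  refine Submodule.FG.pow (Submodule.FG.sup ?_ (Submodule.fg_span (Set.finite_range _))) 4
  rw [Submodule.one_eq_span]
  exact Submodule.fg_span (Set.finite_singleton _)

lemma CoordRing.base_params_mem_one (N : ℕ) (o : Option (Option (Option (Fin (N + 3))))) :
    params (CoordRing.coord N 0) (CoordRing.coord N 1) (some (some o)) ∈
      (1 : Submodule (BaseRing N) (CoordRing N)) :=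
  Submodule.mem_one.2 ⟨X o, algebraMap_baseRing_X N o⟩

lemma CoordRing.coord_zero_sub_base_window_mem (N i : ℕ) (hi : i ≤ N + 3) :
    CoordRing.coord N 0 i - window (CoordRing.coord N 1) 2 (N + 3) i ∈
      (1 : Submodule (BaseRing N) (CoordRing N)) := by
  have hp := CoordRing.base_params_mem_one N
  rcases i with _ | _ | i
  · simpa [window, params] using hp none
  · simpa [window, params] using hp (some none)
  · have hq := hp (some (some (some ⟨i, by omega⟩)))
    simp only [params] at hq
    rwa [show ((i + 1 + 1 : ℕ) : ℤ) = (i : ℤ) + 2 by push_cast; ring, window_natCast_add_two,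
      if_pos (by omega)]

lemma CoordRing.coord_one_sub_base_window_mem (N i : ℕ) (hi : i ≤ N + 3) :
    CoordRing.coord N 1 i - window (CoordRing.coord N 1) 2 (N + 3) (i + 2) ∈
      (1 : Submodule (BaseRing N) (CoordRing N)) := by
  have hp := CoordRing.base_params_mem_one N
  rw [window_natCast_add_two]
  split_ifs with h
  · rw [sub_self]
    exact Submodule.zero_mem _
  · rw [sub_zero]
    by_cases h3 : i = N + 3
    · subst h3
      exact hp (some (some none))
    have hq := hp (some (some (some ⟨i, by omega⟩)))
    simp only [params] at hq
    obtain rfl : i = N + 2 := by omega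
    rw [CoordRing.coord_eq_zero (by omega), zero_sub] at hq
    simpa using Submodule.neg_mem _ hq

lemma CoordRing.finite_quotient_tripleMinors (N : ℕ) :
    Module.Finite (BaseRing N) (CoordRing N ⧸ tripleMinors N) := by
  set π : CoordRing N →ₐ[BaseRing N] CoordRing N ⧸ tripleMinors N :=
    Ideal.Quotient.mkₐ (BaseRing N) (tripleMinors N) with hπ
  have hmem : ∀ x ∈ (1 : Submodule (BaseRing N) (CoordRing N)),
      π x ∈ (1 : Submodule (BaseRing N) (CoordRing N ⧸ tripleMinors N)) := by
    intro x hx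
    obtain ⟨y, rfl⟩ := Submodule.mem_one.1 hx
    exact Submodule.mem_one.2 ⟨y, (π.commutes y).symm⟩
  have hwin : ∀ i, π (window (CoordRing.coord N 1) 2 (N + 3) i) =
      window (fun i => π (CoordRing.coord N 1 i)) 2 (N + 3) i := by
    intro i
    unfold window
    split_ifs
    · rfl
    · exact map_zero π
  have ha : ∀ i : ℕ, i ≤ N + 3 → π (CoordRing.coord N 0 i) -
      window (fun i => π (CoordRing.coord N 1 i)) 2 (N + 3) i ∈
        (1 : Submodule (BaseRing N) (CoordRing N ⧸ tripleMinors N)) := by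
    intro i hi
    rw [← hwin, ← map_sub]
    exact hmem _ (CoordRing.coord_zero_sub_base_window_mem N i hi)
  have hb : ∀ i : ℕ, i ≤ N + 3 → π (CoordRing.coord N 1 i) -
      window (fun i => π (CoordRing.coord N 1 i)) 2 (N + 3) (i + 2) ∈
        (1 : Submodule (BaseRing N) (CoordRing N ⧸ tripleMinors N)) := by
    intro i hi
    rw [← hwin, ← map_sub]
    exact hmem _ (CoordRing.coord_one_sub_base_window_mem N i hi)
  refine finite_of_triple_minors (a := fun i => π (CoordRing.coord N 0 i))
    (b := fun i => π (CoordRing.coord N 1 i)) ?_ ha hb ?_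
  · set U := Algebra.adjoin (BaseRing N)
      (Set.range fun j : Fin (N + 2) => π (CoordRing.coord N 1 j)) with hU
    have h1 : ∀ x ∈ (1 : Submodule (BaseRing N) (CoordRing N ⧸ tripleMinors N)), x ∈ U := by
      intro x hx
      obtain ⟨y, rfl⟩ := Submodule.mem_one.1 hx
      exact U.algebraMap_mem _
    have hw : ∀ i : ℤ, window (fun i => π (CoordRing.coord N 1 i)) 2 (N + 3) i ∈ U := by
      intro i
      rw [window]
      split_ifs with h
      · exact Algebra.subset_adjoin ⟨⟨(i - 2).toNat, by omega⟩, rfl⟩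
      · exact U.zero_mem
    have htop : U.comap π = ⊤ := by
      apply CoordRing.adjoin_eq_top_of_coord_mem
      intro r i hi
      rw [Subalgebra.mem_comap]
      fin_cases r
      · simpa using U.add_mem (h1 _ (ha i hi)) (hw i)
      · simpa using U.add_mem (h1 _ (hb i hi)) (hw (i + 2))
    rw [eq_top_iff]
    intro x _
    obtain ⟨y, rfl⟩ := Ideal.Quotient.mk_surjective x
    have : y ∈ U.comap π := htop ▸ trivial
    exact this
  · intro s e hs he
    have h0 : π (Matrix.of fun i j =>
        quad (CoordRing.coord N 0) (CoordRing.coord N 1) (s j) (e i)).det = 0 :=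
      Ideal.Quotient.eq_zero_iff_mem.2 (Ideal.subset_span ⟨s, e, hs, he, rfl⟩)
    rw [AlgHom.map_det] at h0
    rw [← h0]
    congr 1
    ext i j
    simp only [Matrix.of_apply, AlgHom.mapMatrix_apply, Matrix.map_apply]
    generalize e i = r
    fin_cases r <;> rfl

lemma CoordRing.exists_monic_aeval_mem (N : ℕ) (x : CoordRing N) :
    ∃ p : Polynomial (BaseRing N), p.Monic ∧ Polynomial.aeval x p ∈ tripleMinors N := by
  have := CoordRing.finite_quotient_tripleMinors N
  obtain ⟨p, hp, h⟩ := Algebra.IsIntegral.isIntegral (R := BaseRing N)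
    (Ideal.Quotient.mkₐ (BaseRing N) (tripleMinors N) x)
  refine ⟨p, hp, ?_⟩
  rw [← Polynomial.aeval_def, Polynomial.aeval_algHom_apply] at h
  exact Ideal.Quotient.eq_zero_iff_mem.1 h

/-- Monic polynomials in two different variables have no common factor. -/
lemma isRelPrime_of_monic {σ k : Type*} [Field k] {p q : Polynomial (MvPolynomial σ k)}
    (hp : p.Monic) (hq : q.Monic) :
    IsRelPrime
      (p.eval₂ (rename fun o => some (some o) :
        MvPolynomial σ k →ₐ[k] MvPolynomial (Option (Option σ)) k).toRingHom (X (some none)))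
      (q.eval₂ (rename fun o => some (some o) :
        MvPolynomial σ k →ₐ[k] MvPolynomial (Option (Option σ)) k).toRingHom (X none)) := by
  set ι : MvPolynomial σ k →+* MvPolynomial (Option (Option σ)) k :=
    (rename fun o => some (some o) :
      MvPolynomial σ k →ₐ[k] MvPolynomial (Option (Option σ)) k).toRingHom with hι
  set e := optionEquivLeft k (Option σ) with he
  set ε := (optionEquivLeft k σ) with hε
  have hei : ∀ z, e (ι z) = Polynomial.C (rename some z) := by
    intro z
    have : e.toAlgHom.comp (rename fun o : σ => some (some o)) =
        (Algebra.ofId (MvPolynomial (Option σ) k) _ |>.restrictScalars k).comp (rename some) := by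
      apply algHom_ext
      intro i
      simp [he, Algebra.ofId_apply]
    exact DFunLike.congr_fun this z
  have hp' : e (p.eval₂ ι (X (some none))) =
      Polynomial.C (p.eval₂ (rename some : MvPolynomial σ k →ₐ[k] _).toRingHom (X none)) := by
    have h1 : e.toAlgHom.toRingHom.comp ι = Polynomial.C.comp
        (rename some : MvPolynomial σ k →ₐ[k] MvPolynomial (Option σ) k).toRingHom :=
      RingHom.ext hei
    refine (Polynomial.hom_eval₂ p ι e.toAlgHom.toRingHom _).trans ?_
    rw [Polynomial.hom_eval₂, h1]
    congr 1
    exact optionEquivLeft_X_some k _ none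
  have hq' : e (q.eval₂ ι (X none)) =
      q.map (rename some : MvPolynomial σ k →ₐ[k] _).toRingHom := by
    have h1 : e.toAlgHom.toRingHom.comp ι = Polynomial.C.comp
        (rename some : MvPolynomial σ k →ₐ[k] MvPolynomial (Option σ) k).toRingHom :=
      RingHom.ext hei
    refine (Polynomial.hom_eval₂ q ι e.toAlgHom.toRingHom _).trans ?_
    rw [h1]
    exact congrArg (Polynomial.eval₂ _ · q) (optionEquivLeft_X_none k _)
  have hne : p.eval₂ (rename some : MvPolynomial σ k →ₐ[k] MvPolynomial (Option σ) k).toRingHom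
      (X none) ≠ 0 := by
    intro h0
    have h1 : ε.toAlgHom.toRingHom.comp
        (rename some : MvPolynomial σ k →ₐ[k] MvPolynomial (Option σ) k).toRingHom =
        Polynomial.C := by
      have : ε.toAlgHom.comp (rename some) =
          (Algebra.ofId (MvPolynomial σ k) _ |>.restrictScalars k) := by
        apply algHom_ext
        intro i
        simp [hε, Algebra.ofId_apply]
      exact RingHom.ext fun z => DFunLike.congr_fun this z
    have h2 := Polynomial.hom_eval₂ p
      (rename some : MvPolynomial σ k →ₐ[k] MvPolynomial (Option σ) k).toRingHom
      ε.toAlgHom.toRingHom (X none)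
    have h3 : ε.toAlgHom.toRingHom (X none) = Polynomial.X := optionEquivLeft_X_none k _
    rw [h0, h1, map_zero, h3, Polynomial.eval₂_C_X] at h2
    exact hp.ne_zero h2.symm
  intro d hd1 hd2
  replace hd1 := map_dvd e hd1
  replace hd2 := map_dvd e hd2
  rw [hp'] at hd1
  rw [hq'] at hd2
  have hdeg := Polynomial.natDegree_le_of_dvd hd1 (Polynomial.C_ne_zero.2 hne)
  rw [Polynomial.natDegree_C, Nat.le_zero] at hdeg
  rw [Polynomial.eq_C_of_natDegree_eq_zero hdeg] at hd2
  have hu : IsUnit ((e d).coeff 0) := by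
    have h1 := Polynomial.C_dvd_iff_dvd_coeff _ _ |>.1 hd2
      (q.map (rename some : MvPolynomial σ k →ₐ[k] MvPolynomial (Option σ) k).toRingHom).natDegree
    rw [(hq.map _).coeff_natDegree] at h1
    exact isUnit_of_dvd_one h1
  have := hu.map Polynomial.C
  rw [← Polynomial.eq_C_of_natDegree_eq_zero hdeg] at this
  exact (isUnit_map_iff e d).1 this

/-- If powers of two coprime elements of a unique factorization domain multiply `u` into the
ideal generated by `v`, in a domain that is free over it, then `v` divides `u`. -/
lemma dvd_of_isRelPrime_smul {A B ι : Type*} [CommRing A] [IsDomain A]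
    [UniqueFactorizationMonoid A] [CommRing B] [IsDomain B] [Algebra A B] [FaithfulSMul A B]
    (β : Module.Basis ι A B) {p q : A} (hpq : IsRelPrime p q) {u v : B} (hv : v ≠ 0)
    (h1 : v ∣ algebraMap A B p * u) (h2 : v ∣ algebraMap A B q * u) : v ∣ u := by
  rcases eq_or_ne p 0 with rfl | hp
  · exact ((isRelPrime_zero_left.1 hpq).map (algebraMap A B)).dvd_mul_left.1 h2
  obtain ⟨w₁, h1⟩ := h1
  obtain ⟨w₂, h2⟩ := h2
  have h3 : q • w₁ = p • w₂ := by
    apply mul_left_cancel₀ hv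
    rw [Algebra.smul_def, Algebra.smul_def]
    linear_combination algebraMap A B p * h2 - algebraMap A B q * h1
  have h4 : ∀ i, p ∣ β.repr w₁ i := by
    intro i
    have h5 := congrArg (fun x => β.repr x i) h3
    simp only [map_smul, Finsupp.smul_apply, smul_eq_mul] at h5
    exact hpq.dvd_of_dvd_mul_left ⟨_, h5⟩
  choose g hg using h4
  have h6 : w₁ = p • ∑ i ∈ (β.repr w₁).support, g i • β i := by
    conv_lhs => rw [← β.linearCombination_repr w₁, Finsupp.linearCombination_apply, Finsupp.sum]
    rw [Finset.smul_sum]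
    exact Finset.sum_congr rfl fun i _ => by rw [smul_smul, ← hg]
  refine ⟨∑ i ∈ (β.repr w₁).support, g i • β i, ?_⟩
  have hp' : algebraMap A B p ≠ 0 := by
    rwa [Ne, FaithfulSMul.algebraMap_eq_zero_iff]
  apply mul_left_cancel₀ hp'
  rw [h1]
  nth_rewrite 1 [h6]
  rw [Algebra.smul_def]
  ring

lemma CoordRing.algebraMap_eval₂_baseMap {N : ℕ} (p : Polynomial (BaseRing N)) (t : ParamRing N) :
    algebraMap (ParamRing N) (CoordRing N) (p.eval₂ (baseMap N).toRingHom t) =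
      Polynomial.aeval (algebraMap (ParamRing N) (CoordRing N) t) p :=
  Polynomial.hom_eval₂ p _ _ _

instance (N : ℕ) : IsIntegrallyClosed (CoordRing N) := by
  rw [isIntegrallyClosed_iff (FractionRing (CoordRing N))]
  intro x hx
  obtain ⟨u, v, hv, rfl⟩ := IsFractionRing.div_surjective (A := CoordRing N) x
  have hv0 : v ≠ 0 := nonZeroDivisors.ne_zero hv
  set I : Ideal (CoordRing N) := (Ideal.span {v}).colon {u} with hI
  have hmem : ∀ z, z ∈ I ↔ v ∣ z * u := fun z => by
    rw [hI, Submodule.mem_colon_singleton, smul_eq_mul, Ideal.mem_span_singleton]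
  have hle : tripleMinors N ≤ I.radical := by
    refine Ideal.span_le.2 ?_
    rintro _ ⟨s, e, hs, he, rfl⟩
    obtain ⟨k, hk⟩ := CoordRing.exists_dvd_pow_minor_mul hv0 hx s hs e he
    exact ⟨k, (hmem _).2 hk⟩
  obtain ⟨p, hp, hpm⟩ := CoordRing.exists_monic_aeval_mem N
    (algebraMap (ParamRing N) (CoordRing N) (X (some none)))
  obtain ⟨q, hq, hqm⟩ := CoordRing.exists_monic_aeval_mem N
    (algebraMap (ParamRing N) (CoordRing N) (X none))
  obtain ⟨k, hk⟩ := hle hpm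
  obtain ⟨l, hl⟩ := hle hqm
  rw [hmem, ← CoordRing.algebraMap_eval₂_baseMap, ← map_pow] at hk hl
  have hrel := isRelPrime_of_monic hp hq
  obtain ⟨w, hw⟩ := dvd_of_isRelPrime_smul (CoordRing.basis N) (hrel.pow (m := k) (n := l))
    hv0 hk hl
  refine ⟨w, ?_⟩
  rw [hw, map_mul, mul_div_cancel_left₀]
  rwa [Ne, FaithfulSMul.algebraMap_eq_zero_iff]

end Normality

section SpecialPoint

/-- If the determinant of a `4 × 4` matrix vanishes and a row and a column have all their entries
in `M`, their common entry lies in `M ^ 2` provided that its cofactor is a unit modulo `M`. -/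
lemma Ideal.mem_sq_of_det_eq_zero {R : Type*} [CommRing R] (M : Ideal R)
    (A : Matrix (Fin 4) (Fin 4) R) (hA : A.det = 0) (hrow : ∀ j, A 2 j ∈ M)
    (hcol : ∀ i, A i 3 ∈ M)
    (hδ : (A.submatrix (Fin.succAbove 2) (Fin.succAbove 3)).det + 1 ∈ M) : A 2 3 ∈ M ^ 2 := by
  have hminor : ∀ j : Fin 4, j ≠ 3 →
      (A.submatrix (Fin.succAbove 2) (Fin.succAbove j)).det ∈ M := by
    intro j hj
    obtain ⟨k, hk⟩ := Fin.exists_succAbove_eq hj.symm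
    rw [← Ideal.Quotient.eq_zero_iff_mem, RingHom.map_det]
    refine Matrix.det_eq_zero_of_column_eq_zero k fun i => ?_
    rw [RingHom.mapMatrix_apply, Matrix.map_apply, Matrix.submatrix_apply, hk]
    exact Ideal.Quotient.eq_zero_iff_mem.2 (hcol _)
  have hprod : ∀ j : Fin 4, j ≠ 3 →
      A 2 j * (A.submatrix (Fin.succAbove 2) (Fin.succAbove j)).det ∈ M ^ 2 := fun j hj => by
    rw [pow_two]
    exact Ideal.mul_mem_mul (hrow j) (hminor j hj)
  have hlast : A 2 3 * ((A.submatrix (Fin.succAbove 2) (Fin.succAbove 3)).det + 1) ∈ M ^ 2 := by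
    rw [pow_two]
    exact Ideal.mul_mem_mul (hrow 3) hδ
  rw [Matrix.det_succ_row A 2, Fin.sum_univ_four] at hA
  have h0 := hprod 0 (by decide)
  have h1 := hprod 1 (by decide)
  have h2 := hprod 2 (by decide)
  have key : A 2 3 = A 2 3 * ((A.submatrix (Fin.succAbove 2) (Fin.succAbove 3)).det + 1)
      - A 2 0 * (A.submatrix (Fin.succAbove 2) (Fin.succAbove 0)).det
      + A 2 1 * (A.submatrix (Fin.succAbove 2) (Fin.succAbove 1)).det
      - A 2 2 * (A.submatrix (Fin.succAbove 2) (Fin.succAbove 2)).det := by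
    norm_num at hA
    rw [Fin.succAbove_zero]
    linear_combination hA
  rw [key]
  exact sub_mem (add_mem (sub_mem hlast h0) h1) h2

lemma extSeq_specialPoint_zero {N : ℕ} (hd : 4 ≤ N + 4) (i : ℕ) :
    extSeq (specialPoint (N + 4) hd) 0 i = if i = 1 then 1 else 0 := by
  unfold extSeq specialPoint
  split_ifs <;> simp_all

lemma extSeq_specialPoint_one {N : ℕ} (hd : 4 ≤ N + 4) (i : ℕ) :
    extSeq (specialPoint (N + 4) hd) 1 i = if i = N + 3 then 1 else 0 := by
  unfold extSeq specialPoint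
  split_ifs <;> simp_all

/-- The maximal ideal of the special point. -/
noncomputable def specialIdeal (N : ℕ) : Ideal (CoordRing N) :=
  specialMaxIdeal (N + 4) (by omega)

lemma mk_mem_specialIdeal {N : ℕ} (s) :
    CoordRing.mk N (X s - C (specialPoint (N + 4) (by omega) s)) ∈ specialIdeal N :=
  Ideal.mem_map_of_mem (Ideal.Quotient.mk (minorsIdeal (N + 4))) (Ideal.subset_span ⟨s, rfl⟩)

lemma specialIdeal_le {N : ℕ} {I : Ideal (CoordRing N)}
    (h : ∀ s, CoordRing.mk N (X s - C (specialPoint (N + 4) (by omega) s)) ∈ I) :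
    specialIdeal N ≤ I := by
  refine Ideal.map_le_iff_le_comap.2 (Ideal.span_le.2 ?_)
  rintro _ ⟨s, rfl⟩
  exact h s

/-- Evaluation of functions on `W'_d` at the special point. -/
lemma CoordRing.exists_specialEval (N : ℕ) :
    ∃ f : CoordRing N →ₐ[ℂ] ℂ, RingHom.ker f = specialIdeal N ∧
      (∀ i, f (CoordRing.coord N 0 i) = if i = 1 then 1 else 0) ∧
      ∀ i, f (CoordRing.coord N 1 i) = if i = N + 3 then 1 else 0 := by
  obtain ⟨f, hf⟩ := CoordRing.exists_lift (specialPoint (N + 4) (by omega)) fun s hs => by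
    refine Matrix.det_eq_zero_of_row_eq_zero 2 fun j => ?_
    have := hs j
    rw [Matrix.of_apply]
    change extSeq (specialPoint (N + 4) (by omega)) 1 (s j) = 0
    rw [extSeq_specialPoint_one, if_neg (by omega)]
  refine ⟨f, le_antisymm ?_ ?_, fun i => ?_, fun i => ?_⟩
  · intro z hz
    obtain ⟨p, rfl⟩ := CoordRing.mk_surjective N z
    set J := specialIdeal N with hJ
    have h1 : (Ideal.Quotient.mkₐ ℂ J).comp (CoordRing.mk N) =
        (Algebra.ofId ℂ (CoordRing N ⧸ J)).comp (aeval (specialPoint (N + 4) (by omega))) := by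
      apply algHom_ext
      intro s
      have h2 := mk_mem_specialIdeal (N := N) s
      rw [map_sub, ← algebraMap_eq, AlgHom.commutes] at h2
      rw [AlgHom.comp_apply, AlgHom.comp_apply, aeval_X]
      exact Ideal.Quotient.eq.2 h2
    have h2 := DFunLike.congr_fun h1 p
    rw [RingHom.mem_ker] at hz
    rw [AlgHom.comp_apply, AlgHom.comp_apply, ← hf, hz, map_zero] at h2
    exact Ideal.Quotient.eq_zero_iff_mem.1 h2
  · refine specialIdeal_le fun s => ?_
    refine RingHom.mem_ker.2 ((hf _).trans ?_)
    simp
  · rw [CoordRing.algHom_coord hf, extSeq_specialPoint_zero]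
  · rw [CoordRing.algHom_coord hf, extSeq_specialPoint_one]

/-- Local parameters at the special point. -/
noncomputable def specialParams (N : ℕ) : Fin (N + 4) ⊕ Fin 4 → CoordRing N
  | .inl i => CoordRing.coord N 0 i - if (i : ℕ) = 1 then 1 else 0
  | .inr j => ![CoordRing.coord N 1 0, CoordRing.coord N 1 1, CoordRing.coord N 1 (N + 2),
      CoordRing.coord N 1 (N + 3) - 1] j

lemma CoordRing.specialIdeal_le_span (N : ℕ) :
    specialIdeal N ≤ Ideal.span (Set.range (specialParams N)) ⊔ specialIdeal N ^ 2 := by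
  obtain ⟨f, hker, h0, h1⟩ := CoordRing.exists_specialEval N
  set J := specialIdeal N with hJ
  have hmem : ∀ x, x ∈ J ↔ f x = 0 := fun x => by rw [← hker, RingHom.mem_ker]
  have hb : ∀ j, 2 ≤ j → j ≤ N + 1 → CoordRing.coord N 1 j ∈ J ^ 2 := by
    intro j hj hj'
    refine J.mem_sq_of_det_eq_zero _ (CoordRing.det_eq_zero (N := N) ![0, 1, N + 2, j] ?_) ?_ ?_ ?_
    · intro i
      fin_cases i <;> simp
      omega
    · intro i
      rw [hmem]
      fin_cases i <;> simp [quad, h1]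
      omega
    · intro i
      rw [hmem]
      fin_cases i <;> simp [quad, h0, h1] <;> omega
    · rw [hmem, map_add, map_one, AlgHom.map_det, Matrix.det_fin_three]
      simp [quad, h0, h1, Fin.succAbove]
  have hT : ∀ o, specialParams N o ∈ Ideal.span (Set.range (specialParams N)) := fun o =>
    Ideal.subset_span ⟨o, rfl⟩
  refine specialIdeal_le fun ⟨r, i⟩ => ?_
  rw [map_sub, ← CoordRing.coord_eq_mk, ← algebraMap_eq, AlgHom.commutes,
    show specialPoint (N + 4) (by omega) (r, i) = extSeq (specialPoint (N + 4) (by omega)) r i by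
      rw [extSeq, dif_pos i.isLt]]
  fin_cases r
  · rw [Fin.zero_eta, extSeq_specialPoint_zero]
    convert Ideal.mem_sup_left (hT (.inl i)) using 1
    simp only [specialParams]
    split_ifs <;> simp
  · rw [Fin.mk_one, extSeq_specialPoint_one]
    have hi := i.isLt
    by_cases hi0 : (i : ℕ) = 0
    · convert Ideal.mem_sup_left (hT (.inr 0)) using 1
      simp [specialParams, hi0]
    by_cases hi1 : (i : ℕ) = 1
    · convert Ideal.mem_sup_left (hT (.inr 1)) using 1
      simp [specialParams, hi1]
    by_cases hi2 : (i : ℕ) = N + 2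
    · convert Ideal.mem_sup_left (hT (.inr 2)) using 1
      simp [specialParams, hi2]
    by_cases hi3 : (i : ℕ) = N + 3
    · convert Ideal.mem_sup_left (hT (.inr 3)) using 1
      simp [specialParams, hi3]
    · rw [if_neg hi3, map_zero, sub_zero]
      exact Ideal.mem_sup_right (hb _ (by omega) (by omega))

lemma CoordRing.specialParams_mem (N : ℕ) (o) :
    specialParams N o ∈ (specialIdeal N) := by
  obtain ⟨f, hker, h0, h1⟩ := CoordRing.exists_specialEval N
  rw [← hker, RingHom.mem_ker]
  rcases o with i | j
  · simp [specialParams, h0, apply_ite f]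
  · fin_cases j <;> simp [specialParams, h1]

lemma CoordRing.isMaximal_specialIdeal (N : ℕ) :
    (specialIdeal N).IsMaximal := by
  obtain ⟨f, hker, -⟩ := CoordRing.exists_specialEval N
  rw [← hker]
  exact RingHom.ker_isMaximal_of_surjective f fun c => ⟨algebraMap ℂ _ c, f.commutes c⟩

/-- A local ring of dimension `n` is regular at a point where `n` elements generate the maximal
ideal modulo its square. -/
lemma isRegLocalRing_localization {S ι : Type*} [CommRing S] [IsNoetherianRing S] [Fintype ι]
    (M : Ideal S) [M.IsPrime] (t : ι → S) (ht : ∀ o, t o ∈ M)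
    (hM : M ≤ Ideal.span (Set.range t) ⊔ M ^ 2)
    (hdim : ringKrullDim (Localization M.primeCompl) = (Fintype.card ι : ℕ)) :
    IsRegLocalRing (Localization M.primeCompl) := by
  classical
  set L := Localization M.primeCompl
  have hmax := Localization.AtPrime.map_eq_maximalIdeal (I := M)
  set T : Finset L := Finset.univ.image fun o => algebraMap S L (t o) with hT
  have hspan : Ideal.span (T : Set L) = (Ideal.span (Set.range t)).map (algebraMap S L) := by
    rw [Ideal.map_span, ← Set.range_comp, hT, Finset.coe_image, Finset.coe_univ, Set.image_univ]
    rfl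
  have hgen : Ideal.span (T : Set L) = IsLocalRing.maximalIdeal L := by
    rw [hspan, ← hmax]
    refine le_antisymm (Ideal.map_mono (Ideal.span_le.2 ?_)) ?_
    · rintro _ ⟨o, rfl⟩
      exact ht o
    · apply Submodule.le_of_le_smul_of_le_jacobson_bot (IsNoetherian.noetherian _)
        (IsLocalRing.jacobson_eq_maximalIdeal (⊥ : Ideal L) bot_ne_top).ge
      rw [← hmax, smul_eq_mul, ← pow_two, ← Ideal.map_pow]
      exact (Ideal.map_mono hM).trans_eq (Ideal.map_sup _ _ _)
  refine ⟨T, hgen, ?_⟩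
  rw [hdim]
  apply le_antisymm
  · exact Nat.cast_le.2 (Finset.card_image_le.trans_eq Finset.card_univ)
  · rw [← hdim, ← IsLocalRing.maximalIdeal_height_eq_ringKrullDim]
    have := Ideal.height_le_card_of_mem_minimalPrimes_span_finset (s := T)
      (p := IsLocalRing.maximalIdeal L) (by
        rw [hgen, Ideal.minimalPrimes_eq_subsingleton_self]
        exact Set.mem_singleton _)
    exact WithBot.coe_le_coe.2 this

lemma CoordRing.isRegLocalRing_specialIdeal (N : ℕ)
    [(specialIdeal N).IsPrime] :
    IsRegLocalRing (Localization
      (specialIdeal N).primeCompl) := by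
  have := CoordRing.isMaximal_specialIdeal N
  refine isRegLocalRing_localization _ (specialParams N) (CoordRing.specialParams_mem N)
    (CoordRing.specialIdeal_le_span N) ?_
  rw [ringKrullDim_localization_coordRing, Fintype.card_sum, Fintype.card_fin, Fintype.card_fin]

end SpecialPoint

/-- For `d ≥ 4`, the determinantal variety `W'_d` of pairs `(f₁,f₂)` of binary forms of
degree `d-1` whose four partial derivatives are linearly dependent is Cohen–Macaulay,
reduced and normal of dimension `d+4`, and is smooth at the point
`((d-1)x^(d-2)y, y^(d-1))`. -/
theorem Wd_CM_reduced_normal (d : ℕ) (hd : 4 ≤ d) :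
    (∀ (P : Ideal (MvPolynomial (Fin 2 × Fin d) ℂ ⧸ minorsIdeal d)), P.IsMaximal →
      ∀ [inst : P.IsPrime], IsCMLocalRing (Localization P.primeCompl))
    ∧ IsReduced (MvPolynomial (Fin 2 × Fin d) ℂ ⧸ minorsIdeal d)
    ∧ IsDomain (MvPolynomial (Fin 2 × Fin d) ℂ ⧸ minorsIdeal d)
    ∧ IsIntegrallyClosed (MvPolynomial (Fin 2 × Fin d) ℂ ⧸ minorsIdeal d)
    ∧ ringKrullDim (MvPolynomial (Fin 2 × Fin d) ℂ ⧸ minorsIdeal d) = (d + 4 : ℕ)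
    ∧ (specialMaxIdeal d hd).IsMaximal
    ∧ ∀ [inst : (specialMaxIdeal d hd).IsPrime],
        IsRegLocalRing (Localization (specialMaxIdeal d hd).primeCompl) := by
  obtain ⟨N, rfl⟩ : ∃ N, d = N + 4 := ⟨d - 4, by omega⟩
  refine ⟨fun P hP _ => @isCMLocalRing_localization N P hP,
    inferInstanceAs (IsReduced (CoordRing N)), inferInstanceAs (IsDomain (CoordRing N)),
    inferInstanceAs (IsIntegrallyClosed (CoordRing N)), ringKrullDim_coordRing N,
    CoordRing.isMaximal_specialIdeal N, ?_⟩
  intro inst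
  have : (specialIdeal N).IsPrime := inst
  exact CoordRing.isRegLocalRing_specialIdeal N
end
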